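/- Let F be an algebraically closed field of characteristic zero and let n and m be odd positive integers. Then the Jordan superalgebra M_{n,m}(F)^{(+)} cannot be written as A + B for two proper nontrivial simple subsuperalgebras A and B. -/

import Mathlib

open Matrix

namespace SJ

section SuperDefs

variable {F : Type*} [Field F] {J : Type*} [AddCommGroup J] [Module F J]

/-- A graded subspace: `A = (A ∩ J₀) ⊕ (A ∩ J₁)`. -/
def IsGradedG (ev od : Submodule F J) (A : Submodule F J) : Prop :=
  A = (A ⊓ ev) ⊔ (A ⊓ od)

/-- A subsuperalgebra: a graded subspace closed under the product. -/
def IsSubalgG (mul : J → J → J) (ev od : Submodule F J) (A : Submodule F J) : Prop :=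
  IsGradedG ev od A ∧ ∀ x ∈ A, ∀ y ∈ A, mul x y ∈ A

/-- Nontrivial: `A ∩ J₁ ≠ {0}`. -/
def NontrivG (od : Submodule F J) (A : Submodule F J) : Prop := A ⊓ od ≠ ⊥

/-- Simple: `A∘A ≠ 0` and the only graded subspaces `I ⊆ A` with `A∘I ⊆ I` are `0` and `A`. -/
def IsSimpleG (mul : J → J → J) (ev od : Submodule F J) (A : Submodule F J) : Prop :=
  (∃ x ∈ A, ∃ y ∈ A, mul x y ≠ 0) ∧
  ∀ I : Submodule F J, I ≤ A → IsGradedG ev od I →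
    (∀ x ∈ A, ∀ y ∈ I, mul x y ∈ I) → I = ⊥ ∨ I = A

/-- An isomorphism of superalgebras: an F-linear bijection mapping even part onto even
part, odd part onto odd part, and preserving the product. -/
def SuperIsoG {J₂ : Type*} [AddCommGroup J₂] [Module F J₂]
    (mul₁ : J → J → J) (ev₁ od₁ : Submodule F J)
    (mul₂ : J₂ → J₂ → J₂) (ev₂ od₂ : Submodule F J₂)
    (A : Submodule F J) (B : Submodule F J₂) : Prop :=
  ∃ e : A ≃ₗ[F] B,
    (∀ x : A, (x : J) ∈ ev₁ ↔ (e x : J₂) ∈ ev₂) ∧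
    (∀ x : A, (x : J) ∈ od₁ ↔ (e x : J₂) ∈ od₂) ∧
    ∀ x y z : A, mul₁ x y = (z : J) → mul₂ (e x) (e y) = (e z : J₂)

end SuperDefs

/-- The space of (n+m)×(n+m) matrices, indices split into even (`inl`) and odd (`inr`) ones. -/
abbrev MJ (F : Type*) [Field F] (n m : ℕ) :=
  Matrix (Fin n ⊕ Fin m) (Fin n ⊕ Fin m) F

/-- Parity of an index. -/
def pty {n m : ℕ} : Fin n ⊕ Fin m → Bool := Sum.elim (fun _ => false) (fun _ => true)

variable (F : Type*) [Field F]

/-- The odd component of a matrix (block-antidiagonal part). -/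
def oddPart {n m : ℕ} (X : MJ F n m) : MJ F n m :=
  Matrix.of fun i j => if pty i = pty j then 0 else X i j

/-- The even component of a matrix (block-diagonal part). -/
def evenPart {n m : ℕ} (X : MJ F n m) : MJ F n m :=
  Matrix.of fun i j => if pty i = pty j then X i j else 0

variable {F}

/-- The super-Jordan product on `M_{n,m}(F)^{(+)}`:  `x∘y = (xy+yx)/2` when `x` or `y` is
even and `x∘y = (xy−yx)/2` when both are odd, extended bilinearly.  (For arbitrary
matrices this bilinear extension equals `(xy+yx)/2 − y₁x₁` where `x₁, y₁` are the odd
components.) -/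
def jmul {n m : ℕ} (X Y : MJ F n m) : MJ F n m :=
  (2 : F)⁻¹ • (X * Y + Y * X) - oddPart F Y * oddPart F X

variable (F)

/-- The even part `J₀` of `M_{n,m}(F)^{(+)}`: block-diagonal matrices. -/
def evenSub (n m : ℕ) : Submodule F (MJ F n m) where
  carrier := {X | ∀ i j, pty i ≠ pty j → X i j = 0}
  zero_mem' := by intro i j _; simp
  add_mem' := by
    intro a b ha hb i j h
    simp only [Matrix.add_apply, ha i j h, hb i j h, add_zero]
  smul_mem' := by
    intro c a ha i j h
    simp only [Matrix.smul_apply, ha i j h, smul_zero]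

/-- The odd part `J₁` of `M_{n,m}(F)^{(+)}`: block-antidiagonal matrices. -/
def oddSub (n m : ℕ) : Submodule F (MJ F n m) where
  carrier := {X | ∀ i j, pty i = pty j → X i j = 0}
  zero_mem' := by intro i j _; simp
  add_mem' := by
    intro a b ha hb i j h
    simp only [Matrix.add_apply, ha i j h, hb i j h, add_zero]
  smul_mem' := by
    intro c a ha i j h
    simp only [Matrix.smul_apply, ha i j h, smul_zero]

/-- Statements about `M_{n,m}(F)^{(+)}` specialized from the generic definitions. -/
abbrev IsGraded {n m : ℕ} (A : Submodule F (MJ F n m)) : Prop :=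
  IsGradedG (evenSub F n m) (oddSub F n m) A

abbrev IsSubalg {n m : ℕ} (A : Submodule F (MJ F n m)) : Prop :=
  IsSubalgG jmul (evenSub F n m) (oddSub F n m) A

abbrev Nontriv {n m : ℕ} (A : Submodule F (MJ F n m)) : Prop :=
  NontrivG (oddSub F n m) A

abbrev IsSimple {n m : ℕ} (A : Submodule F (MJ F n m)) : Prop :=
  IsSimpleG jmul (evenSub F n m) (oddSub F n m) A

abbrev SuperIso {n₁ m₁ n₂ m₂ : ℕ}
    (A : Submodule F (MJ F n₁ m₁)) (B : Submodule F (MJ F n₂ m₂)) : Prop :=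
  SuperIsoG jmul (evenSub F n₁ m₁) (oddSub F n₁ m₁)
    jmul (evenSub F n₂ m₂) (oddSub F n₂ m₂) A B

/-- The standard symplectic matrix `S = [[0, I_q],[−I_q, 0]]` of size `2q`. -/
def SMat (q : ℕ) : Matrix (Fin (2 * q)) (Fin (2 * q)) F :=
  Matrix.of fun i j =>
    if (j : ℕ) = (i : ℕ) + q then (1 : F) else if (i : ℕ) = (j : ℕ) + q then -1 else 0

/-- `osp(p,q)`: block matrices `[[A, C],[S⁻¹Cᵀ, D]]` inside `M_{p,2q}(F)^{(+)}` with
`A` symmetric, `C` arbitrary and `Dᵀ S = S D`.  The condition on the lower-left block is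
recorded in the equivalent form `S · C₂₁ = C₁₂ᵀ`. -/
def ospSub (p q : ℕ) : Submodule F (MJ F p (2 * q)) where
  carrier := {X | (X.toBlocks₁₁)ᵀ = X.toBlocks₁₁ ∧
    SMat F q * X.toBlocks₂₁ = (X.toBlocks₁₂)ᵀ ∧
    (X.toBlocks₂₂)ᵀ * SMat F q = SMat F q * X.toBlocks₂₂}
  zero_mem' := by
    refine ⟨?_, ?_, ?_⟩ <;> ext i j <;>
      simp [Matrix.toBlocks₁₁, Matrix.toBlocks₁₂, Matrix.toBlocks₂₁, Matrix.toBlocks₂₂,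
        Matrix.mul_apply]
  add_mem' := by
    rintro a b ⟨ha1, ha2, ha3⟩ ⟨hb1, hb2, hb3⟩
    have e11 : (a + b).toBlocks₁₁ = a.toBlocks₁₁ + b.toBlocks₁₁ := rfl
    have e12 : (a + b).toBlocks₁₂ = a.toBlocks₁₂ + b.toBlocks₁₂ := rfl
    have e21 : (a + b).toBlocks₂₁ = a.toBlocks₂₁ + b.toBlocks₂₁ := rfl
    have e22 : (a + b).toBlocks₂₂ = a.toBlocks₂₂ + b.toBlocks₂₂ := rfl
    refine ⟨?_, ?_, ?_⟩
    · rw [e11, Matrix.transpose_add, ha1, hb1]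
    · rw [e21, e12, Matrix.mul_add, Matrix.transpose_add, ha2, hb2]
    · rw [e22, Matrix.transpose_add, Matrix.add_mul, Matrix.mul_add, ha3, hb3]
  smul_mem' := by
    rintro c a ⟨ha1, ha2, ha3⟩
    have e11 : (c • a).toBlocks₁₁ = c • a.toBlocks₁₁ := rfl
    have e12 : (c • a).toBlocks₁₂ = c • a.toBlocks₁₂ := rfl
    have e21 : (c • a).toBlocks₂₁ = c • a.toBlocks₂₁ := rfl
    have e22 : (c • a).toBlocks₂₂ = c • a.toBlocks₂₂ := rfl
    refine ⟨?_, ?_, ?_⟩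
    · rw [e11, Matrix.transpose_smul, ha1]
    · rw [e21, e12, Matrix.mul_smul, Matrix.transpose_smul, ha2]
    · rw [e22, Matrix.transpose_smul, Matrix.smul_mul, Matrix.mul_smul, ha3]

/-- `Q(n)`: matrices `[[A, B],[B, A]]` inside `M_{n,n}(F)^{(+)}`. -/
def QSub (n : ℕ) : Submodule F (MJ F n n) where
  carrier := {X | (∀ i j, X (Sum.inr i) (Sum.inr j) = X (Sum.inl i) (Sum.inl j)) ∧
    (∀ i j, X (Sum.inr i) (Sum.inl j) = X (Sum.inl i) (Sum.inr j))}
  zero_mem' := by constructor <;> intro i j <;> simp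
  add_mem' := by
    rintro a b ⟨ha1, ha2⟩ ⟨hb1, hb2⟩
    constructor <;> intro i j <;>
      simp only [Matrix.add_apply, ha1 i j, ha2 i j, hb1 i j, hb2 i j]
  smul_mem' := by
    rintro c a ⟨ha1, ha2⟩
    constructor <;> intro i j <;>
      simp only [Matrix.smul_apply, ha1 i j, ha2 i j]

/-- `P(n)`: matrices `[[A, B],[C, Aᵀ]]` with `B` symmetric and `C` skew-symmetric,
inside `M_{n,n}(F)^{(+)}`. -/
def PSub (n : ℕ) : Submodule F (MJ F n n) where
  carrier := {X | (∀ i j, X (Sum.inr i) (Sum.inr j) = X (Sum.inl j) (Sum.inl i)) ∧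
    (∀ i j, X (Sum.inl i) (Sum.inr j) = X (Sum.inl j) (Sum.inr i)) ∧
    (∀ i j, X (Sum.inr i) (Sum.inl j) = - X (Sum.inr j) (Sum.inl i))}
  zero_mem' := by refine ⟨?_, ?_, ?_⟩ <;> intro i j <;> simp
  add_mem' := by
    rintro a b ⟨ha1, ha2, ha3⟩ ⟨hb1, hb2, hb3⟩
    refine ⟨?_, ?_, ?_⟩ <;> intro i j <;>
      simp only [Matrix.add_apply, ha1 i j, ha2 i j, ha3 i j, hb1 i j, hb2 i j, hb3 i j] <;>
      ring
  smul_mem' := by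
    rintro c a ⟨ha1, ha2, ha3⟩
    refine ⟨?_, ?_, ?_⟩ <;> intro i j <;>
      simp only [Matrix.smul_apply, ha1 i j, ha2 i j, ha3 i j, smul_neg]

/-!
Grade the matrix algebra by conjugation by the involution `s = diag(1, -1)`. A simple
subsuperalgebra has a unit, because the trace form is nondegenerate on its even part `E`, and the
supertrace form `tr (s x y)` restricted to it is either nondegenerate or zero.

If both subsuperalgebras contain the identity matrix, their odd parts satisfy
`2 n m ≤ dim O + dim O'`. When the supertrace form is nondegenerate, split the identity into
primitive idempotents of `E`: the even and odd Peirce components are the edges of two graphs, and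
comparing them with the even and odd ranks of the idempotents gives `dim O < n m` or
`dim O = 2 n m`, as `n` and `m` are odd. When it is zero, `dim O ≤ n m`; it cannot be zero for
both, since `s ∈ E + E'` and `tr (s s) = n + m ≠ 0`.

If one of them lacks the identity matrix, it annihilates a vector `v` and a covector `f` of the same
parity, so the other one acts on the pair `(v, f)` as transitively as the full superalgebra does.
Change the pair so that `a ↦ f (a v)` is represented under the trace form by an idempotent of the
even part. A skew form on an odd-dimensional space is degenerate, which forces the rank one matrix
`v f` into the subsuperalgebra, and transitivity then yields all odd matrices.
-/

variable {F}

section Idempotents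

open Polynomial

variable {R : Type*} [Ring R] [Algebra F R]

theorem exists_aeval_mul_X_pow_isIdempotentElem {a : R} (hintegral : IsIntegral F a)
    (ha : ¬ IsNilpotent a) (l : ℕ) :
    ∃ p : F[X], aeval a (p * X ^ l) ≠ 0 ∧ IsIdempotentElem (aeval a (p * X ^ l)) := by
  obtain ⟨g, hg, hXg⟩ :=
    (minpoly F a).exists_eq_pow_rootMultiplicity_mul_and_not_dvd (minpoly.ne_zero hintegral) 0
  set k := (minpoly F a).rootMultiplicity 0
  rw [map_zero, sub_zero] at hg hXg
  have ha_root : aeval a (X ^ k * g) = 0 := hg ▸ minpoly.aeval F a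
  obtain ⟨u, w, huw⟩ : IsCoprime (X ^ (k + l)) g :=
    ((irreducible_X.coprime_iff_not_dvd).2 hXg).pow_left
  refine ⟨u * X ^ k, fun hzero => ha ⟨k, ?_⟩, ?_⟩
  · have hdecomp : (X ^ k : F[X]) = X ^ k * (u * X ^ k * X ^ l) + w * (X ^ k * g) := by
      linear_combination -X ^ k * huw
    rw [← aeval_X (R := F) a, ← map_pow, hdecomp, map_add, map_mul, hzero, map_mul, ha_root,
      mul_zero, mul_zero, add_zero]
  · have hdecomp : u * X ^ k * X ^ l * (u * X ^ k * X ^ l)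
        = u * X ^ k * X ^ l - u * w * X ^ l * (X ^ k * g) := by
      linear_combination u * X ^ k * X ^ l * huw
    rw [IsIdempotentElem, ← map_mul, hdecomp, map_sub, map_mul (aeval a) _ (X ^ k * g), ha_root,
      mul_zero, sub_zero]

theorem aeval_mul_X_pow_succ_mem {E : Submodule F R} {a : R} (hpow : ∀ k : ℕ, a ^ (k + 1) ∈ E)
    (p : F[X]) (l : ℕ) : aeval a (p * X ^ (l + 1)) ∈ E := by
  induction p using Polynomial.induction_on' with
  | add p q hp hq => rw [add_mul, map_add]; exact E.add_mem hp hq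
  | monomial k c =>
    rw [← C_mul_X_pow_eq_monomial, mul_assoc, ← pow_add, map_mul, aeval_C, ← Algebra.smul_def,
      map_pow, aeval_X]
    exact E.smul_mem _ (hpow (k + l))

end Idempotents

section Trace

variable {ι : Type*} [Fintype ι]

theorem trace_eq_rank_of_isIdempotentElem {e : Matrix ι ι F} (he : IsIdempotentElem e) :
    e.trace = e.rank := by
  classical
  have hproj := LinearMap.IsIdempotentElem.isProj_range _ (he.map (Matrix.toLinAlgEquiv' (R := F)))
  have htrace := hproj.trace
  rwa [show Matrix.toLinAlgEquiv' e = Matrix.toLin' e from rfl, Matrix.trace_toLin'_eq] at htrace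

theorem eq_zero_of_rank_eq_zero {e : Matrix ι ι F} (he : e.rank = 0) : e = 0 := by
  classical
  rw [← Matrix.toLin'.map_eq_zero_iff, ← LinearMap.range_eq_bot]
  exact Submodule.finrank_eq_zero.1 he

theorem eq_zero_of_isIdempotentElem_of_trace_eq_zero [CharZero F] {e : Matrix ι ι F}
    (he : IsIdempotentElem e) (htrace : e.trace = 0) : e = 0 := by
  rw [trace_eq_rank_of_isIdempotentElem he, Nat.cast_eq_zero] at htrace
  exact eq_zero_of_rank_eq_zero htrace

theorem eq_zero_of_forall_trace_mul_eq_zero {a : Matrix ι ι F}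
    (h : ∀ b, (a * b).trace = 0) : a = 0 :=
  Matrix.ext_iff_trace_mul_right.2 fun b => by rw [h b, zero_mul, Matrix.trace_zero]

theorem exists_forall_trace_mul_eq {E : Submodule F (Matrix ι ι F)} {s : Matrix ι ι F}
    (hE : ∀ a ∈ E, (∀ b ∈ E, (s * (a * b)).trace = 0) → a = 0) (φ : Matrix ι ι F →ₗ[F] F) :
    ∃ q ∈ E, ∀ b ∈ E, (s * (q * b)).trace = φ b := by
  let form : E →ₗ[F] Module.Dual F E :=
    LinearMap.mk₂ F (fun a b => (s * ((a : Matrix ι ι F) * b)).trace)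
      (by intros; simp [mul_add, add_mul]) (by intros; simp)
      (by intros; simp [mul_add]) (by intros; simp)
  have form_injective : Function.Injective form := by
    rw [← LinearMap.ker_eq_bot, LinearMap.ker_eq_bot']
    exact fun a ha => Subtype.ext (hE a a.2 fun b hb => congrArg (fun f => f ⟨b, hb⟩) ha)
  have form_surjective : Function.Surjective form :=
    (LinearMap.injective_iff_surjective_of_finrank_eq_finrank
      Subspace.dual_finrank_eq.symm).1 form_injective
  obtain ⟨q, hq⟩ := form_surjective (φ ∘ₗ E.subtype)
  exact ⟨q, q.2, fun b hb => congrArg (fun f => f ⟨b, hb⟩) hq⟩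

theorem trace_eq_zero_of_anticommute [DecidableEq ι] [NeZero (2 : F)] {s x : Matrix ι ι F}
    (hs : s * s = 1) (hx : s * x = -(x * s)) : x.trace = 0 := by
  have hconj : (s * x * s).trace = x.trace := by
    rw [Matrix.trace_mul_comm, ← mul_assoc, hs, one_mul]
  rw [hx, neg_mul, mul_assoc, hs, mul_one, Matrix.trace_neg] at hconj
  have htwice : (2 : F) * x.trace = 0 := by linear_combination -hconj
  exact (mul_eq_zero.1 htwice).resolve_left two_ne_zero

end Trace

section JordanSuper

variable {R : Type*} [Ring R] [Algebra F R]

/-- `E ⊕ O` is a Jordan subsuperalgebra of the superalgebra `R` whose grading is conjugation by the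
involution `s`: the even elements commute with `s` and the odd ones anticommute with it. For
`M_{n,m}` one takes `s = diag(1, …, 1, -1, …, -1)`. The factor `1/2` of the super-Jordan product is
dropped. -/
structure IsJordanSuper (s : R) (E O : Submodule F R) : Prop where
  parity_mul_self : s * s = 1
  even_comm : ∀ a ∈ E, s * a = a * s
  odd_anticomm : ∀ x ∈ O, s * x = -(x * s)
  even_even : ∀ a ∈ E, ∀ b ∈ E, a * b + b * a ∈ E
  even_odd : ∀ a ∈ E, ∀ x ∈ O, a * x + x * a ∈ O
  odd_odd : ∀ x ∈ O, ∀ y ∈ O, x * y - y * x ∈ E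

/-- A simple Jordan superalgebra with nonzero odd part; a graded ideal is given by its even part `I`
and its odd part `J`. -/
structure IsSimpleJordanSuper (s : R) (E O : Submodule F R) : Prop extends
    IsJordanSuper s E O where
  odd_ne_bot : O ≠ ⊥
  mul_ne_zero : ¬ ((∀ a ∈ E, ∀ b ∈ E, a * b + b * a = 0) ∧
    (∀ a ∈ E, ∀ x ∈ O, a * x + x * a = 0) ∧ ∀ x ∈ O, ∀ y ∈ O, x * y - y * x = 0)
  simple : ∀ I J : Submodule F R, I ≤ E → J ≤ O →
    (∀ a ∈ E, ∀ b ∈ I, a * b + b * a ∈ I) → (∀ x ∈ O, ∀ b ∈ I, x * b + b * x ∈ J) →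
    (∀ a ∈ E, ∀ x ∈ J, a * x + x * a ∈ J) → (∀ x ∈ O, ∀ y ∈ J, x * y - y * x ∈ I) →
    (I = ⊥ ∧ J = ⊥) ∨ (I = E ∧ J = O)

variable {s : R} {E O : Submodule F R}

theorem IsJordanSuper.neg (h : IsJordanSuper s E O) : IsJordanSuper (-s) E O where
  parity_mul_self := by rw [neg_mul_neg, h.parity_mul_self]
  even_comm a ha := by rw [neg_mul, mul_neg, h.even_comm a ha]
  odd_anticomm x hx := by rw [neg_mul, mul_neg, h.odd_anticomm x hx]
  even_even := h.even_even
  even_odd := h.even_odd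
  odd_odd := h.odd_odd

theorem IsSimpleJordanSuper.neg (h : IsSimpleJordanSuper s E O) :
    IsSimpleJordanSuper (-s) E O where
  toIsJordanSuper := h.toIsJordanSuper.neg
  odd_ne_bot := h.odd_ne_bot
  mul_ne_zero := h.mul_ne_zero
  simple := h.simple

theorem IsSimpleJordanSuper.eq_of_mul_mem (h : IsSimpleJordanSuper s E O) {E' O' : Submodule F R}
    (hE : E' ≤ E) (hO : O' ≤ O) (heven_even : ∀ a ∈ E, ∀ b ∈ E, a * b + b * a ∈ E')
    (heven_odd : ∀ a ∈ E, ∀ x ∈ O, a * x + x * a ∈ O')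
    (hodd_odd : ∀ x ∈ O, ∀ y ∈ O, x * y - y * x ∈ E') : E' = E ∧ O' = O := by
  refine (h.simple E' O' hE hO (fun a ha b hb => heven_even a ha b (hE hb))
    (fun x hx b hb => add_comm (x * b) _ ▸ heven_odd b (hE hb) x hx)
    (fun a ha x hx => heven_odd a ha x (hO hx))
    (fun x hx y hy => hodd_odd x hx y (hO hy))).resolve_left ?_
  rintro ⟨rfl, rfl⟩
  simp only [Submodule.mem_bot] at heven_even heven_odd hodd_odd
  exact h.mul_ne_zero ⟨heven_even, heven_odd, hodd_odd⟩

variable [NeZero (2 : F)]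

theorem mem_of_add_self_mem {M : Type*} [AddCommGroup M] [Module F M] {N : Submodule F M} {a : M}
    (h : a + a ∈ N) : a ∈ N := by
  rw [← two_smul F] at h
  exact (N.smul_mem_iff two_ne_zero).1 h

theorem eq_zero_of_add_self_eq_zero (F : Type*) [Field F] [NeZero (2 : F)] {M : Type*}
    [AddCommGroup M] [Module F M] {a : M} (h : a + a = 0) : a = 0 :=
  (Submodule.mem_bot F).1 (mem_of_add_self_mem ((Submodule.mem_bot F).2 h))

namespace IsJordanSuper

theorem pow_mem (h : IsJordanSuper s E O) {a : R} (ha : a ∈ E) (k : ℕ) : a ^ (k + 1) ∈ E := by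
  induction k with
  | zero => simpa using ha
  | succ k ih =>
    refine mem_of_add_self_mem ?_
    have := h.even_even a ha _ ih
    rwa [← pow_succ', ← pow_succ] at this

theorem mul_self_mem (h : IsJordanSuper s E O) {a : R} (ha : a ∈ E) : a * a ∈ E :=
  pow_two a ▸ h.pow_mem ha 1

theorem mul_mul_add_mem_even (h : IsJordanSuper s E O) {e f a : R} (he : e ∈ E) (hf : f ∈ E)
    (ha : a ∈ E) : e * a * f + f * a * e ∈ E := by
  refine mem_of_add_self_mem ?_
  convert E.sub_mem (E.add_mem (h.even_even f hf _ (h.even_even e he a ha))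
    (h.even_even e he _ (h.even_even f hf a ha))) (h.even_even _ (h.even_even e he f hf) a ha)
    using 1
  noncomm_ring

theorem mul_mul_add_mem_odd (h : IsJordanSuper s E O) {e f x : R} (he : e ∈ E) (hf : f ∈ E)
    (hx : x ∈ O) : e * x * f + f * x * e ∈ O := by
  refine mem_of_add_self_mem ?_
  convert O.sub_mem (O.add_mem (h.even_odd f hf _ (h.even_odd e he x hx))
    (h.even_odd e he _ (h.even_odd f hf x hx))) (h.even_odd _ (h.even_even e he f hf) x hx)
    using 1
  noncomm_ring

theorem mul_mul_self_mem_even (h : IsJordanSuper s E O) {e a : R} (he : e ∈ E) (ha : a ∈ E) :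
    e * a * e ∈ E :=
  mem_of_add_self_mem (h.mul_mul_add_mem_even he he ha)

theorem mul_mul_self_mem_odd (h : IsJordanSuper s E O) {e x : R} (he : e ∈ E) (hx : x ∈ O) :
    e * x * e ∈ O :=
  mem_of_add_self_mem (h.mul_mul_add_mem_odd he he hx)

theorem aeval_mul_X_pow_succ_mem (h : IsJordanSuper s E O) {a : R} (ha : a ∈ E)
    (p : Polynomial F) (l : ℕ) : Polynomial.aeval a (p * Polynomial.X ^ (l + 1)) ∈ E :=
  SJ.aeval_mul_X_pow_succ_mem (h.pow_mem ha) p l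

end IsJordanSuper

end JordanSuper

section Jacobson

theorem isNilpotent_mulLeft_add_mulRight {S : Type*} [Semiring S] {p : S} (hp : IsNilpotent p) :
    IsNilpotent (LinearMap.mulLeft ℕ p + LinearMap.mulRight ℕ p) :=
  (LinearMap.commute_mulLeft_right p p).isNilpotent_add
    ((LinearMap.isNilpotent_mulLeft_iff ℕ p).2 hp) ((LinearMap.isNilpotent_mulRight_iff ℕ p).2 hp)

variable {R : Type*} [Ring R] [Algebra F R] {N P E O : Submodule F R} {s : R}

theorem eq_bot_of_le_mul_sup_mul (hP : IsNilpotent P) (hN : N ≤ P * N ⊔ N * P) : N = ⊥ := by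
  obtain ⟨k, hk⟩ := isNilpotent_mulLeft_add_mulRight hP
  suffices h : ∀ j, N ≤ ((LinearMap.mulLeft ℕ P + LinearMap.mulRight ℕ P) ^ j) N by
    simpa [hk] using h k
  intro j
  induction j with
  | zero => simp
  | succ j ih =>
    rw [pow_succ', Module.End.mul_apply]
    exact hN.trans (sup_le_sup (mul_le_mul_right ih P) (mul_le_mul_left ih P))

theorem exists_notMem_forall_mul_add_mul_mem (hP : IsNilpotent P) (hPN : P < N)
    (hN : ∀ a ∈ N, ∀ b ∈ N, a * b + b * a ∈ N) :
    ∃ n ∈ N, n ∉ P ∧ ∀ p ∈ P, n * p + p * n ∈ P := by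
  obtain ⟨k, hk⟩ := isNilpotent_mulLeft_add_mulRight hP
  by_contra! hcon
  suffices h : ∀ j, ∃ n ∈ N, n ∉ P ∧
      n ∈ ((LinearMap.mulLeft ℕ P + LinearMap.mulRight ℕ P) ^ j) N by
    obtain ⟨n, -, hnP, hn⟩ := h k
    rw [hk] at hn
    exact hnP ((Submodule.mem_bot F).1 hn ▸ P.zero_mem)
  intro j
  induction j with
  | zero =>
    obtain ⟨n, hn, hnP⟩ := SetLike.exists_of_lt hPN
    exact ⟨n, hn, hnP, hn⟩
  | succ j ih =>
    obtain ⟨n, hn, hnP, hnj⟩ := ih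
    obtain ⟨p, hp, hnp⟩ := hcon n hn hnP
    refine ⟨_, hN n hn p (hPN.le hp), hnp, ?_⟩
    rw [pow_succ', Module.End.mul_apply, add_comm (n * p)]
    exact Submodule.add_mem_sup (Submodule.mul_mem_mul hp hnj) (Submodule.mul_mem_mul hnj hp)

theorem pow_mul_le_mul_pow {Q : Submodule F R} (h : Q * P ≤ P * Q) (j : ℕ) :
    Q ^ j * P ≤ P * Q ^ j := by
  induction j with
  | zero => simp
  | succ j ih =>
    calc Q ^ (j + 1) * P = Q ^ j * (Q * P) := by rw [pow_succ, mul_assoc]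
      _ ≤ Q ^ j * (P * Q) := mul_le_mul_right h _
      _ = Q ^ j * P * Q := (mul_assoc _ _ _).symm
      _ ≤ P * Q ^ j * Q := mul_le_mul_left ih Q
      _ = P * Q ^ (j + 1) := by rw [pow_succ, mul_assoc]

theorem mul_pow_le_pow_mul_pow {Q : Submodule F R} (h : Q * P ≤ P * Q) (k : ℕ) :
    (P * Q) ^ k ≤ P ^ k * Q ^ k := by
  induction k with
  | zero => simp
  | succ k ih =>
    calc (P * Q) ^ (k + 1) = (P * Q) ^ k * (P * Q) := pow_succ _ _
      _ ≤ P ^ k * Q ^ k * (P * Q) := mul_le_mul_left ih _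
      _ = P ^ k * (Q ^ k * P) * Q := by simp only [mul_assoc]
      _ ≤ P ^ k * (P * Q ^ k) * Q := mul_le_mul_left (mul_le_mul_right (pow_mul_le_mul_pow h k) _) Q
      _ = P ^ (k + 1) * Q ^ (k + 1) := by simp only [pow_succ, mul_assoc]

theorem sup_pow_le {ν Q : Submodule F R} (hP : P ≤ Q) (hν : ν ≤ Q) (hQ1 : 1 ≤ Q)
    (h : Q * P ≤ P * Q) (j : ℕ) : (P ⊔ ν) ^ j ≤ P * Q ^ j ⊔ ν ^ j := by
  induction j with
  | zero => simp
  | succ j ih =>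
    have hνj : ν ^ j * P ≤ P * Q ^ (j + 1) :=
      calc ν ^ j * P ≤ Q ^ j * P := mul_le_mul_left (pow_le_pow_left' hν j) P
        _ ≤ P * Q ^ j := pow_mul_le_mul_pow h j
        _ ≤ P * Q ^ (j + 1) := mul_le_mul_right (pow_le_pow_right' hQ1 j.le_succ) P
    calc (P ⊔ ν) ^ (j + 1) = (P ⊔ ν) ^ j * (P ⊔ ν) := pow_succ _ _
      _ ≤ (P * Q ^ j ⊔ ν ^ j) * (P ⊔ ν) := mul_le_mul_left ih _
      _ = P * Q ^ j * (P ⊔ ν) ⊔ (ν ^ j * P ⊔ ν ^ j * ν) := by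
        rw [Submodule.sup_mul, Submodule.mul_sup (ν ^ j)]
      _ ≤ P * Q ^ j * Q ⊔ (P * Q ^ (j + 1) ⊔ ν ^ j * ν) :=
        sup_le_sup (mul_le_mul_right (sup_le hP hν) _) (sup_le_sup_right hνj _)
      _ = P * Q ^ (j + 1) ⊔ ν ^ (j + 1) := by
        rw [mul_assoc, ← pow_succ, ← sup_assoc, sup_idem, pow_succ ν]

theorem isNilpotent_sup_span_singleton {n : R} (hP : IsNilpotent P) (hn : IsNilpotent n)
    (h : ∀ p ∈ P, n * p + p * n ∈ P) : IsNilpotent (P ⊔ Submodule.span F {n}) := by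
  obtain ⟨k, hk⟩ := hP
  obtain ⟨t, ht⟩ := hn
  set ν := Submodule.span F {n}
  set Q := 1 ⊔ P ⊔ ν
  have hPQ : P ≤ Q := le_sup_of_le_left le_sup_right
  have h1Q : 1 ≤ Q := le_sup_of_le_left le_sup_left
  have hνP : ν * P ≤ P * Q := by
    refine Submodule.mul_le.2 fun m hm p hp => ?_
    obtain ⟨c, rfl⟩ := Submodule.mem_span_singleton.1 hm
    have hnp : n * p = n * p + p * n - p * n := by abel
    rw [smul_mul_assoc, hnp]
    exact Submodule.smul_mem _ c (Submodule.sub_mem _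
      (le_mul_of_one_le_right' h1Q (h p hp))
      (Submodule.mul_mem_mul hp (Submodule.mem_sup_right (Submodule.mem_span_singleton_self n))))
  have hcomm : Q * P ≤ P * Q := by
    rw [Submodule.sup_mul, Submodule.sup_mul, one_mul]
    exact sup_le (sup_le (le_mul_of_one_le_right' h1Q) (mul_le_mul_right hPQ P)) hνP
  have hpow : (P ⊔ ν) ^ t ≤ P * Q ^ t := by
    have hνt : ν ^ t = ⊥ := by
      rw [Submodule.span_pow, Set.singleton_pow, ht, Submodule.span_zero_singleton]
    simpa [hνt] using sup_pow_le hPQ le_sup_right h1Q hcomm t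
  refine ⟨t * k, le_bot_iff.1 ?_⟩
  calc (P ⊔ ν) ^ (t * k) = ((P ⊔ ν) ^ t) ^ k := pow_mul _ _ _
    _ ≤ (P * Q ^ t) ^ k := pow_le_pow_left' hpow k
    _ ≤ P ^ k * (Q ^ t) ^ k := mul_pow_le_pow_mul_pow (pow_mul_le_mul_pow hcomm t) k
    _ = ⊥ := by rw [hk]; exact Submodule.bot_mul _

theorem isNilpotent_of_forall_isNilpotent [Module.Finite F R]
    (hN : ∀ a ∈ N, ∀ b ∈ N, a * b + b * a ∈ N) (hnil : ∀ a ∈ N, IsNilpotent a) :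
    IsNilpotent N := by
  obtain ⟨P, ⟨hPN, hP⟩, hmax⟩ := exists_maximal_of_wellFoundedGT
    (fun P : Submodule F R => P ≤ N ∧ IsNilpotent P) ⟨⊥, bot_le, IsNilpotent.zero⟩
  rcases hPN.eq_or_lt with rfl | hlt
  · exact hP
  obtain ⟨n, hn, hnP, hnp⟩ := exists_notMem_forall_mul_add_mul_mem hP hlt hN
  have hle := hmax ⟨sup_le hPN ((Submodule.span_singleton_le_iff_mem _ _).2 hn),
    isNilpotent_sup_span_singleton hP (hnil n hn) hnp⟩ le_sup_left
  exact absurd (hle (Submodule.mem_sup_right (Submodule.mem_span_singleton_self n))) hnP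

theorem IsSimpleJordanSuper.not_isNilpotent_even (h : IsSimpleJordanSuper s E O) :
    ¬ IsNilpotent E := by
  intro hnil
  refine h.odd_ne_bot (eq_bot_of_le_mul_sup_mul hnil (inf_eq_left.1 ?_))
  exact (h.eq_of_mul_mem le_rfl inf_le_left h.even_even (fun a ha x hx => ⟨h.even_odd a ha x hx,
    Submodule.add_mem_sup (Submodule.mul_mem_mul ha hx) (Submodule.mul_mem_mul hx ha)⟩)
    h.odd_odd).2

theorem IsSimpleJordanSuper.even_ne_bot (h : IsSimpleJordanSuper s E O) : E ≠ ⊥ := by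
  rintro rfl
  exact h.not_isNilpotent_even IsNilpotent.zero

end Jacobson

section TraceForm

variable {ι : Type*} [Fintype ι]

/-- The elements of `E` orthogonal to `K` under the form `(a, b) ↦ tr (s a b)`: the trace form for
`s = 1`, the supertrace form for a parity involution `s`. -/
def traceRadical (s : Matrix ι ι F) (E : Submodule F (Matrix ι ι F)) (K : Set (Matrix ι ι F)) :
    Submodule F (Matrix ι ι F) where
  carrier := {a | a ∈ E ∧ ∀ b ∈ K, (s * (a * b)).trace = 0}
  zero_mem' := ⟨E.zero_mem, by simp⟩
  add_mem' := fun {a b} ⟨ha, ha'⟩ ⟨hb, hb'⟩ => ⟨E.add_mem ha hb, fun c hc => by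
    rw [add_mul, mul_add, trace_add, ha' c hc, hb' c hc, add_zero]⟩
  smul_mem' := fun r a ⟨ha, ha'⟩ => ⟨E.smul_mem r ha, fun c hc => by
    rw [smul_mul_assoc, mul_smul_comm, trace_smul, ha' c hc, smul_zero]⟩

theorem traceRadical_le {s : Matrix ι ι F} {E : Submodule F (Matrix ι ι F)}
    {K : Set (Matrix ι ι F)} : traceRadical s E K ≤ E :=
  fun _ ha => ha.1

theorem mem_traceRadical_one [DecidableEq ι] {E : Submodule F (Matrix ι ι F)}
    {K : Set (Matrix ι ι F)} {a : Matrix ι ι F} :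
    a ∈ traceRadical 1 E K ↔ a ∈ E ∧ ∀ b ∈ K, (a * b).trace = 0 := by
  simp only [traceRadical, one_mul]; rfl

/-- The powers of `1 + E + O` exhaust the associative envelope of `E ⊕ O`. -/
def envelope {R : Type*} [Ring R] [Algebra F R] (E O : Submodule F R) : Submodule F R := 1 ⊔ E ⊔ O

/-- The powers of `1 + E + O²` exhaust the even part of the associative envelope of `E ⊕ O`. -/
def evenEnvelope {R : Type*} [Ring R] [Algebra F R] (E O : Submodule F R) : Submodule F R :=
  1 ⊔ E ⊔ O * O

section Envelope

variable {R : Type*} [Ring R] [Algebra F R] {s : R} {E O : Submodule F R}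

theorem one_le_evenEnvelope : 1 ≤ evenEnvelope E O := le_sup_of_le_left le_sup_left

theorem even_le_evenEnvelope : E ≤ evenEnvelope E O := le_sup_of_le_left le_sup_right

theorem odd_mul_odd_le_evenEnvelope : O * O ≤ evenEnvelope E O := le_sup_right

theorem mul_mem_mul_evenEnvelope {N : Submodule F R} {a x : R} (ha : a ∈ E) (hx : x ∈ N)
    (hax : a * x + x * a ∈ N) : a * x ∈ N * evenEnvelope E O := by
  rw [show a * x = a * x + x * a - x * a by abel]
  exact Submodule.sub_mem _ (le_mul_of_one_le_right' one_le_evenEnvelope hax)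
    (Submodule.mul_mem_mul hx (even_le_evenEnvelope ha))

namespace IsJordanSuper

theorem evenEnvelope_mul_odd_le (h : IsJordanSuper s E O) :
    evenEnvelope E O * O ≤ O * evenEnvelope E O := by
  rw [evenEnvelope, Submodule.sup_mul, Submodule.sup_mul, one_mul, mul_assoc]
  exact sup_le (sup_le (le_mul_of_one_le_right' one_le_evenEnvelope)
    (Submodule.mul_le.2 fun a ha x hx => mul_mem_mul_evenEnvelope ha hx (h.even_odd a ha x hx)))
    (mul_le_mul_right odd_mul_odd_le_evenEnvelope O)

theorem envelope_pow_le (h : IsJordanSuper s E O) (j : ℕ) :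
    envelope E O ^ j ≤ evenEnvelope E O ^ j ⊔ O * evenEnvelope E O ^ j := by
  set Q := evenEnvelope E O
  induction j with
  | zero => simp
  | succ j ih =>
    have hle : 1 ⊔ E ≤ Q := le_sup_left
    have hQjO : Q ^ j * O ≤ O * Q ^ (j + 1) :=
      (pow_mul_le_mul_pow h.evenEnvelope_mul_odd_le j).trans
        (mul_le_mul_right (pow_le_pow_right' one_le_evenEnvelope j.le_succ) O)
    have hOQjO : O * Q ^ j * O ≤ Q ^ (j + 1) :=
      calc O * Q ^ j * O = O * (Q ^ j * O) := mul_assoc _ _ _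
        _ ≤ O * (O * Q ^ j) :=
          mul_le_mul_right (pow_mul_le_mul_pow h.evenEnvelope_mul_odd_le j) O
        _ = O * O * Q ^ j := (mul_assoc _ _ _).symm
        _ ≤ Q * Q ^ j := mul_le_mul_left odd_mul_odd_le_evenEnvelope _
        _ = Q ^ (j + 1) := (pow_succ' Q j).symm
    calc envelope E O ^ (j + 1) = envelope E O ^ j * envelope E O := pow_succ _ _
      _ ≤ (Q ^ j ⊔ O * Q ^ j) * envelope E O := mul_le_mul_left ih _
      _ = Q ^ j * (1 ⊔ E) ⊔ Q ^ j * O ⊔ (O * Q ^ j * (1 ⊔ E) ⊔ O * Q ^ j * O) := by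
        rw [envelope, Submodule.sup_mul, Submodule.mul_sup, Submodule.mul_sup (O * Q ^ j)]
      _ ≤ Q ^ j * Q ⊔ O * Q ^ (j + 1) ⊔ (O * Q ^ j * Q ⊔ Q ^ (j + 1)) :=
        sup_le_sup (sup_le_sup (mul_le_mul_right hle _) hQjO)
          (sup_le_sup (mul_le_mul_right hle _) hOQjO)
      _ = Q ^ (j + 1) ⊔ O * Q ^ (j + 1) := by
        rw [mul_assoc, ← pow_succ, sup_comm (O * Q ^ (j + 1)) (Q ^ (j + 1)), sup_idem]

theorem comm_of_mem_evenEnvelope_pow (h : IsJordanSuper s E O) {j : ℕ} {c : R}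
    (hc : c ∈ evenEnvelope E O ^ j) : s * c = c * s := by
  have hle : evenEnvelope E O ≤ Subalgebra.toSubmodule (Subalgebra.centralizer F {s}) := by
    refine sup_le (sup_le ?_ ?_) (Submodule.mul_le.2 ?_)
    · exact Submodule.one_le.2 (Subalgebra.one_mem _)
    · rintro a ha _ rfl
      exact h.even_comm a ha
    · rintro x hx y hy _ rfl
      rw [← mul_assoc, h.odd_anticomm x hx, neg_mul, mul_assoc, h.odd_anticomm y hy, mul_neg,
        neg_neg, mul_assoc]
  have hpow : evenEnvelope E O ^ j ≤ Subalgebra.toSubmodule (Subalgebra.centralizer F {s}) := by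
    clear hc
    induction j with
    | zero => exact Submodule.one_le.2 (Subalgebra.one_mem _)
    | succ j ih =>
      rw [pow_succ]
      exact Submodule.mul_le.2 fun b hb c hc => Subalgebra.mul_mem _ (ih hb) (hle hc)
  exact hpow hc s rfl

theorem anticommutator_bracket_mem (h : IsJordanSuper s E O) {x y a : R} (hx : x ∈ O) (hy : y ∈ O)
    (ha : a ∈ E) : (x * y + y * x) * a - a * (x * y + y * x) ∈ E := by
  convert E.add_mem (h.odd_odd x hx _ (h.even_odd a ha y hy))
    (h.odd_odd y hy _ (h.even_odd a ha x hx)) using 1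
  noncomm_ring

end IsJordanSuper

end Envelope

variable [DecidableEq ι] {s : Matrix ι ι F} {E O : Submodule F (Matrix ι ι F)}

namespace IsJordanSuper

theorem mul_add_mul_mem_traceRadical (h : IsJordanSuper s E O) {a x : Matrix ι ι F} (ha : a ∈ E)
    (hx : x ∈ traceRadical 1 E E) : a * x + x * a ∈ traceRadical 1 E E := by
  rw [mem_traceRadical_one] at hx ⊢
  refine ⟨h.even_even a ha x hx.1, fun b hb => ?_⟩
  have hab := hx.2 _ (h.even_even a ha b hb)
  have hcycle := trace_mul_cycle x b a
  simp only [mul_add, add_mul, trace_add, ← mul_assoc] at *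
  linear_combination hab - hcycle

theorem anticommutator_bracket_mem_traceRadical (h : IsJordanSuper s E O) {x y a : Matrix ι ι F}
    (hx : x ∈ O) (hy : y ∈ O) (ha : a ∈ traceRadical 1 E E) :
    (x * y + y * x) * a - a * (x * y + y * x) ∈ traceRadical 1 E E := by
  rw [mem_traceRadical_one] at ha ⊢
  refine ⟨h.anticommutator_bracket_mem hx hy ha.1, fun b hb => ?_⟩
  have hab := ha.2 _ (h.anticommutator_bracket_mem hx hy hb)
  generalize x * y + y * x = d at *
  have hcycle := trace_mul_cycle a b d
  simp only [mul_sub, sub_mul, trace_sub, ← mul_assoc] at *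
  linear_combination -hab - hcycle

variable [CharZero F]

theorem isNilpotent_of_mem_traceRadical (h : IsJordanSuper s E O) {a : Matrix ι ι F}
    (ha : a ∈ traceRadical 1 E E) : IsNilpotent a := by
  rw [mem_traceRadical_one] at ha
  by_contra hnil
  obtain ⟨p, hp, hidem⟩ :=
    exists_aeval_mul_X_pow_isIdempotentElem (Algebra.IsIntegral.isIntegral (R := F) a) hnil 2
  refine hp (eq_zero_of_isIdempotentElem_of_trace_eq_zero hidem ?_)
  rw [show p * Polynomial.X ^ 2 = Polynomial.X * (p * Polynomial.X ^ 1) by ring, map_mul,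
    Polynomial.aeval_X]
  exact ha.2 _ (h.aeval_mul_X_pow_succ_mem ha.1 p 0)

theorem isNilpotent_traceRadical (h : IsJordanSuper s E O) : IsNilpotent (traceRadical 1 E E) :=
  isNilpotent_of_forall_isNilpotent
    (fun _ ha _ hb => h.mul_add_mul_mem_traceRadical (traceRadical_le ha) hb)
    fun _ => h.isNilpotent_of_mem_traceRadical

theorem evenEnvelope_mul_traceRadical_le (h : IsJordanSuper s E O) :
    evenEnvelope E O * traceRadical 1 E E ≤ traceRadical 1 E E * evenEnvelope E O := by
  have heven (a) (ha : a ∈ E) (p) (hp : p ∈ traceRadical 1 E E) :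
      a * p ∈ traceRadical 1 E E * evenEnvelope E O :=
    mul_mem_mul_evenEnvelope ha hp (h.mul_add_mul_mem_traceRadical ha hp)
  refine Submodule.mul_le.2 fun g hg p hp => ?_
  have hle : evenEnvelope E O ≤ (traceRadical 1 E E * evenEnvelope E O).comap
      (LinearMap.mulRight F p) := by
    refine sup_le (sup_le ?_ fun a ha => heven a ha p hp) (Submodule.mul_le.2 fun x hx y hy => ?_)
    · refine Submodule.one_le.2 ?_
      simpa using le_mul_of_one_le_right' one_le_evenEnvelope hp
    · change x * y * p ∈ traceRadical 1 E E * evenEnvelope E O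
      refine mem_of_add_self_mem ?_
      have hsplit : x * y * p + x * y * p = (x * y - y * x) * p +
          (((x * y + y * x) * p - p * (x * y + y * x)) + p * (x * y + y * x)) := by noncomm_ring
      rw [hsplit]
      exact Submodule.add_mem _ (heven _ (h.odd_odd x hx y hy) p hp) (Submodule.add_mem _
        (le_mul_of_one_le_right' one_le_evenEnvelope
          (h.anticommutator_bracket_mem_traceRadical hx hy hp))
        (Submodule.mul_mem_mul hp (odd_mul_odd_le_evenEnvelope
          (Submodule.add_mem _ (Submodule.mul_mem_mul hx hy) (Submodule.mul_mem_mul hy hx)))))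
  exact hle hg

theorem trace_mul_evenEnvelope_pow_eq_zero (h : IsJordanSuper s E O) {a c : Matrix ι ι F} {j : ℕ}
    (ha : a ∈ traceRadical 1 E E) (hc : c ∈ evenEnvelope E O ^ j) : (a * c).trace = 0 := by
  obtain ⟨k, hk⟩ := h.isNilpotent_traceRadical
  have hmem := mul_pow_le_pow_mul_pow (pow_mul_le_mul_pow h.evenEnvelope_mul_traceRadical_le j) k
    (Submodule.pow_mem_pow _ (Submodule.mul_mem_mul ha hc) k)
  rw [hk, zero_mul] at hmem
  exact (Matrix.isNilpotent_trace_of_isNilpotent ⟨k, (Submodule.mem_bot F).1 hmem⟩).eq_zero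

theorem trace_mul_envelope_pow_eq_zero (h : IsJordanSuper s E O) {a c : Matrix ι ι F} {j : ℕ}
    (ha : a ∈ traceRadical 1 E E) (hc : c ∈ envelope E O ^ j) : (a * c).trace = 0 := by
  obtain ⟨c₀, hc₀, c₁, hc₁, rfl⟩ := Submodule.mem_sup.1 (h.envelope_pow_le j hc)
  rw [mul_add, trace_add, h.trace_mul_evenEnvelope_pow_eq_zero ha hc₀, zero_add]
  refine Submodule.mul_induction_on hc₁ (fun x hx d hd => ?_) fun u v hu hv => ?_
  · refine trace_eq_zero_of_anticommute h.parity_mul_self ?_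
    calc s * (a * (x * d)) = s * a * x * d := by simp only [mul_assoc]
      _ = a * (s * x) * d := by rw [h.even_comm a (traceRadical_le ha)]; simp only [mul_assoc]
      _ = -(a * x * (s * d)) := by rw [h.odd_anticomm x hx]; noncomm_ring
      _ = -(a * (x * d) * s) := by rw [h.comm_of_mem_evenEnvelope_pow hd]; simp only [mul_assoc]
  · rw [mul_add, trace_add, hu, hv, add_zero]

end IsJordanSuper

theorem trace_mul_mul_eq_zero_of_mem_traceRadical_envelope {M : Submodule F (Matrix ι ι F)}
    {a x b : Matrix ι ι F} (ha : a ∈ envelope E O)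
    (hx : x ∈ traceRadical 1 M {c | ∃ j, c ∈ envelope E O ^ j}) (hb : ∃ j, b ∈ envelope E O ^ j) :
    (a * x * b).trace = 0 ∧ (x * a * b).trace = 0 := by
  obtain ⟨j, hb⟩ := hb
  rw [mem_traceRadical_one] at hx
  constructor
  · rw [← trace_mul_cycle, mul_assoc]
    exact hx.2 _ ⟨j + 1, pow_succ (envelope E O) j ▸ Submodule.mul_mem_mul hb ha⟩
  · rw [mul_assoc]
    exact hx.2 _ ⟨j + 1, pow_succ' (envelope E O) j ▸ Submodule.mul_mem_mul ha hb⟩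

namespace IsSimpleJordanSuper

variable [CharZero F]

theorem eq_zero_of_forall_trace_mul_eq_zero (h : IsSimpleJordanSuper s E O) {a : Matrix ι ι F}
    (ha : a ∈ E) (horth : ∀ b ∈ E, (a * b).trace = 0) : a = 0 := by
  set K := {c | ∃ j, c ∈ envelope E O ^ j}
  have hE : E ≤ envelope E O := le_sup_of_le_left le_sup_right
  have hO : O ≤ envelope E O := le_sup_right
  have hle : traceRadical 1 E E ≤ traceRadical 1 E K := fun x hx =>
    mem_traceRadical_one.2 ⟨hx.1, fun c ⟨_, hc⟩ => h.trace_mul_envelope_pow_eq_zero hx hc⟩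
  have hmul {M N : Submodule F (Matrix ι ι F)} {e x : Matrix ι ι F} (he : e ∈ envelope E O)
      (hx : x ∈ traceRadical 1 M K) (hmem : e * x + x * e ∈ N) :
      e * x + x * e ∈ traceRadical 1 N K := mem_traceRadical_one.2 ⟨hmem, fun b hb => by
    rw [add_mul, trace_add, (trace_mul_mul_eq_zero_of_mem_traceRadical_envelope he hx hb).1,
      (trace_mul_mul_eq_zero_of_mem_traceRadical_envelope he hx hb).2, add_zero]⟩
  rcases h.simple (traceRadical 1 E K) (traceRadical 1 O K) traceRadical_le traceRadical_le
    (fun e he x hx => hmul (hE he) hx (h.even_even e he x hx.1))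
    (fun e he x hx => hmul (hO he) hx (add_comm (x * e) _ ▸ h.even_odd x hx.1 e he))
    (fun e he x hx => hmul (hE he) hx (h.even_odd e he x hx.1))
    (fun e he x hx => mem_traceRadical_one.2 ⟨h.odd_odd e he x hx.1, fun b hb => by
      rw [sub_mul, trace_sub, (trace_mul_mul_eq_zero_of_mem_traceRadical_envelope (hO he) hx hb).1,
        (trace_mul_mul_eq_zero_of_mem_traceRadical_envelope (hO he) hx hb).2, sub_zero]⟩)
    with ⟨hbot, -⟩ | ⟨htop, -⟩
  · have := hle (mem_traceRadical_one.2 ⟨ha, horth⟩)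
    rwa [hbot, Submodule.mem_bot] at this
  · have hEN : E ≤ traceRadical 1 E E := fun b hb => mem_traceRadical_one.2 ⟨hb, fun c hc =>
      (mem_traceRadical_one.1 (htop.symm ▸ hb : b ∈ traceRadical 1 E K)).2 c
        ⟨1, by simpa using hE hc⟩⟩
    exact absurd (le_antisymm traceRadical_le hEN ▸ h.isNilpotent_traceRadical)
      h.not_isNilpotent_even

theorem exists_even_forall_trace_mul_eq (h : IsSimpleJordanSuper s E O)
    (φ : Matrix ι ι F →ₗ[F] F) : ∃ q ∈ E, ∀ b ∈ E, (q * b).trace = φ b := by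
  simpa using exists_forall_trace_mul_eq (s := 1)
    (fun a ha horth => h.eq_zero_of_forall_trace_mul_eq_zero ha (by simpa using horth)) φ

theorem exists_even_unit (h : IsSimpleJordanSuper s E O) :
    ∃ u ∈ E, ∀ a ∈ E, u * a = a ∧ a * u = a := by
  obtain ⟨u, hu, htrace⟩ := h.exists_even_forall_trace_mul_eq (traceLinearMap ι F F)
  simp only [traceLinearMap_apply] at htrace
  have hjordan (b) (hb : b ∈ E) : u * b + b * u = b + b := by
    refine sub_eq_zero.1 (h.eq_zero_of_forall_trace_mul_eq_zero
      (E.sub_mem (h.even_even u hu b hb) (E.add_mem hb hb)) fun c hc => ?_)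
    have hbc := htrace _ (h.even_even b hb c hc)
    have hcycle := trace_mul_cycle u c b
    have hcomm := trace_mul_comm c b
    simp only [mul_add, add_mul, sub_mul, trace_add, trace_sub, ← mul_assoc] at *
    linear_combination hbc - hcycle + hcomm
  have hhalf {a b : Matrix ι ι F} (hab : a + a = b + b) : a = b :=
    sub_eq_zero.1 (eq_zero_of_add_self_eq_zero F (by rw [← add_sub_add_comm, hab, sub_self]))
  have huu : u * u = u := hhalf (hjordan u hu)
  refine ⟨u, hu, fun b hb => ?_⟩
  have hleft : u * b * u = u * b := by
    have := congrArg (u * ·) (hjordan b hb)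
    simp only [mul_add, ← mul_assoc, huu] at this
    exact add_left_cancel this
  have hright : u * b * u = b * u := by
    have := congrArg (· * u) (hjordan b hb)
    simp only [add_mul, mul_assoc, huu] at this
    exact (mul_assoc _ _ _).trans (add_right_cancel this)
  have hub : u * b * u = b := 
    hhalf ((congrArg₂ (· + ·) hleft hright).trans (hjordan b hb))
  exact ⟨hleft ▸ hub, hright ▸ hub⟩

section OddPart

variable {u : Matrix ι ι F}

theorem odd_bracket_eq_zero_of_unit_mul_mul_eq_zero (h : IsSimpleJordanSuper s E O)
    (huE : ∀ a ∈ E, u * a = a ∧ a * u = a) {x y : Matrix ι ι F} (hx : x ∈ O) (hy : y ∈ O)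
    (hxu : u * x * u = 0) : y * x - x * y = 0 := by
  refine h.eq_zero_of_forall_trace_mul_eq_zero (h.odd_odd y hy x hx) fun b hb => ?_
  obtain ⟨hub, hbu⟩ := huE b hb
  have hbxu : b * x * u = 0 := by
    rw [← hbu, mul_assoc, mul_assoc, ← mul_assoc u, hxu, mul_zero]
  have huxb : u * x * b = 0 := by
    rw [← hub, ← mul_assoc, hxu, zero_mul]
  have hz := congrArg trace (huE _ (h.odd_odd x hx _ (h.even_odd b hb y hy))).1
  have hu₁ : (u * x * b * y).trace = 0 := by rw [huxb, zero_mul, trace_zero]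
  have hu₂ : (u * y * b * x).trace = 0 := by
    rw [mul_assoc u, mul_assoc u, trace_mul_comm, mul_assoc y, mul_assoc y, hbxu, mul_zero,
      trace_zero]
  have hu₃ : (u * x * y * b).trace = (x * y * b).trace := by
    rw [mul_assoc u, mul_assoc u, trace_mul_comm, mul_assoc _ b u, hbu]
  have hcycle₁ := trace_mul_cycle x b y
  have hcycle₂ := trace_mul_cycle y b x
  simp only [mul_add, add_mul, mul_sub, sub_mul, trace_add, trace_sub, ← mul_assoc, hub, hu₁, hu₂,
    hu₃] at hz ⊢
  linear_combination -hz - hcycle₁ + hcycle₂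

theorem unit_mul_mul_odd_eq_self (h : IsSimpleJordanSuper s E O) (hu : u ∈ E)
    (huE : ∀ a ∈ E, u * a = a ∧ a * u = a) {x : Matrix ι ι F} (hx : x ∈ O) : u * x * u = x := by
  have huu : u * u = u := (huE u hu).1
  let J := O ⊓ LinearMap.ker (LinearMap.mulLeft F u ∘ₗ LinearMap.mulRight F u)
  have mem_J {y : Matrix ι ι F} : y ∈ J ↔ y ∈ O ∧ u * y * u = 0 := by
    simp [J, mul_assoc]
  have hideal (a) (ha : a ∈ E) (y) (hy : y ∈ J) : a * y + y * a ∈ J := by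
    rw [mem_J] at hy ⊢
    refine ⟨h.even_odd a ha y hy.1, ?_⟩
    calc u * (a * y + y * a) * u = u * a * y * u + u * y * (a * u) := by noncomm_ring
      _ = a * u * y * u + u * y * (u * a) := by rw [(huE a ha).1, (huE a ha).2]
      _ = a * (u * y * u) + u * y * u * a := by noncomm_ring
      _ = 0 := by rw [hy.2, mul_zero, zero_mul, add_zero]
  have hJ : J = ⊥ := by
    rcases h.simple ⊥ J bot_le inf_le_left (by simp) (by simp) hideal (fun y hy z hz =>
        (Submodule.mem_bot F).2 (h.odd_bracket_eq_zero_of_unit_mul_mul_eq_zero huE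
          (mem_J.1 hz).1 hy (mem_J.1 hz).2)) with ⟨-, hbot⟩ | ⟨htop, -⟩
    · exact hbot
    · exact absurd htop.symm h.even_ne_bot
  have hmem : x - u * x * u ∈ J := by
    refine mem_J.2 ⟨O.sub_mem hx (h.mul_mul_self_mem_odd hu hx), ?_⟩
    rw [show u * (x - u * x * u) * u = u * x * u - u * u * x * (u * u) by noncomm_ring, huu,
      sub_self]
  rw [hJ, Submodule.mem_bot, sub_eq_zero] at hmem
  exact hmem.symm

end OddPart

theorem exists_unit (h : IsSimpleJordanSuper s E O) :
    ∃ u ∈ E, (∀ a ∈ E, u * a = a ∧ a * u = a) ∧ ∀ x ∈ O, u * x = x ∧ x * u = x := by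
  obtain ⟨u, hu, huE⟩ := h.exists_even_unit
  have huu : u * u = u := (huE u hu).1
  refine ⟨u, hu, huE, fun x hx => ?_⟩
  rw [← h.unit_mul_mul_odd_eq_self hu huE hx]
  constructor
  · rw [← mul_assoc, ← mul_assoc, huu]
  · rw [mul_assoc, huu]

end IsSimpleJordanSuper

end TraceForm

section SupertraceForm

/-- The elements of `R` that are even for the grading given by conjugation by `s`. -/
def commutantSub {R : Type*} [Ring R] [Algebra F R] (s : R) : Submodule F R where
  carrier := {x | s * x = x * s}
  zero_mem' := by simp
  add_mem' := fun {a b} (ha : _ = _) (hb : _ = _) => show _ = _ by rw [mul_add, ha, hb, add_mul]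
  smul_mem' := fun r a (ha : _ = _) => show _ = _ by rw [mul_smul_comm, ha, smul_mul_assoc]

/-- The elements of `R` that are odd for the grading given by conjugation by `s`. -/
def anticommutantSub {R : Type*} [Ring R] [Algebra F R] (s : R) : Submodule F R where
  carrier := {x | s * x = -(x * s)}
  zero_mem' := by simp
  add_mem' := fun {a b} (ha : _ = _) (hb : _ = _) => show _ = _ by
    rw [mul_add, ha, hb, add_mul, neg_add]
  smul_mem' := fun r a (ha : _ = _) => show _ = _ by
    rw [mul_smul_comm, ha, smul_mul_assoc, smul_neg]

section Ring

variable {R : Type*} [Ring R] [Algebra F R] {s x : R}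

theorem mem_commutantSub : x ∈ commutantSub (F := F) s ↔ s * x = x * s := Iff.rfl

theorem mem_anticommutantSub : x ∈ anticommutantSub (F := F) s ↔ s * x = -(x * s) := Iff.rfl

theorem isCompl_commutantSub_anticommutantSub [NeZero (2 : F)] (hs : s * s = 1) :
    IsCompl (commutantSub (F := F) s) (anticommutantSub s) := by
  constructor
  · refine Submodule.disjoint_def.2 fun x hcomm hanti => ?_
    rw [mem_commutantSub] at hcomm
    rw [mem_anticommutantSub, ← hcomm, eq_neg_iff_add_eq_zero] at hanti
    rw [← one_mul x, ← hs, mul_assoc, eq_zero_of_add_self_eq_zero F hanti, mul_zero]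
  · refine codisjoint_iff.2 (eq_top_iff.2 fun x _ => Submodule.mem_sup.2
      ⟨(2 : F)⁻¹ • (x + s * x * s), Submodule.smul_mem _ _ ?_,
        (2 : F)⁻¹ • (x - s * x * s), Submodule.smul_mem _ _ ?_, ?_⟩)
    · rw [mem_commutantSub, show s * (x + s * x * s) = s * x + s * s * x * s by noncomm_ring,
        show (x + s * x * s) * s = x * s + s * x * (s * s) by noncomm_ring, hs, one_mul, mul_one,
        add_comm]
    · rw [mem_anticommutantSub, show s * (x - s * x * s) = s * x - s * s * x * s by noncomm_ring,
        show (x - s * x * s) * s = x * s - s * x * (s * s) by noncomm_ring, hs, one_mul, mul_one,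
        neg_sub]
    · rw [← smul_add, add_add_sub_cancel, ← two_smul F x, inv_smul_smul₀ two_ne_zero]

end Ring

variable {ι : Type*} [Fintype ι]

theorem trace_parity_mul_comm_of_even {s a : Matrix ι ι F} (ha : s * a = a * s)
    (c : Matrix ι ι F) : (s * (a * c)).trace = (s * (c * a)).trace := by
  rw [← mul_assoc, ha, Matrix.trace_mul_cycle, Matrix.trace_mul_cycle, mul_assoc]

theorem trace_parity_mul_comm_of_odd {s a : Matrix ι ι F} (ha : s * a = -(a * s))
    (c : Matrix ι ι F) : (s * (a * c)).trace = -(s * (c * a)).trace := by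
  rw [← mul_assoc, ha, neg_mul, trace_neg, Matrix.trace_mul_cycle, Matrix.trace_mul_cycle,
    mul_assoc]

/-- The supertrace form `(a, b) ↦ tr (s a b)` is nondegenerate on `E ⊕ O`. -/
def SupertraceNondegenerate (s : Matrix ι ι F) (E O : Submodule F (Matrix ι ι F)) : Prop :=
  traceRadical s E E = ⊥ ∧ traceRadical s O O = ⊥

/-- The supertrace form `(a, b) ↦ tr (s a b)` vanishes on `E ⊕ O`. -/
def SupertraceIsotropic (s : Matrix ι ι F) (E O : Submodule F (Matrix ι ι F)) : Prop :=
  traceRadical s E E = E ∧ traceRadical s O O = O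

variable [DecidableEq ι] {s : Matrix ι ι F} {E O : Submodule F (Matrix ι ι F)}

theorem IsSimpleJordanSuper.supertraceNondegenerate_or_supertraceIsotropic
    (h : IsSimpleJordanSuper s E O) :
    SupertraceNondegenerate s E O ∨ SupertraceIsotropic s E O := by
  refine h.simple (traceRadical s E E) (traceRadical s O O) traceRadical_le traceRadical_le
    ?_ ?_ ?_ ?_
  · rintro a ha r ⟨hr, horth⟩
    refine ⟨h.even_even a ha r hr, fun b hb => ?_⟩
    have hab := horth _ (h.even_even a ha b hb)
    have hcyc := trace_parity_mul_comm_of_even (h.even_comm a ha) (r * b)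
    simp only [mul_add, add_mul, trace_add, mul_assoc] at *
    linear_combination hab + hcyc
  · rintro x hx r ⟨hr, horth⟩
    refine ⟨add_comm (r * x) _ ▸ h.even_odd r hr x hx, fun y hy => ?_⟩
    have hxy := horth _ (h.odd_odd x hx y hy)
    have hcyc := trace_parity_mul_comm_of_odd (h.odd_anticomm x hx) (r * y)
    simp only [mul_add, add_mul, mul_sub, trace_add, trace_sub, mul_assoc] at *
    linear_combination hxy + hcyc
  · rintro a ha r ⟨hr, horth⟩
    refine ⟨h.even_odd a ha r hr, fun b hb => ?_⟩
    have hab := horth _ (h.even_odd a ha b hb)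
    have hcyc := trace_parity_mul_comm_of_even (h.even_comm a ha) (r * b)
    simp only [mul_add, add_mul, trace_add, mul_assoc] at *
    linear_combination hab + hcyc
  · rintro x hx r ⟨hr, horth⟩
    refine ⟨h.odd_odd x hx r hr, fun b hb => ?_⟩
    have hbx := horth _ (h.even_odd b hb x hx)
    have hcyc := trace_parity_mul_comm_of_odd (h.odd_anticomm x hx) (r * b)
    simp only [mul_add, mul_sub, sub_mul, trace_add, trace_sub, mul_assoc] at *
    linear_combination hcyc - hbx

theorem SupertraceIsotropic.trace_parity_mul_eq_zero [CharZero F]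
    (hiso : SupertraceIsotropic s E O) (h : IsSimpleJordanSuper s E O) {a : Matrix ι ι F}
    (ha : a ∈ E) : (s * a).trace = 0 := by
  obtain ⟨u, hu, hunit, -⟩ := h.exists_unit
  rw [← (hunit a ha).1]
  exact (hiso.1.ge hu).2 a ha

theorem not_supertraceIsotropic_of_mem_sup [CharZero F] [Nonempty ι]
    {E' O' : Submodule F (Matrix ι ι F)} (h : IsSimpleJordanSuper s E O)
    (h' : IsSimpleJordanSuper s E' O') (hs : s ∈ E ⊔ E') (hiso : SupertraceIsotropic s E O) :
    ¬ SupertraceIsotropic s E' O' := by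
  intro hiso'
  obtain ⟨a, ha, b, hb, hab⟩ := Submodule.mem_sup.1 hs
  have htrace : (s * (a + b)).trace = 0 := by
    rw [mul_add, trace_add, hiso.trace_parity_mul_eq_zero h ha,
      hiso'.trace_parity_mul_eq_zero h' hb, add_zero]
  rw [hab, h.parity_mul_self, trace_one] at htrace
  exact Fintype.card_ne_zero (α := ι) (Nat.cast_eq_zero.1 htrace)

omit [DecidableEq ι] in
theorem eq_zero_or_eq_zero_of_forall_mul_mul_eq_zero {P Q : Matrix ι ι F}
    (h : ∀ X, P * X * Q = 0) : P = 0 ∨ Q = 0 := by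
  classical
  by_contra! hne
  obtain ⟨i, k, hik⟩ : ∃ i k, P i k ≠ 0 := by
    by_contra! hP; exact hne.1 (Matrix.ext hP)
  obtain ⟨l, j, hlj⟩ : ∃ l j, Q l j ≠ 0 := by
    by_contra! hQ; exact hne.2 (Matrix.ext hQ)
  have hentry := congrFun₂ (h (Matrix.single k l 1)) i j
  simp [Matrix.mul_apply, Matrix.single_apply, ite_and, hik, hlj] at hentry

open Module (finrank)

omit [DecidableEq ι] in
theorem finrank_add_finrank_le_of_trace_mul_eq_zero (K L : Submodule F (Matrix ι ι F))
    (h : ∀ k ∈ K, ∀ y ∈ L, (k * y).trace = 0) :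
    finrank F K + finrank F L ≤ finrank F (Matrix ι ι F) := by
  let B : LinearMap.BilinForm F (Matrix ι ι F) :=
    LinearMap.mk₂ F (fun a b => (a * b).trace)
      (by intros; simp [add_mul]) (by intros; simp) (by intros; simp [mul_add]) (by intros; simp)
  have hB : B.Nondegenerate := by
    have hrefl : LinearMap.IsRefl B := fun a b hab => (trace_mul_comm b a).trans hab
    exact hrefl.nondegenerate_iff_separatingLeft.2 fun a ha =>
      eq_zero_of_forall_trace_mul_eq_zero ha
  have hL : L ≤ B.orthogonal K := fun y hy k hk => h k hk y hy
  have hfinrank := LinearMap.BilinForm.finrank_orthogonal hB K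
  have hmono := Submodule.finrank_mono hL
  have hK := K.finrank_le
  omega

theorem SupertraceIsotropic.two_mul_finrank_le [NeZero (2 : F)] (hiso : SupertraceIsotropic s E O)
    (h : IsJordanSuper s E O) : 2 * finrank F O ≤ finrank F (anticommutantSub (F := F) s) := by
  have hcompl := isCompl_commutantSub_anticommutantSub (F := F) h.parity_mul_self
  have hs_left (x : Matrix ι ι F) : s * (s * x) = x := by
    rw [← mul_assoc, h.parity_mul_self, one_mul]
  let L := O.map (LinearMap.mulLeft F s)
  have hL_odd : L ≤ anticommutantSub s := by
    rintro _ ⟨x, hx, rfl⟩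
    rw [LinearMap.mulLeft_apply, mem_anticommutantSub, hs_left, h.odd_anticomm x hx, neg_mul,
      mul_assoc, h.parity_mul_self, mul_one, neg_neg]
  have hL_finrank : finrank F L = finrank F O :=
    (Submodule.equivMapOfInjective (LinearMap.mulLeft F s)
      (Function.LeftInverse.injective hs_left) O).finrank_eq.symm
  have horth : ∀ k ∈ commutantSub s ⊔ L, ∀ y ∈ O, (k * y).trace = 0 := by
    intro k hk y hy
    obtain ⟨a, ha, _, ⟨x, hx, rfl⟩, rfl⟩ := Submodule.mem_sup.1 hk
    have hay : s * (a * y) = -(a * y * s) := by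
      rw [← mul_assoc, mem_commutantSub.1 ha, mul_assoc, h.odd_anticomm y hy, mul_neg, mul_assoc]
    rw [add_mul, trace_add, trace_eq_zero_of_anticommute h.parity_mul_self hay, zero_add,
      LinearMap.mulLeft_apply, mul_assoc]
    exact (hiso.2.ge hx).2 y hy
  have hsup := Submodule.finrank_sup_add_finrank_inf_eq (commutantSub s) L
  rw [(hcompl.disjoint.mono_right hL_odd).eq_bot, finrank_bot] at hsup
  have htotal := Submodule.finrank_add_eq_of_isCompl hcompl
  have hbound := finrank_add_finrank_le_of_trace_mul_eq_zero _ O horth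
  omega

end SupertraceForm

section Primitive

variable {ι : Type*} [Fintype ι] [DecidableEq ι] {s e a f : Matrix ι ι F}
  {E O : Submodule F (Matrix ι ι F)}

/-- `e` is a primitive idempotent of the Jordan algebra `E`. Over an algebraically closed field the
Peirce component `e E e` of a primitive idempotent of a semisimple `E` is the line through `e`,
which is the form recorded here. -/
structure IsPrimitiveIdempotent (E : Submodule F (Matrix ι ι F)) (e : Matrix ι ι F) : Prop where
  mem : e ∈ E
  ne_zero : e ≠ 0
  idem : IsIdempotentElem e
  exists_smul_eq : ∀ a ∈ E, ∃ c : F, e * a * e = c • e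

/-- A complete system of orthogonal primitive idempotents of the Jordan algebra `E`. -/
structure IsPrimitiveFrame {κ : Type*} [Fintype κ] (E : Submodule F (Matrix ι ι F))
    (ε : κ → Matrix ι ι F) : Prop extends CompleteOrthogonalIdempotents ε where
  prim : ∀ i, IsPrimitiveIdempotent E (ε i)

omit [DecidableEq ι] in
theorem exists_eigenvector_of_mul_eq_self [IsAlgClosed F] (he : IsIdempotentElem e) (hne : e ≠ 0)
    (hea : e * a = a) : ∃ (μ : F) (w : ι → F), w ≠ 0 ∧ e *ᵥ w = w ∧ a *ᵥ w = μ • w := by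
  have hinv : ∀ w ∈ LinearMap.range e.mulVecLin, a.mulVecLin w ∈ LinearMap.range e.mulVecLin :=
    fun w _ => ⟨a *ᵥ w, by simp only [mulVecLin_apply, mulVec_mulVec, hea]⟩
  have hnontrivial : Nontrivial (LinearMap.range e.mulVecLin) :=
    Submodule.nontrivial_iff_ne_bot.2 fun hbot =>
      hne (eq_zero_of_rank_eq_zero (Submodule.finrank_eq_zero.2 hbot))
  obtain ⟨μ, hμ⟩ := Module.End.exists_eigenvalue (a.mulVecLin.restrict hinv)
  obtain ⟨⟨w, z, hz⟩, hw⟩ := hμ.exists_hasEigenvector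
  refine ⟨μ, w, fun hw0 => hw.2 (Subtype.ext hw0), ?_, congrArg Subtype.val hw.apply_eq_smul⟩
  rw [← hz, mulVecLin_apply, mulVec_mulVec, he]

variable [CharZero F]

omit [DecidableEq ι] in
theorem rank_add_rank_sub_of_isIdempotentElem (he : IsIdempotentElem e) (hf : IsIdempotentElem f)
    (hef : e * f = f) (hfe : f * e = f) : f.rank + (e - f).rank = e.rank := by
  refine Nat.cast_injective (R := F) ?_
  rw [Nat.cast_add, ← trace_eq_rank_of_isIdempotentElem he,
    ← trace_eq_rank_of_isIdempotentElem hf,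
    ← trace_eq_rank_of_isIdempotentElem (hf.sub he hfe hef), trace_sub,
    add_sub_cancel]

omit [DecidableEq ι] in
theorem rank_lt_of_isIdempotentElem (he : IsIdempotentElem e) (hf : IsIdempotentElem f)
    (hef : e * f = f) (hfe : f * e = f) (hne : f ≠ e) : f.rank < e.rank := by
  have hadd := rank_add_rank_sub_of_isIdempotentElem he hf hef hfe
  have hpos : (e - f).rank ≠ 0 := fun h0 => hne (sub_eq_zero.1 (eq_zero_of_rank_eq_zero h0)).symm
  omega

namespace IsSimpleJordanSuper

variable [IsAlgClosed F]

section Corner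

variable (h : IsSimpleJordanSuper s E O) (heE : e ∈ E) (he : IsIdempotentElem e) (hne : e ≠ 0)
  (hmin : ∀ f ∈ E, IsIdempotentElem f → e * f = f → f * e = f → f = 0 ∨ f = e)
include h heE he hne hmin

theorem exists_isNilpotent_sub_smul (ha : a ∈ E) (hea : e * a = a) (hae : a * e = a) :
    ∃ μ : F, IsNilpotent (a - μ • e) := by
  obtain ⟨μ, w, hw, hew, haw⟩ := exists_eigenvector_of_mul_eq_self he hne hea
  refine ⟨μ, by_contra fun hnil => ?_⟩
  set c := a - μ • e with hc
  have hec : e * c = c := by rw [hc, mul_sub, hea, mul_smul_comm, he]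
  have hce : c * e = c := by rw [hc, sub_mul, hae, smul_mul_assoc, he]
  have hcw : c *ᵥ w = 0 := by rw [hc, sub_mulVec, haw, smul_mulVec, hew, sub_self]
  obtain ⟨p, hp_ne, hp_idem⟩ :=
    exists_aeval_mul_X_pow_isIdempotentElem (Algebra.IsIntegral.isIntegral (R := F) c) hnil 1
  have hp_mem := h.aeval_mul_X_pow_succ_mem (E.sub_mem ha (E.smul_mem μ heE)) p 0
  have hp_right : Polynomial.aeval c (p * Polynomial.X ^ 1) = Polynomial.aeval c p * c := by simp
  have hp_left : Polynomial.aeval c (p * Polynomial.X ^ 1) = c * Polynomial.aeval c p := by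
    rw [mul_comm]; simp
  rcases hmin _ hp_mem hp_idem (by rw [zero_add, hp_left, ← mul_assoc, hec])
    (by rw [zero_add, hp_right, mul_assoc, hce]) with hzero | heq
  · exact hp_ne hzero
  · refine hw ?_
    rw [← hew, ← heq, zero_add, hp_right, ← mulVec_mulVec, hcw, mulVec_zero]

theorem trace_mul_eq_zero_of_corner {b : Matrix ι ι F} (ha : a ∈ E) (hea : e * a = a)
    (hae : a * e = a) (hat : a.trace = 0) (hb : b ∈ E) (heb : e * b = b) (hbe : b * e = b)
    (hbt : b.trace = 0) : (a * b).trace = 0 := by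
  have htrace_e : e.trace ≠ 0 := mt (eq_zero_of_isIdempotentElem_of_trace_eq_zero he) hne
  have hsq (c) (hc : c ∈ E) (hec : e * c = c) (hce : c * e = c) (hct : c.trace = 0) :
      (c * c).trace = 0 := by
    obtain ⟨μ, hμ⟩ := h.exists_isNilpotent_sub_smul heE he hne hmin hc hec hce
    have hμ_trace := (isNilpotent_trace_of_isNilpotent hμ).eq_zero
    rw [trace_sub, hct, trace_smul, zero_sub, neg_eq_zero, smul_eq_mul,
      mul_eq_zero_iff_right htrace_e] at hμ_trace
    rw [hμ_trace, zero_smul, sub_zero] at hμ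
    exact (isNilpotent_trace_of_isNilpotent (sq c ▸ hμ.pow_of_pos two_ne_zero)).eq_zero
  have hadd := hsq (a + b) (E.add_mem ha hb) (by rw [mul_add, hea, heb])
    (by rw [add_mul, hae, hbe]) (by rw [trace_add, hat, hbt, add_zero])
  simp only [mul_add, add_mul, trace_add, hsq a ha hea hae hat, hsq b hb heb hbe hbt, zero_add,
    add_zero, trace_mul_comm b a] at hadd
  exact eq_zero_of_add_self_eq_zero F hadd

theorem isPrimitiveIdempotent_of_minimal : IsPrimitiveIdempotent E e := by
  have htrace_e : e.trace ≠ 0 := mt (eq_zero_of_isIdempotentElem_of_trace_eq_zero he) hne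
  let traceless (a : Matrix ι ι F) := e * a * e - ((e * a * e).trace / e.trace) • e
  have mem_traceless {a} (ha : a ∈ E) : traceless a ∈ E :=
    E.sub_mem (h.mul_mul_self_mem_even heE ha) (E.smul_mem _ heE)
  have left_traceless (a) : e * traceless a = traceless a := by
    rw [mul_sub, mul_smul_comm, he, ← mul_assoc, ← mul_assoc, he]
  have traceless_right (a) : traceless a * e = traceless a := by
    rw [sub_mul, smul_mul_assoc, he, mul_assoc, he]
  have trace_traceless (a) : (traceless a).trace = 0 := by
    rw [trace_sub, trace_smul, smul_eq_mul, div_mul_cancel₀ _ htrace_e, sub_self]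
  refine ⟨heE, hne, he, fun a ha => ⟨_, sub_eq_zero.1 (h.eq_zero_of_forall_trace_mul_eq_zero
    (mem_traceless ha) fun b hb => ?_)⟩⟩
  calc (traceless a * b).trace = (e * traceless a * e * b).trace := by
        rw [left_traceless, traceless_right]
    _ = (traceless a * (e * b * e)).trace := by
        rw [mul_assoc, mul_assoc, trace_mul_comm]; simp only [mul_assoc]
    _ = (traceless a * traceless b).trace
          + (traceless a * (((e * b * e).trace / e.trace) • e)).trace := by
        rw [← trace_add, ← mul_add, sub_add_cancel]
    _ = 0 := by
        rw [h.trace_mul_eq_zero_of_corner heE he hne hmin (mem_traceless ha) (left_traceless a)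
          (traceless_right a) (trace_traceless a) (mem_traceless hb) (left_traceless b)
          (traceless_right b) (trace_traceless b), mul_smul_comm, traceless_right, trace_smul,
          trace_traceless, smul_zero, add_zero]

end Corner

theorem exists_isPrimitiveIdempotent_mul_eq (h : IsSimpleJordanSuper s E O) (heE : e ∈ E)
    (he : IsIdempotentElem e) (hne : e ≠ 0) :
    ∃ f, IsPrimitiveIdempotent E f ∧ e * f = f ∧ f * e = f := by
  induction hr : e.rank using Nat.strong_induction_on generalizing e with
  | _ r ih =>
    by_cases hmin : ∀ f ∈ E, IsIdempotentElem f → e * f = f → f * e = f → f = 0 ∨ f = e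
    · exact ⟨e, h.isPrimitiveIdempotent_of_minimal heE he hne hmin, he, he⟩
    · push Not at hmin
      obtain ⟨g, hgE, hg, heg, hge, hg_ne, hg_ne'⟩ := hmin
      obtain ⟨f, hf, hgf, hfg⟩ :=
        ih g.rank (hr ▸ rank_lt_of_isIdempotentElem he hg heg hge hg_ne') hgE hg hg_ne rfl
      exact ⟨f, hf, by rw [← hgf, ← mul_assoc, heg], by rw [← hfg, mul_assoc, hge]⟩

theorem exists_orthogonalIdempotents_sum_eq (h : IsSimpleJordanSuper s E O) (heE : e ∈ E)
    (he : IsIdempotentElem e) :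
    ∃ (κ : Type) (_ : Fintype κ) (ε : κ → Matrix ι ι F),
      OrthogonalIdempotents ε ∧ (∀ i, IsPrimitiveIdempotent E (ε i)) ∧ ∑ i, ε i = e := by
  induction hr : e.rank using Nat.strong_induction_on generalizing e with
  | _ r ih =>
    by_cases hne : e = 0
    · exact ⟨Empty, inferInstance, Empty.elim, ⟨nofun, nofun⟩, nofun, by simp [hne]⟩
    · obtain ⟨f, hf, hef, hfe⟩ := h.exists_isPrimitiveIdempotent_mul_eq heE he hne
      have hsub := hf.idem.sub he hfe hef
      have hlt : (e - f).rank < r := by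
        have hadd := rank_add_rank_sub_of_isIdempotentElem he hf.idem hef hfe
        have hpos : f.rank ≠ 0 := mt eq_zero_of_rank_eq_zero hf.ne_zero
        omega
      obtain ⟨κ, _, ε, hε, hprim, hsum⟩ := ih _ hlt (E.sub_mem heE hf.mem) hsub rfl
      refine ⟨Option κ, inferInstance, (Option.elim · f ε), hε.option f hf.idem ?_ ?_,
        Option.rec hf hprim, ?_⟩
      · rw [hsum, mul_sub, hfe, hf.idem, sub_self]
      · rw [hsum, sub_mul, hef, hf.idem, sub_self]
      · simp [hsum]

theorem exists_isPrimitiveFrame (h : IsSimpleJordanSuper s E O) (hone : 1 ∈ E) :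
    ∃ (κ : Type) (_ : Fintype κ) (ε : κ → Matrix ι ι F), IsPrimitiveFrame E ε := by
  obtain ⟨κ, _, ε, hε, hprim, hsum⟩ := h.exists_orthogonalIdempotents_sum_eq hone (mul_one 1)
  exact ⟨κ, _, ε, ⟨hε, hsum⟩, hprim⟩

end IsSimpleJordanSuper

end Primitive

section Peirce

variable {ι κ : Type*} [Fintype ι] {s x y z : Matrix ι ι F} {ε : κ → Matrix ι ι F} {i j k l : κ}

/-- The off-diagonal Peirce component `ε i · M · ε j ⊕ ε j · M · ε i` of the matrix algebra with
respect to orthogonal idempotents `ε`. Meaningful for `i ≠ j` only. -/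
def peirceComponent (ε : κ → Matrix ι ι F) (i j : κ) : Submodule F (Matrix ι ι F) where
  carrier := {x | ε i * x = x * ε j ∧ ε j * x = x * ε i ∧ ε i * x + ε j * x = x}
  zero_mem' := by simp
  add_mem' := fun ⟨hxl, hxr, hx⟩ ⟨hyl, hyr, hy⟩ =>
    ⟨by rw [mul_add, hxl, hyl, add_mul], by rw [mul_add, hxr, hyr, add_mul],
      by rw [mul_add, mul_add, add_add_add_comm, hx, hy]⟩
  smul_mem' := fun c x ⟨hxl, hxr, hx⟩ =>
    ⟨by rw [mul_smul_comm, hxl, smul_mul_assoc], by rw [mul_smul_comm, hxr, smul_mul_assoc],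
      by rw [mul_smul_comm, mul_smul_comm, ← smul_add, hx]⟩

theorem peirceComponent_comm (ε : κ → Matrix ι ι F) (i j : κ) :
    peirceComponent ε i j = peirceComponent ε j i := by
  ext x
  exact ⟨fun ⟨hl, hr, hx⟩ => ⟨hr, hl, by rw [add_comm, hx]⟩,
    fun ⟨hl, hr, hx⟩ => ⟨hr, hl, by rw [add_comm, hx]⟩⟩

theorem idempotent_mul_mul_comm (hx : x ∈ peirceComponent ε i j) (hy : y ∈ peirceComponent ε i j) :
    ε i * (x * y) = x * y * ε i := by
  rw [← mul_assoc, hx.1, mul_assoc, hy.2.1, mul_assoc]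

theorem mul_add_mul_eq_of_mem_peirceComponent (hx : x ∈ peirceComponent ε i j) :
    x * ε i + x * ε j = x := by
  rw [← hx.1, ← hx.2.1, add_comm, hx.2.2]

/-- The projection onto `peirceComponent ε i j` along the other Peirce components, for orthogonal
idempotents `ε` and `i ≠ j`. -/
def peirceProj (ε : κ → Matrix ι ι F) (i j : κ) : Matrix ι ι F →ₗ[F] Matrix ι ι F :=
  LinearMap.mulLeftRight F (ε i, ε j) + LinearMap.mulLeftRight F (ε j, ε i)

theorem peirceProj_apply (x : Matrix ι ι F) :
    peirceProj ε i j x = ε i * x * ε j + ε j * x * ε i := rfl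

theorem trace_mul_peirceProj (hi : s * ε i = ε i * s) (hj : s * ε j = ε j * s)
    (x y : Matrix ι ι F) :
    (s * (x * peirceProj ε i j y)).trace = (s * (peirceProj ε i j x * y)).trace := by
  have hmove {p q : Matrix ι ι F} (hq : s * q = q * s) :
      (s * (x * (p * y * q))).trace = (s * (q * x * p * y)).trace := by
    simpa only [mul_assoc] using (trace_parity_mul_comm_of_even hq (x * p * y)).symm
  simp only [peirceProj_apply, mul_add, add_mul, trace_add, hmove hi, hmove hj]
  exact add_comm _ _

section Orthogonal

variable [DecidableEq ι] (hε : OrthogonalIdempotents ε)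
include hε

theorem peirceProj_mem (hij : i ≠ j) (x : Matrix ι ι F) :
    peirceProj ε i j x ∈ peirceComponent ε i j := by
  have hii : ε i * ε i = ε i := hε.idem i
  have hjj : ε j * ε j = ε j := hε.idem j
  refine ⟨?_, ?_, ?_⟩ <;>
    simp only [peirceProj_apply, mul_add, add_mul, ← mul_assoc, hii, hjj, hε.ortho hij,
      hε.ortho hij.symm, zero_mul, add_zero, zero_add] <;>
    simp only [mul_assoc, hii, hjj, hε.ortho hij, hε.ortho hij.symm, mul_zero, add_zero, zero_add]

theorem peirceProj_eq_self (hx : x ∈ peirceComponent ε i j) : peirceProj ε i j x = x := by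
  rw [peirceProj_apply, mul_assoc, ← hx.1, mul_assoc, ← hx.2.1, ← mul_assoc, ← mul_assoc,
    hε.idem i, hε.idem j, hx.2.2]

theorem idempotent_mul_eq_zero_of_mem_peirceComponent (hx : x ∈ peirceComponent ε i j)
    (hki : k ≠ i) (hkj : k ≠ j) : ε k * x = 0 := by
  rw [← hx.2.2, mul_add, ← mul_assoc, ← mul_assoc, hε.ortho hki, hε.ortho hkj, zero_mul, add_zero]

theorem mul_idempotent_eq_zero_of_mem_peirceComponent (hx : x ∈ peirceComponent ε i j)
    (hki : k ≠ i) (hkj : k ≠ j) : x * ε k = 0 := by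
  rw [← mul_add_mul_eq_of_mem_peirceComponent hx, add_mul, mul_assoc, mul_assoc,
    hε.ortho hki.symm, hε.ortho hkj.symm, mul_zero, add_zero]

theorem peirceProj_eq_zero (hx : x ∈ peirceComponent ε k l) (hij : i ≠ j)
    (hne : s(k, l) ≠ s(i, j)) : peirceProj ε i j x = 0 := by
  have hout : (i ≠ k ∧ i ≠ l) ∨ (j ≠ k ∧ j ≠ l) := by
    rw [Ne, Sym2.eq_iff] at hne
    by_contra hin
    grind
  rw [peirceProj_apply]
  rcases hout with ⟨hk, hl⟩ | ⟨hk, hl⟩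
  · rw [idempotent_mul_eq_zero_of_mem_peirceComponent hε hx hk hl, mul_assoc (ε j),
      mul_idempotent_eq_zero_of_mem_peirceComponent hε hx hk hl, zero_mul, mul_zero, add_zero]
  · rw [idempotent_mul_eq_zero_of_mem_peirceComponent hε hx hk hl, mul_assoc (ε i),
      mul_idempotent_eq_zero_of_mem_peirceComponent hε hx hk hl, zero_mul, mul_zero, add_zero]

theorem mul_mul_eq_zero_of_peirceProj_eq_zero (hij : i ≠ j) (hx : peirceProj ε i j x = 0) :
    ε i * x * ε j = 0 := by
  calc ε i * x * ε j = ε i * peirceProj ε i j x := by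
        rw [peirceProj_apply, mul_add, ← mul_assoc, ← mul_assoc, hε.idem i, ← mul_assoc,
          ← mul_assoc, hε.ortho hij, zero_mul, zero_mul, add_zero]
    _ = 0 := by rw [hx, mul_zero]

theorem eq_zero_of_commute_of_mem_peirceComponent (hx : x ∈ peirceComponent ε i j) (hij : i ≠ j)
    (hcomm : ε i * x = x * ε i) : x = 0 := by
  have hzero : ε i * x = 0 := by
    rw [← hε.idem i, mul_assoc, hcomm, ← hx.2.1, ← mul_assoc, hε.ortho hij, zero_mul]
  rw [← hx.2.2, hx.2.1, ← hcomm, hzero, add_zero]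

section Consecutive

variable (hx : x ∈ peirceComponent ε i j) (hy : y ∈ peirceComponent ε j k)
include hx hy

theorem idempotent_mul_mul_of_mem_peirceComponent (hij : i ≠ j) (hik : i ≠ k) :
    ε i * (x * y) = x * y := by
  conv_rhs => rw [← hx.2.2, add_mul, hx.2.1, mul_assoc x,
    idempotent_mul_eq_zero_of_mem_peirceComponent hε hy hij hik, mul_zero, add_zero, mul_assoc]

theorem mul_mul_idempotent_of_mem_peirceComponent (hjk : j ≠ k) (hik : i ≠ k) :
    x * y * ε k = x * y := by
  conv_rhs => rw [← mul_add_mul_eq_of_mem_peirceComponent hy, mul_add, ← hy.2.1, ← mul_assoc x,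
    mul_idempotent_eq_zero_of_mem_peirceComponent hε hx hik.symm hjk.symm, zero_mul, zero_add,
    ← mul_assoc]

theorem mul_add_smul_mul_mem_peirceComponent (hij : i ≠ j) (hjk : j ≠ k) (hik : i ≠ k) (c : F) :
    x * y + c • (y * x) ∈ peirceComponent ε i k := by
  have hyx_left : ε k * (y * x) = y * x := idempotent_mul_mul_of_mem_peirceComponent hε
    (peirceComponent_comm ε j k ▸ hy) (peirceComponent_comm ε i j ▸ hx) hjk.symm hik.symm
  have hyx_right : y * x * ε i = y * x := mul_mul_idempotent_of_mem_peirceComponent hε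
    (peirceComponent_comm ε j k ▸ hy) (peirceComponent_comm ε i j ▸ hx) hij.symm hik.symm
  have hzero : ε i * (y * x) = 0 ∧ ε k * (x * y) = 0 ∧ x * y * ε i = 0 ∧ y * x * ε k = 0 := by
    refine ⟨?_, ?_, ?_, ?_⟩
    · rw [← mul_assoc, idempotent_mul_eq_zero_of_mem_peirceComponent hε hy hij hik, zero_mul]
    · rw [← mul_assoc, idempotent_mul_eq_zero_of_mem_peirceComponent hε hx hik.symm hjk.symm,
        zero_mul]
    · rw [mul_assoc, mul_idempotent_eq_zero_of_mem_peirceComponent hε hy hij hik, mul_zero]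
    · rw [mul_assoc, mul_idempotent_eq_zero_of_mem_peirceComponent hε hx hik.symm hjk.symm,
        mul_zero]
  refine ⟨?_, ?_, ?_⟩ <;>
    simp only [mul_add, add_mul, mul_smul_comm, smul_mul_assoc, hyx_left, hyx_right, hzero,
      idempotent_mul_mul_of_mem_peirceComponent hε hx hy hij hik,
      mul_mul_idempotent_of_mem_peirceComponent hε hx hy hjk hik, smul_zero, add_zero, zero_add]

theorem mul_eq_zero_and_mul_eq_zero_of_add_smul_eq_zero (hij : i ≠ j) (hik : i ≠ k)
    {c : F} (hc : c ≠ 0) (hxy : x * y + c • (y * x) = 0) : x * y = 0 ∧ y * x = 0 := by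
  have hzero : x * y = 0 := by
    rw [← idempotent_mul_mul_of_mem_peirceComponent hε hx hy hij hik,
      eq_neg_of_add_eq_zero_left hxy,
      mul_neg, mul_smul_comm, ← mul_assoc,
      idempotent_mul_eq_zero_of_mem_peirceComponent hε hy hij hik, zero_mul, smul_zero, neg_zero]
  rw [hzero, zero_add, smul_eq_zero] at hxy
  exact ⟨hzero, hxy.resolve_left hc⟩

end Consecutive

end Orthogonal

end Peirce

section PeirceFrame

variable {ι κ : Type*} [Fintype ι] [DecidableEq ι] [Fintype κ] {s x y u : Matrix ι ι F}
  {E O : Submodule F (Matrix ι ι F)} {ε : κ → Matrix ι ι F} {i j k : κ}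

omit [DecidableEq ι] in
theorem trace_parity_mul_eq_zero_of_commute [NeZero (2 : F)] (hx : s * x = -(x * s))
    (hxy : x * y = y * x) : (s * (x * y)).trace = 0 := by
  have hskew := trace_parity_mul_comm_of_odd hx y
  rw [← hxy, eq_neg_iff_add_eq_zero] at hskew
  exact eq_zero_of_add_self_eq_zero F hskew

namespace IsPrimitiveFrame

variable (hε : IsPrimitiveFrame E ε)
include hε

theorem exists_eq_smul_add_smul (hx : x ∈ peirceComponent ε i j) (hy : y ∈ peirceComponent ε i j)
    {c : F} (hE : x * y + c • (y * x) ∈ E) :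
    ∃ α β : F, x * y + c • (y * x) = α • ε i + β • ε j := by
  set z := x * y + c • (y * x) with hz
  have hcomm_i : ε i * z = z * ε i := by
    rw [hz, mul_add, mul_smul_comm, idempotent_mul_mul_comm hx hy, idempotent_mul_mul_comm hy hx,
      add_mul, smul_mul_assoc]
  have hcomm_j : ε j * z = z * ε j := by
    rw [peirceComponent_comm] at hx hy
    rw [hz, mul_add, mul_smul_comm, idempotent_mul_mul_comm hx hy, idempotent_mul_mul_comm hy hx,
      add_mul, smul_mul_assoc]
  have hsum : ε i * z + ε j * z = z := by
    rw [hz, ← add_mul, mul_add, mul_smul_comm, ← mul_assoc, ← mul_assoc, add_mul, hx.2.2, add_mul,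
      hy.2.2]
  obtain ⟨α, hα⟩ := (hε.prim i).exists_smul_eq z hE
  obtain ⟨β, hβ⟩ := (hε.prim j).exists_smul_eq z hE
  rw [mul_assoc, ← hcomm_i, ← mul_assoc, hε.idem i] at hα
  rw [mul_assoc, ← hcomm_j, ← mul_assoc, hε.idem j] at hβ
  exact ⟨α, β, by rw [← hα, ← hβ, hsum]⟩

theorem exists_eq_smul_add_of_mul_self (hij : i ≠ j) (hu : u ∈ peirceComponent ε i j)
    (huE : u * u ∈ E) : ∃ α : F, u * u = α • (ε i + ε j) := by
  obtain ⟨α, β, hαβ⟩ := hε.exists_eq_smul_add_smul (c := 0) hu hu (by simpa using huE)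
  rw [zero_smul, add_zero] at hαβ
  rcases eq_or_ne α β with rfl | hne
  · exact ⟨α, by rw [hαβ, smul_add]⟩
  · have hcomm : (β - α) • (ε i * u - u * ε i) = 0 := by
      have hassoc := mul_assoc u u u
      rw [hαβ, ← sub_eq_zero] at hassoc
      simp only [mul_add, add_mul, mul_smul_comm, smul_mul_assoc, hu.2.1, ← hu.1] at hassoc
      rw [← neg_eq_zero, ← hassoc]
      module
    have hzero := eq_zero_of_commute_of_mem_peirceComponent hε.toOrthogonalIdempotents hu hij
      (sub_eq_zero.1 ((smul_eq_zero.1 hcomm).resolve_left (sub_ne_zero.2 hne.symm)))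
    exact ⟨0, by rw [hzero, zero_mul, zero_smul]⟩

theorem eq_sum_sum_mul_mul (x : Matrix ι ι F) : x = ∑ i, ∑ j, ε i * x * ε j := by
  simp only [← Finset.mul_sum, ← Finset.sum_mul, hε.complete, one_mul, mul_one]

variable [CharZero F]

theorem trace_ne_zero (i : κ) : (ε i).trace ≠ 0 :=
  mt (eq_zero_of_isIdempotentElem_of_trace_eq_zero (hε.idem i)) (hε.prim i).ne_zero

theorem trace_add_trace_ne_zero (i j : κ) : (ε i).trace + (ε j).trace ≠ 0 := by
  have hpos : (ε i).rank ≠ 0 := mt eq_zero_of_rank_eq_zero (hε.prim i).ne_zero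
  rw [trace_eq_rank_of_isIdempotentElem (hε.idem i), trace_eq_rank_of_isIdempotentElem (hε.idem j)]
  norm_cast
  omega

end IsPrimitiveFrame

/-- A generator of the traceless matrices in the span of `ε i` and `ε j`. -/
def peirceCoroot (ε : κ → Matrix ι ι F) (i j : κ) : Matrix ι ι F :=
  (ε j).trace • ε i - (ε i).trace • ε j

omit [DecidableEq ι] [Fintype κ] in
theorem peirceCoroot_commutator (hx : x ∈ peirceComponent ε i j) :
    peirceCoroot ε i j * x - x * peirceCoroot ε i j
      = ((ε i).trace + (ε j).trace) • (ε i * x - x * ε i) := by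
  simp only [peirceCoroot, sub_mul, mul_sub, smul_mul_assoc, mul_smul_comm, hx.2.1, ← hx.1]
  module

namespace IsJordanSuper

variable (h : IsJordanSuper s E O) (hε : IsPrimitiveFrame E ε)
include h hε

theorem peirceProj_mem_odd [NeZero (2 : F)] (hx : x ∈ O) (i j : κ) : peirceProj ε i j x ∈ O :=
  h.mul_mul_add_mem_odd (hε.prim i).mem (hε.prim j).mem hx

theorem peirceProj_mem_even [NeZero (2 : F)] (hx : x ∈ E) (i j : κ) : peirceProj ε i j x ∈ E :=
  h.mul_mul_add_mem_even (hε.prim i).mem (hε.prim j).mem hx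

variable [CharZero F]

theorem exists_commutator_eq_smul_peirceCoroot (hx : x ∈ O ⊓ peirceComponent ε i j)
    (hy : y ∈ O ⊓ peirceComponent ε i j) : ∃ c : F, x * y - y * x = c • peirceCoroot ε i j := by
  have hsub : x * y + (-1 : F) • (y * x) = x * y - y * x := by module
  obtain ⟨α, β, hαβ⟩ := hε.exists_eq_smul_add_smul (c := -1) hx.2 hy.2
    (hsub ▸ h.odd_odd x hx.1 y hy.1)
  rw [hsub] at hαβ
  have htrace : α * (ε i).trace + β * (ε j).trace = 0 := by
    rw [← smul_eq_mul, ← smul_eq_mul, ← trace_smul, ← trace_smul, ← trace_add, ← hαβ, trace_sub,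
      trace_mul_comm, sub_self]
  have hj := hε.trace_ne_zero j
  refine ⟨α / (ε j).trace, ?_⟩
  rw [hαβ, peirceCoroot, smul_sub, smul_smul, smul_smul, div_mul_cancel₀ _ hj, sub_eq_add_neg,
    ← neg_smul, div_mul_eq_mul_div, eq_neg_of_add_eq_zero_left htrace, neg_div, neg_neg,
    mul_div_cancel_right₀ _ hj]

theorem trace_mul_trace_parity_of_commutator_ne_zero (hij : i ≠ j)
    (hx : x ∈ O ⊓ peirceComponent ε i j) (hy : y ∈ O ⊓ peirceComponent ε i j)
    (hxy : x * y - y * x ≠ 0) :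
    (ε j).trace * (s * ε i).trace = -((ε i).trace * (s * ε j).trace) := by
  obtain ⟨c, hc⟩ := h.exists_commutator_eq_smul_peirceCoroot hε hx hy
  have hswap {x y} (hx : x ∈ O ⊓ peirceComponent ε i j) :
      (s * (ε i * (x * y))).trace = -(s * (ε j * (y * x))).trace := by
    have hodd := trace_parity_mul_comm_of_odd (h.odd_anticomm x hx.1) (ε j * y)
    rwa [← mul_assoc x, ← hx.2.1, mul_assoc, mul_assoc] at hodd
  have hcomm : (s * (ε i * (x * y - y * x))).trace = (s * (ε j * (x * y - y * x))).trace := by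
    simp only [mul_sub, trace_sub, hswap hx, hswap hy]
    ring
  have hii : ε i * ε i = ε i := hε.idem i
  have hjj : ε j * ε j = ε j := hε.idem j
  have hc0 : c ≠ 0 := fun h0 => hxy (by rw [hc, h0, zero_smul])
  refine mul_left_cancel₀ hc0 ?_
  simpa only [hc, peirceCoroot, mul_sub, mul_smul_comm, hii, hjj, hε.ortho hij, hε.ortho hij.symm,
    smul_zero, sub_zero, zero_sub, mul_neg, trace_smul, trace_neg, smul_neg,
    smul_eq_mul] using hcomm

theorem mem_span_pair_of_commutator_ne_zero (hij : i ≠ j) {z : Matrix ι ι F}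
    (hx : x ∈ O ⊓ peirceComponent ε i j) (hy : y ∈ O ⊓ peirceComponent ε i j)
    (hz : z ∈ O ⊓ peirceComponent ε i j) (hxy : x * y - y * x ≠ 0) :
    z ∈ Submodule.span F {x, y} := by
  obtain ⟨α, hα⟩ := h.exists_commutator_eq_smul_peirceCoroot hε hx hy
  obtain ⟨β, hβ⟩ := h.exists_commutator_eq_smul_peirceCoroot hε hy hz
  obtain ⟨γ, hγ⟩ := h.exists_commutator_eq_smul_peirceCoroot hε hz hx
  have hα0 : α ≠ 0 := fun h0 => hxy (by rw [hα, h0, zero_smul])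
  set w := α • z + β • x + γ • y with hw
  have hw_mem : w ∈ peirceComponent ε i j :=
    add_mem (add_mem (Submodule.smul_mem _ _ hz.2) (Submodule.smul_mem _ _ hx.2))
      (Submodule.smul_mem _ _ hy.2)
  have hjacobi : peirceCoroot ε i j * w - w * peirceCoroot ε i j = 0 := by
    calc peirceCoroot ε i j * w - w * peirceCoroot ε i j
        = ((x * y - y * x) * z - z * (x * y - y * x))
          + ((y * z - z * y) * x - x * (y * z - z * y))
          + ((z * x - x * z) * y - y * (z * x - x * z)) := by
          rw [hα, hβ, hγ, hw]
          simp only [mul_add, add_mul, mul_smul_comm, smul_mul_assoc]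
          module
      _ = 0 := by noncomm_ring
  rw [peirceCoroot_commutator hw_mem, smul_eq_zero, or_iff_right (hε.trace_add_trace_ne_zero i j),
    sub_eq_zero] at hjacobi
  have hw0 := eq_zero_of_commute_of_mem_peirceComponent hε.toOrthogonalIdempotents hw_mem hij
    hjacobi
  refine Submodule.mem_span_pair.2 ⟨-(α⁻¹ * β), -(α⁻¹ * γ), ?_⟩
  calc -(α⁻¹ * β) • x + -(α⁻¹ * γ) • y = (α⁻¹ * α) • z - α⁻¹ • w := by rw [hw]; module
    _ = z := by rw [hw0, inv_mul_cancel₀ hα0, one_smul, smul_zero, sub_zero]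

end IsJordanSuper

namespace SupertraceNondegenerate

variable [CharZero F] (hnd : SupertraceNondegenerate s E O) (h : IsJordanSuper s E O)
  (hε : IsPrimitiveFrame E ε)
include hnd h hε

theorem exists_commutator_ne_zero (hij : i ≠ j) (hx : x ∈ O ⊓ peirceComponent ε i j)
    (hx0 : x ≠ 0) : ∃ y ∈ O ⊓ peirceComponent ε i j, x * y - y * x ≠ 0 := by
  by_contra! hcomm
  have hrad : x ∈ traceRadical s O O := by
    refine ⟨hx.1, fun y hy => ?_⟩
    rw [← peirceProj_eq_self hε.toOrthogonalIdempotents hx.2,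
      ← trace_mul_peirceProj (h.even_comm _ (hε.prim i).mem) (h.even_comm _ (hε.prim j).mem)]
    exact trace_parity_mul_eq_zero_of_commute (h.odd_anticomm x hx.1) (sub_eq_zero.1 (hcomm _
      ⟨h.peirceProj_mem_odd hε hy i j, peirceProj_mem hε.toOrthogonalIdempotents hij y⟩))
  exact hx0 ((Submodule.mem_bot F).1 (hnd.2 ▸ hrad))

theorem finrank_odd_inf_peirceComponent (hij : i ≠ j) (hne : O ⊓ peirceComponent ε i j ≠ ⊥) :
    Module.finrank F ↥(O ⊓ peirceComponent ε i j) = 2 := by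
  obtain ⟨x, hx, hx0⟩ := Submodule.exists_mem_ne_zero_of_ne_bot hne
  obtain ⟨y, hy, hxy⟩ := hnd.exists_commutator_ne_zero h hε hij hx hx0
  have hspan : O ⊓ peirceComponent ε i j = Submodule.span F (Set.range ![x, y]) := by
    rw [range_cons, range_cons, range_empty, Set.union_empty, Set.singleton_union]
    refine le_antisymm (fun z hz => h.mem_span_pair_of_commutator_ne_zero hε hij hx hy hz hxy)
      (Submodule.span_le.2 ?_)
    rintro z (rfl | rfl)
    exacts [hx, hy]
  have hindep : LinearIndependent F ![x, y] := by
    refine LinearIndependent.pair_iff.2 fun α β hαβ => ⟨?_, ?_⟩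
    · refine (smul_eq_zero.1 (?_ : α • (x * y - y * x) = 0)).resolve_right hxy
      calc α • (x * y - y * x) = (α • x + β • y) * y - y * (α • x + β • y) := by
            simp only [mul_add, add_mul, mul_smul_comm, smul_mul_assoc]; module
        _ = 0 := by rw [hαβ, zero_mul, mul_zero, sub_zero]
    · refine (smul_eq_zero.1 (?_ : β • (x * y - y * x) = 0)).resolve_right hxy
      calc β • (x * y - y * x) = x * (α • x + β • y) - (α • x + β • y) * x := by
            simp only [mul_add, add_mul, mul_smul_comm, smul_mul_assoc]; module
        _ = 0 := by rw [hαβ, zero_mul, mul_zero, sub_zero]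
  rw [hspan, finrank_span_eq_card hindep, Fintype.card_fin]

theorem idempotent_mul_mul_idempotent_eq_zero (i : κ) (hx : x ∈ O) : ε i * x * ε i = 0 := by
  have hii : ε i * ε i = ε i := hε.idem i
  have hproj {x} (hx : x ∈ O) : ε i * x * ε i ∈ O := h.mul_mul_self_mem_odd (hε.prim i).mem hx
  have hcomm {y} (hy : y ∈ O) :
      ε i * x * ε i * (ε i * y * ε i) - ε i * y * ε i * (ε i * x * ε i) = 0 := by
    obtain ⟨c, hc⟩ := (hε.prim i).exists_smul_eq _ (h.odd_odd _ (hproj hx) _ (hproj hy))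
    have hcorner : ε i * x * ε i * (ε i * y * ε i) - ε i * y * ε i * (ε i * x * ε i)
        = c • ε i := by
      rw [← hc]
      simp only [mul_sub, sub_mul, ← mul_assoc, hii]
      simp only [mul_assoc, hii]
    have htrace := congrArg trace hcorner
    rw [trace_sub, trace_mul_comm, sub_self, trace_smul, eq_comm, smul_eq_zero,
      or_iff_left (hε.trace_ne_zero i)] at htrace
    rw [hcorner, htrace, zero_smul]
  have hrad : ε i * x * ε i ∈ traceRadical s O O := by
    refine ⟨hproj hx, fun y hy => ?_⟩
    have hcyc := trace_parity_mul_comm_of_even (h.even_comm _ (hε.prim i).mem)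
      (ε i * x * ε i * (ε i * y))
    have hzero := trace_parity_mul_eq_zero_of_commute (h.odd_anticomm _ (hproj hx))
      (sub_eq_zero.1 (hcomm hy))
    simp only [← mul_assoc] at hcyc hzero ⊢
    simp only [mul_assoc s, hii, mul_assoc _ (ε i) (ε i)] at hcyc hzero ⊢
    rw [hcyc, hzero]
  exact (Submodule.mem_bot F).1 (hnd.2 ▸ hrad)

theorem exists_peirceProj_ne_zero (hx : x ∈ O) (hx0 : x ≠ 0) :
    ∃ i j, i ≠ j ∧ peirceProj ε i j x ≠ 0 := by
  by_contra! hzero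
  refine hx0 ((hε.eq_sum_sum_mul_mul x).trans (Finset.sum_eq_zero fun i _ =>
    Finset.sum_eq_zero fun j _ => ?_))
  rcases eq_or_ne i j with rfl | hij
  · exact hnd.idempotent_mul_mul_idempotent_eq_zero h hε i hx
  · exact mul_mul_eq_zero_of_peirceProj_eq_zero hε.toOrthogonalIdempotents hij (hzero i j hij)

end SupertraceNondegenerate

theorem IsSimpleJordanSuper.exists_mul_self_eq_smul [CharZero F] (h : IsSimpleJordanSuper s E O)
    (hε : IsPrimitiveFrame E ε) (hij : i ≠ j) (hne : E ⊓ peirceComponent ε i j ≠ ⊥) :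
    ∃ u ∈ E ⊓ peirceComponent ε i j, ∃ α : F, α ≠ 0 ∧ u * u = α • (ε i + ε j) := by
  by_contra! hzero
  have hsq : ∀ u ∈ E ⊓ peirceComponent ε i j, u * u = 0 := fun u hu => by
    obtain ⟨α, hα⟩ := hε.exists_eq_smul_add_of_mul_self hij hu.2 (h.mul_self_mem hu.1)
    rcases eq_or_ne α 0 with rfl | hα0
    · rw [hα, zero_smul]
    · exact absurd hα (hzero u hu α hα0)
  obtain ⟨x, hx, hx0⟩ := Submodule.exists_mem_ne_zero_of_ne_bot hne
  refine hx0 (h.eq_zero_of_forall_trace_mul_eq_zero hx.1 fun b hb => ?_)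
  have hproj := trace_mul_peirceProj (s := 1) (ε := ε) (i := i) (j := j) (by simp) (by simp) x b
  rw [one_mul, one_mul, peirceProj_eq_self hε.toOrthogonalIdempotents hx.2] at hproj
  have hy : peirceProj ε i j b ∈ E ⊓ peirceComponent ε i j :=
    ⟨h.peirceProj_mem_even hε hb i j, peirceProj_mem hε.toOrthogonalIdempotents hij b⟩
  have hadd := hsq _ (add_mem hx hy)
  rw [add_mul, mul_add, mul_add, hsq x hx, hsq _ hy, zero_add, add_zero] at hadd
  have htrace := congrArg trace hadd
  rw [trace_add, trace_mul_comm (peirceProj ε i j b), trace_zero] at htrace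
  rw [← hproj, eq_zero_of_add_self_eq_zero F htrace]

end PeirceFrame

section PeirceGraph

variable {ι κ : Type*} [Fintype ι] [DecidableEq ι] {s e : Matrix ι ι F}
  {E O G : Submodule F (Matrix ι ι F)} {ε : κ → Matrix ι ι F} {i j k : κ}

/-- The graph on the index set of orthogonal idempotents `ε` whose edges are the pairs of indices
with a nonzero Peirce component in `G`. -/
def peirceGraph (ε : κ → Matrix ι ι F) (G : Submodule F (Matrix ι ι F)) : SimpleGraph κ where
  Adj i j := i ≠ j ∧ G ⊓ peirceComponent ε i j ≠ ⊥
  symm := ⟨fun i j hij => ⟨hij.1.symm, peirceComponent_comm ε i j ▸ hij.2⟩⟩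

omit [DecidableEq ι] in
theorem peirceGraph_adj_of_mem {x : Matrix ι ι F} (hij : i ≠ j) (hx : x ∈ G ⊓ peirceComponent ε i j)
    (hx0 : x ≠ 0) : (peirceGraph ε G).Adj i j :=
  ⟨hij, (Submodule.ne_bot_iff _).2 ⟨x, hx, hx0⟩⟩

theorem IsSimpleJordanSuper.eq_zero_or_eq_one_of_commute (h : IsSimpleJordanSuper s E O)
    (hone : 1 ∈ E) (heE : e ∈ E) (he : IsIdempotentElem e) (hcommE : ∀ a ∈ E, e * a = a * e)
    (hcommO : ∀ x ∈ O, e * x = x * e) : e = 0 ∨ e = 1 := by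
  let K : Submodule F (Matrix ι ι F) := LinearMap.eqLocus (LinearMap.mulLeft F e) LinearMap.id
  have hleft {a b : Matrix ι ι F} (ha : e * a = a * e) (hb : e * b = b) : e * (a * b) = a * b := by
    rw [← mul_assoc, ha, mul_assoc, hb]
  have hright {a b : Matrix ι ι F} (hb : e * b = b) : e * (b * a) = b * a := by
    rw [← mul_assoc, hb]
  have hadd {a b : Matrix ι ι F} (ha : e * a = a * e) (hb : b ∈ K) : a * b + b * a ∈ K :=
    K.add_mem (hleft ha hb) (hright hb)
  have hsub {a b : Matrix ι ι F} (ha : e * a = a * e) (hb : b ∈ K) : a * b - b * a ∈ K :=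
    K.sub_mem (hleft ha hb) (hright hb)
  rcases h.simple (E ⊓ K) (O ⊓ K) inf_le_left inf_le_left
    (fun a ha b hb => ⟨h.even_even a ha b hb.1, hadd (hcommE a ha) hb.2⟩)
    (fun x hx b hb => ⟨add_comm (x * b) _ ▸ h.even_odd b hb.1 x hx, hadd (hcommO x hx) hb.2⟩)
    (fun a ha x hx => ⟨h.even_odd a ha x hx.1, hadd (hcommE a ha) hx.2⟩)
    (fun x hx y hy => ⟨h.odd_odd x hx y hy.1, hsub (hcommO x hx) hy.2⟩)
    with ⟨hbot, -⟩ | ⟨htop, -⟩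
  · have hmem : e ∈ E ⊓ K := ⟨heE, he⟩
    rw [hbot] at hmem
    exact .inl hmem
  · have hmem : 1 ∈ E ⊓ K := by rwa [htop]
    exact .inr (by rw [← mul_one e, show e * 1 = 1 from hmem.2])

variable [Fintype κ]

namespace IsPrimitiveFrame

variable (hε : IsPrimitiveFrame E ε)
include hε

theorem mul_mul_eq_zero_of_not_adj {x : Matrix ι ι F} (hproj : ∀ i j, peirceProj ε i j x ∈ G)
    (hij : i ≠ j) (hadj : ¬(peirceGraph ε G).Adj i j) : ε i * x * ε j = 0 := by
  refine mul_mul_eq_zero_of_peirceProj_eq_zero hε.toOrthogonalIdempotents hij ?_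
  by_contra hne
  exact hadj (peirceGraph_adj_of_mem hij
    ⟨hproj i j, peirceProj_mem hε.toOrthogonalIdempotents hij x⟩ hne)

theorem sum_mul_comm_of_not_adj {x : Matrix ι ι F}
    (hproj : ∀ i j, peirceProj ε i j x ∈ G) {Q : Finset κ}
    (hQ : ∀ i ∈ Q, ∀ j ∉ Q, ¬(peirceGraph ε G).Adj i j) :
    (∑ i ∈ Q, ε i) * x = x * ∑ i ∈ Q, ε i := by
  classical
  have hne {i j} (hi : i ∈ Q) (hj : j ∉ Q) : i ≠ j := fun hij => hj (hij ▸ hi)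
  have hone : ∑ i ∈ Q, ε i + ∑ i ∈ Qᶜ, ε i = 1 := by rw [Finset.sum_add_sum_compl, hε.complete]
  have hout : (∑ i ∈ Q, ε i) * x * ∑ j ∈ Qᶜ, ε j = 0 := by
    simp only [Finset.sum_mul, Finset.mul_sum]
    refine Finset.sum_eq_zero fun j hj => Finset.sum_eq_zero fun i hi => ?_
    rw [Finset.mem_compl] at hj
    exact hε.mul_mul_eq_zero_of_not_adj hproj (hne hi hj) (hQ i hi j hj)
  have hin : (∑ j ∈ Qᶜ, ε j) * x * ∑ i ∈ Q, ε i = 0 := by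
    simp only [Finset.sum_mul, Finset.mul_sum]
    refine Finset.sum_eq_zero fun i hi => Finset.sum_eq_zero fun j hj => ?_
    rw [Finset.mem_compl] at hj
    exact hε.mul_mul_eq_zero_of_not_adj hproj (hne hi hj).symm fun hadj => hQ i hi j hj hadj.symm
  calc (∑ i ∈ Q, ε i) * x
      = (∑ i ∈ Q, ε i) * x * (∑ i ∈ Q, ε i + ∑ i ∈ Qᶜ, ε i) := by rw [hone, mul_one]
    _ = (∑ i ∈ Q, ε i + ∑ i ∈ Qᶜ, ε i) * x * ∑ i ∈ Q, ε i := by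
      rw [mul_add, hout, add_mul, add_mul, hin]
    _ = x * ∑ i ∈ Q, ε i := by rw [hone, one_mul]

theorem idempotent_mul_sum [DecidableEq κ] (Q : Finset κ) (i : κ) :
    ε i * ∑ j ∈ Q, ε j = if i ∈ Q then ε i else 0 := by
  simp only [Finset.mul_sum, hε.mul_eq, Finset.sum_ite_eq]

end IsPrimitiveFrame

theorem IsSimpleJordanSuper.preconnected_peirceGraph [NeZero (2 : F)]
    (h : IsSimpleJordanSuper s E O) (hone : 1 ∈ E) (hε : IsPrimitiveFrame E ε) :
    (peirceGraph ε E ⊔ peirceGraph ε O).Preconnected := by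
  classical
  intro i k
  by_contra hik
  let Q : Finset κ := {j | (peirceGraph ε E ⊔ peirceGraph ε O).Reachable i j}
  have hQ : ∀ a ∈ Q, ∀ b ∉ Q, ¬(peirceGraph ε E ⊔ peirceGraph ε O).Adj a b := by
    intro a ha b hb hab
    simp only [Q, Finset.mem_filter_univ] at ha hb
    exact hb (ha.trans hab.reachable)
  have hcommE : ∀ a ∈ E, (∑ j ∈ Q, ε j) * a = a * ∑ j ∈ Q, ε j := fun a ha =>
    hε.sum_mul_comm_of_not_adj (fun i j => h.peirceProj_mem_even hε ha i j)
      fun i hi j hj hij => hQ i hi j hj (.inl hij)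
  have hcommO : ∀ x ∈ O, (∑ j ∈ Q, ε j) * x = x * ∑ j ∈ Q, ε j := fun x hx =>
    hε.sum_mul_comm_of_not_adj (fun i j => h.peirceProj_mem_odd hε hx i j)
      fun i hi j hj hij => hQ i hi j hj (.inr hij)
  have hi := hε.idempotent_mul_sum Q i
  have hk := hε.idempotent_mul_sum Q k
  rw [if_pos (by simp [Q])] at hi
  rw [if_neg (by simpa [Q] using hik)] at hk
  rcases h.eq_zero_or_eq_one_of_commute hone (sum_mem fun j _ => (hε.prim j).mem)
    hε.isIdempotentElem_sum hcommE hcommO with h0 | h1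
  · exact (hε.prim i).ne_zero (by rw [← hi, h0, mul_zero])
  · exact (hε.prim k).ne_zero (by rw [← hk, h1, mul_one])

variable [CharZero F]

theorem SupertraceNondegenerate.peirceGraph_even_adj (hnd : SupertraceNondegenerate s E O)
    (h : IsJordanSuper s E O) (hε : IsPrimitiveFrame E ε) (hij : (peirceGraph ε O).Adj i j)
    (hjk : (peirceGraph ε O).Adj j k) (hik : i ≠ k) : (peirceGraph ε E).Adj i k := by
  have hε' := hε.toOrthogonalIdempotents
  obtain ⟨x, hx, hx0⟩ := Submodule.exists_mem_ne_zero_of_ne_bot hij.2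
  obtain ⟨y, hy, hy0⟩ := Submodule.exists_mem_ne_zero_of_ne_bot hjk.2
  obtain ⟨z, hz, hyz⟩ := hnd.exists_commutator_ne_zero h hε hjk.1 hy hy0
  obtain ⟨c, hc⟩ := h.exists_commutator_eq_smul_peirceCoroot hε hy hz
  by_contra hadj
  have hzero : ∀ w ∈ O ⊓ peirceComponent ε j k, x * w = 0 ∧ w * x = 0 := fun w hw => by
    refine mul_eq_zero_and_mul_eq_zero_of_add_smul_eq_zero hε' hx.2 hw.2 hij.1 hik
      (neg_ne_zero.2 one_ne_zero : (-1 : F) ≠ 0) ?_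
    by_contra hne
    refine hadj (peirceGraph_adj_of_mem hik
      ⟨?_, mul_add_smul_mul_mem_peirceComponent hε' hx.2 hw.2 hij.1 hjk.1 hik (-1)⟩ hne)
    rw [neg_one_smul, ← sub_eq_add_neg]
    exact h.odd_odd x hx.1 w hw.1
  have hcoef : c * (ε k).trace ≠ 0 := by
    refine mul_ne_zero (fun h0 => hyz (by rw [hc, h0, zero_smul])) (hε.trace_ne_zero k)
  have hright : (c * (ε k).trace) • (x * ε j) = 0 := by
    calc (c * (ε k).trace) • (x * ε j) = x * (c • peirceCoroot ε j k) := by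
          simp only [peirceCoroot, mul_smul_comm, mul_sub, mul_smul,
            mul_idempotent_eq_zero_of_mem_peirceComponent hε' hx.2 hik.symm hjk.1.symm, smul_zero,
            sub_zero]
      _ = 0 := by
          rw [← hc, mul_sub, ← mul_assoc, ← mul_assoc, (hzero y hy).1, (hzero z hz).1, zero_mul,
            zero_mul, sub_zero]
  have hleft : (c * (ε k).trace) • (ε j * x) = 0 := by
    calc (c * (ε k).trace) • (ε j * x) = (c • peirceCoroot ε j k) * x := by
          simp only [peirceCoroot, smul_mul_assoc, sub_mul, mul_smul,
            idempotent_mul_eq_zero_of_mem_peirceComponent hε' hx.2 hik.symm hjk.1.symm, smul_zero,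
            sub_zero]
      _ = 0 := by
          rw [← hc, sub_mul, mul_assoc, mul_assoc, (hzero y hy).2, (hzero z hz).2, mul_zero,
            mul_zero, sub_zero]
  rw [smul_eq_zero, or_iff_right hcoef] at hleft hright
  exact hx0 (by rw [← hx.2.2.2, hx.2.1, hleft, hright, add_zero])

theorem IsSimpleJordanSuper.peirceGraph_odd_adj (h : IsSimpleJordanSuper s E O)
    (hε : IsPrimitiveFrame E ε) (hij : (peirceGraph ε E).Adj i j)
    (hjk : (peirceGraph ε O).Adj j k) (hik : i ≠ k) : (peirceGraph ε O).Adj i k := by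
  have hε' := hε.toOrthogonalIdempotents
  obtain ⟨u, hu, α, hα, hsq⟩ := h.exists_mul_self_eq_smul hε hij.1 hij.2
  obtain ⟨x, hx, hx0⟩ := Submodule.exists_mem_ne_zero_of_ne_bot hjk.2
  refine peirceGraph_adj_of_mem hik (x := u * x + (1 : F) • (x * u))
    ⟨(one_smul F (x * u)).symm ▸ h.even_odd u hu.1 x hx.1,
      mul_add_smul_mul_mem_peirceComponent hε' hu.2 hx.2 hij.1 hjk.1 hik 1⟩ fun hzero => hx0 ?_
  obtain ⟨hux, hxu⟩ :=
    mul_eq_zero_and_mul_eq_zero_of_add_smul_eq_zero hε' hu.2 hx.2 hij.1 hik one_ne_zero hzero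
  have hleft : α • (ε j * x) = 0 := by
    calc α • (ε j * x) = u * u * x := by
          rw [hsq, smul_mul_assoc, add_mul,
            idempotent_mul_eq_zero_of_mem_peirceComponent hε' hx.2 hij.1 hik, zero_add]
      _ = 0 := by rw [mul_assoc, hux, mul_zero]
  have hright : α • (x * ε j) = 0 := by
    calc α • (x * ε j) = x * (u * u) := by
          rw [hsq, mul_smul_comm, mul_add,
            mul_idempotent_eq_zero_of_mem_peirceComponent hε' hx.2 hij.1 hik, zero_add]
      _ = 0 := by rw [← mul_assoc, hxu, zero_mul]
  rw [smul_eq_zero, or_iff_right hα] at hleft hright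
  rw [← hx.2.2.2, hleft, hx.2.2.1, hright, add_zero]

omit [DecidableEq ι] [Fintype κ] [CharZero F] in
theorem peirceProj_congr {l : κ} (h : s(i, j) = s(k, l)) :
    peirceProj ε i j = peirceProj ε k l := by
  rcases Sym2.eq_iff.1 h with ⟨rfl, rfl⟩ | ⟨rfl, rfl⟩
  exacts [rfl, add_comm _ _]

theorem SupertraceNondegenerate.finrank_odd_eq_two_mul_card_edgeSet
    (hnd : SupertraceNondegenerate s E O) (h : IsJordanSuper s E O) (hε : IsPrimitiveFrame E ε) :
    Module.finrank F O = 2 * Nat.card (peirceGraph ε O).edgeSet := by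
  classical
  have hε' := hε.toOrthogonalIdempotents
  let edge (e : (peirceGraph ε O).edgeSet) : κ × κ := e.1.out
  have hout (e) : s((edge e).1, (edge e).2) = e := Quot.out_eq e.1
  have hadj (e) : (peirceGraph ε O).Adj (edge e).1 (edge e).2 := by
    rw [← SimpleGraph.mem_edgeSet, hout]
    exact e.2
  let Φ : O →ₗ[F] ∀ e, ↥(O ⊓ peirceComponent ε (edge e).1 (edge e).2) :=
    LinearMap.pi fun e => ((peirceProj ε (edge e).1 (edge e).2).comp O.subtype).codRestrict _
      fun x => ⟨h.peirceProj_mem_odd hε x.2 _ _, peirceProj_mem hε' (hadj e).1 x⟩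
  have hinj : Function.Injective Φ := by
    rw [← LinearMap.ker_eq_bot, LinearMap.ker_eq_bot']
    intro x hx
    by_contra hx0
    obtain ⟨i, j, hij, hne⟩ :=
      hnd.exists_peirceProj_ne_zero h hε x.2 (mt (Submodule.coe_eq_zero).1 hx0)
    have hedge : (peirceGraph ε O).Adj i j := peirceGraph_adj_of_mem hij
      ⟨h.peirceProj_mem_odd hε x.2 i j, peirceProj_mem hε' hij x⟩ hne
    rw [← peirceProj_congr (ε := ε) (hout ⟨s(i, j), hedge⟩)] at hne
    exact hne (congrArg Subtype.val (congrFun hx ⟨s(i, j), hedge⟩))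
  have hsurj : Function.Surjective Φ := by
    intro y
    refine ⟨⟨∑ e : (peirceGraph ε O).edgeSet, (y e : Matrix ι ι F),
      sum_mem fun e _ => (y e).2.1⟩, funext fun e => ?_⟩
    refine Subtype.ext ((map_sum (peirceProj ε (edge e).1 (edge e).2) _ _).trans ?_)
    refine (Finset.sum_eq_single e (fun e' _ hne => ?_) fun he => ?_).trans
      (peirceProj_eq_self hε' (y e).2.2)
    · refine peirceProj_eq_zero hε' (y e').2.2 (hadj e).1 ?_
      rw [hout, hout]
      exact Subtype.coe_injective.ne hne
    · exact absurd (Finset.mem_univ e) he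
  rw [(LinearEquiv.ofBijective Φ ⟨hinj, hsurj⟩).finrank_eq, Module.finrank_pi_fintype,
    Finset.sum_congr rfl fun e _ =>
      hnd.finrank_odd_inf_peirceComponent h hε (hadj e).1 (hadj e).2,
    Finset.sum_const, Finset.card_univ, smul_eq_mul, mul_comm, Nat.card_eq_fintype_card]

end PeirceGraph

section PeirceCounting

theorem forall_of_preconnected {κ : Type*} {G : SimpleGraph κ} (hG : G.Preconnected)
    {p : κ → Prop} (hstep : ∀ i j, G.Adj i j → p i → p j) {i : κ} (hi : p i) (j : κ) : p j := by
  induction (SimpleGraph.reachable_iff_reflTransGen i j).1 (hG i j) with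
  | refl => exact hi
  | tail _ hadj ih => exact hstep _ _ hadj ih

theorem card_edgeSet_of_adj_iff {κ : Type*} [Fintype κ] [DecidableEq κ] {H : SimpleGraph κ}
    {P : Finset κ} (hH : ∀ i j, H.Adj i j ↔ (i ∈ P ↔ j ∉ P)) :
    Nat.card H.edgeSet = P.card * Pᶜ.card := by
  classical
  have hbip : H.IsBipartiteWith ↑P ↑Pᶜ :=
    ⟨by rw [Finset.coe_compl]; exact disjoint_compl_right, fun i j hij => by
      have := (hH i j).1 hij
      simp only [Finset.coe_compl, Set.mem_compl_iff, Finset.mem_coe]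
      tauto⟩
  have hdeg : ∀ i ∈ P, H.degree i = Pᶜ.card := fun i hi => by
    rw [← H.card_neighborFinset_eq_degree]
    congr 1
    ext j
    simp only [SimpleGraph.mem_neighborFinset, hH, hi, true_iff, Finset.mem_compl]
  rw [Nat.card_eq_fintype_card, ← SimpleGraph.edgeFinset_card,
    ← SimpleGraph.isBipartiteWith_sum_degrees_eq_card_edges hbip, Finset.sum_congr rfl hdeg,
    Finset.sum_const, smul_eq_mul]

/-- The combinatorial properties shared by the even Peirce graph `G` and the odd Peirce graph `H`
of a simple Jordan superalgebra with nondegenerate supertrace. -/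
structure IsPeircePair {κ : Type*} (G H : SimpleGraph κ) : Prop where
  preconnected : (G ⊔ H).Preconnected
  odd_odd : ∀ i j k, H.Adj i j → H.Adj j k → i ≠ k → G.Adj i k
  even_odd : ∀ i j k, G.Adj i j → H.Adj j k → i ≠ k → H.Adj i k

namespace IsPeircePair

variable {κ : Type*} {G H : SimpleGraph κ} {i₀ j₀ : κ} (hGH : IsPeircePair G H)
  (h₀ : H.Adj i₀ j₀)
include hGH h₀

theorem exists_odd_adj (i : κ) : ∃ j, H.Adj i j := by
  refine forall_of_preconnected (p := fun i => ∃ j, H.Adj i j) hGH.preconnected ?_ ⟨j₀, h₀⟩ i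
  rintro i k (hik | hik) ⟨j, hij⟩
  · rcases eq_or_ne k j with rfl | hkj
    · exact ⟨i, hij.symm⟩
    · exact ⟨j, hGH.even_odd k i j hik.symm hij hkj⟩
  · exact ⟨i, hik.symm⟩

theorem even_adj_or_odd_adj (i k : κ) (hik : i ≠ k) : G.Adj i k ∨ H.Adj i k := by
  suffices hk : k = i ∨ G.Adj i k ∨ H.Adj i k from hk.resolve_left hik.symm
  have hoo := hGH.odd_odd
  have heo := hGH.even_odd
  refine forall_of_preconnected (p := fun k => k = i ∨ G.Adj i k ∨ H.Adj i k)
    hGH.preconnected ?_ (.inl rfl) k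
  rintro j k (hjk | hjk) (rfl | hij | hij)
  · exact .inr (.inl hjk)
  · obtain ⟨l, hjl⟩ := hGH.exists_odd_adj h₀ j
    grind [SimpleGraph.adj_comm]
  · grind [SimpleGraph.adj_comm]
  · exact .inr (.inr hjk)
  · grind
  · grind

theorem mk_eq_of_odd_adj {τ : Type*} {t : κ → τ} (ht : ∀ i j, G.Adj i j → t i = t j) (i j : κ)
    (hij : H.Adj i j) : s(t i, t j) = s(t i₀, t j₀) := by
  refine forall_of_preconnected (p := fun i => ∀ j, H.Adj i j → s(t i, t j) = s(t i₀, t j₀))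
    hGH.preconnected ?_ (i := i₀) (fun j h => ?_) i j hij
  · rintro i k (hik | hik) hi j hkj
    · rcases eq_or_ne i j with rfl | hij
      · rw [Sym2.eq_swap, hi k hkj.symm]
      · rw [← ht i k hik, hi j (hGH.even_odd i k j hik hkj hij)]
    · rcases eq_or_ne i j with rfl | hij
      · rw [Sym2.eq_swap, hi k hik]
      · rw [← ht i j (hGH.odd_odd i k j hik hkj hij), Sym2.eq_swap, hi k hik]
  · rcases eq_or_ne j j₀ with rfl | hj
    · rfl
    · rw [ht j j₀ (hGH.odd_odd j i₀ j₀ h.symm h₀ hj)]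

theorem eq_or_eq {τ : Type*} {t : κ → τ} (ht : ∀ i j, G.Adj i j → t i = t j) (i : κ) :
    t i = t i₀ ∨ t i = t j₀ := by
  obtain ⟨j, hij⟩ := hGH.exists_odd_adj h₀ i
  exact Sym2.mem_iff.1 (hGH.mk_eq_of_odd_adj h₀ ht i j hij ▸ Sym2.mem_mk_left _ _)

theorem odd_adj_iff_ne {τ : Type*} {t : κ → τ} (ht : ∀ i j, G.Adj i j → t i = t j)
    (hne : t i₀ ≠ t j₀) (i j : κ) : H.Adj i j ↔ t i ≠ t j := by
  refine ⟨fun hij heq => hne ?_, fun hij =>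
    (hGH.even_adj_or_odd_adj h₀ i j (ne_of_apply_ne t hij)).resolve_left (mt (ht i j) hij)⟩
  have hmk := hGH.mk_eq_of_odd_adj h₀ ht i j hij
  rcases Sym2.eq_iff.1 hmk with ⟨hi, hj⟩ | ⟨hj, hi⟩ <;> rw [← hi, ← hj, heq]

variable [Fintype κ] {a b : κ → ℕ}

theorem two_mul_card_edgeSet_lt (ht : ∀ i j, G.Adj i j → a i = a j ∧ b i = b j)
    (hai : a i₀ ≠ 0) (hbi : b i₀ ≠ 0) (haj : a j₀ ≠ 0) (hbj : b j₀ ≠ 0) :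
    2 * Nat.card H.edgeSet < (∑ i, a i) * ∑ i, b i := by
  classical
  have hpos (i) : 1 ≤ a i ∧ 1 ≤ b i := by
    have hi := hGH.eq_or_eq h₀ (t := fun i => (a i, b i))
      (fun i j hij => Prod.ext (ht i j hij).1 (ht i j hij).2) i
    simp only [Prod.mk.injEq] at hi
    omega
  have hcard_a : Fintype.card κ ≤ ∑ i, a i := by
    simpa using Finset.sum_le_sum fun i (_ : i ∈ Finset.univ) => (hpos i).1
  have hcard_b : Fintype.card κ ≤ ∑ i, b i := by
    simpa using Finset.sum_le_sum fun i (_ : i ∈ Finset.univ) => (hpos i).2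
  have hcard_pos : 0 < Fintype.card κ := Fintype.card_pos_iff.2 ⟨i₀⟩
  have hedges : Nat.card H.edgeSet ≤ (Fintype.card κ).choose 2 := by
    rw [Nat.card_eq_fintype_card, ← SimpleGraph.edgeFinset_card]
    exact H.card_edgeFinset_le_card_choose_two
  calc 2 * Nat.card H.edgeSet ≤ 2 * (Fintype.card κ).choose 2 := by gcongr
    _ = Fintype.card κ * (Fintype.card κ - 1) := by
      rw [Nat.choose_two_right, Nat.mul_div_cancel' (Nat.even_mul_pred_self _).two_dvd]
    _ < Fintype.card κ * Fintype.card κ := by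
      gcongr
      exact Nat.sub_lt hcard_pos one_pos
    _ ≤ (∑ i, a i) * ∑ i, b i := by gcongr

theorem two_mul_card_edgeSet_lt_or_eq_of_eq_zero
    (ht : ∀ i j, G.Adj i j → a i = a j ∧ b i = b j) (hai : a i₀ ≠ 0) (hbi : b i₀ = 0)
    (haj : a j₀ = 0) (hn : Odd (∑ i, a i)) (hm : Odd (∑ i, b i)) :
    2 * Nat.card H.edgeSet < (∑ i, a i) * ∑ i, b i ∨
      2 * Nat.card H.edgeSet = 2 * ((∑ i, a i) * ∑ i, b i) := by
  classical
  have htype (i) : (a i = a i₀ ∧ b i = 0) ∨ (a i = 0 ∧ b i = b j₀) := by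
    have hi := hGH.eq_or_eq h₀ (t := fun i => (a i, b i))
      (fun i j hij => Prod.ext (ht i j hij).1 (ht i j hij).2) i
    simpa only [Prod.mk.injEq, haj, hbi] using hi
  let P : Finset κ := {i | a i ≠ 0}
  have hmem (i) : i ∈ P ↔ a i ≠ 0 := Finset.mem_filter_univ i
  have hcard : Nat.card H.edgeSet = P.card * Pᶜ.card := by
    refine card_edgeSet_of_adj_iff fun i j => ?_
    rw [hGH.odd_adj_iff_ne h₀ (fun i j hij => (ht i j hij).1) (haj.symm ▸ hai), hmem, hmem]
    grind
  have hsum_a : ∑ i, a i = P.card * a i₀ := by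
    rw [← smul_eq_mul, ← Finset.sum_const, Finset.sum_filter]
    refine Finset.sum_congr rfl fun i _ => ?_
    grind
  have hsum_b : ∑ i, b i = Pᶜ.card * b j₀ := by
    rw [← smul_eq_mul, ← Finset.sum_const, Finset.compl_filter, Finset.sum_filter]
    refine Finset.sum_congr rfl fun i _ => ?_
    grind
  rw [hsum_a] at hn ⊢
  rw [hsum_b] at hm ⊢
  have hprod : Odd (a i₀ * b j₀) := (Nat.odd_mul.1 hn).2.mul (Nat.odd_mul.1 hm).2
  have hpos : 0 < P.card * Pᶜ.card := ((Nat.odd_mul.1 hn).1.mul (Nat.odd_mul.1 hm).1).pos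
  rw [hcard, mul_mul_mul_comm]
  obtain ⟨r, hr⟩ := hprod
  rcases Nat.eq_zero_or_pos r with rfl | hr0
  · exact .inr (by rw [hr]; ring)
  · refine .inl ?_
    rw [hr, mul_comm 2]
    gcongr
    omega

theorem two_mul_card_edgeSet_lt_or_eq (ht : ∀ i j, G.Adj i j → a i = a j ∧ b i = b j)
    (hodd : ∀ i j, H.Adj i j → a i * a j = b i * b j) (hpos : ∀ i, a i + b i ≠ 0)
    (hn : Odd (∑ i, a i)) (hm : Odd (∑ i, b i)) :
    2 * Nat.card H.edgeSet < (∑ i, a i) * ∑ i, b i ∨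
      2 * Nat.card H.edgeSet = 2 * ((∑ i, a i) * ∑ i, b i) := by
  have hprod := hodd i₀ j₀ h₀
  have hi := hpos i₀
  have hj := hpos j₀
  by_cases hbi : b i₀ = 0
  · have hai : a i₀ ≠ 0 := by omega
    have haj : a j₀ = 0 := by simpa [hbi, hai] using hprod
    exact hGH.two_mul_card_edgeSet_lt_or_eq_of_eq_zero h₀ ht hai hbi haj hn hm
  by_cases hai : a i₀ = 0
  · have hbj : b j₀ = 0 := by simpa [hbi, hai] using hprod
    exact hGH.two_mul_card_edgeSet_lt_or_eq_of_eq_zero h₀.symm ht (by omega) hbj hai hn hm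
  have hiff : a j₀ = 0 ↔ b j₀ = 0 := by
    constructor <;> intro h0 <;> simpa [h0, hai, hbi, eq_comm] using hprod
  exact .inl (hGH.two_mul_card_edgeSet_lt h₀ ht hai hbi (by omega) (by omega))

end IsPeircePair

variable {ι κ : Type*} [Fintype ι] [DecidableEq ι] {s e : Matrix ι ι F}
  {E O : Submodule F (Matrix ι ι F)} {ε : κ → Matrix ι ι F} {i j : κ}

/-- The dimension of the fixed space of the idempotent `e` inside the `1`-eigenspace of the
involution `s`, when `s` and `e` commute; the `-1`-eigenspace is treated with `-s`. -/
noncomputable def parityRank (s e : Matrix ι ι F) : ℕ := ((2⁻¹ : F) • (1 + s) * e).rank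

theorem two_mul_parityRank [CharZero F] (hs : s * s = 1) (he : IsIdempotentElem e)
    (hcomm : s * e = e * s) : 2 * (parityRank s e : F) = e.trace + (s * e).trace := by
  have hproj : IsIdempotentElem ((2⁻¹ : F) • (1 + s)) := by
    rw [IsIdempotentElem, smul_mul_smul_comm, mul_add, mul_one, add_mul, one_mul, hs,
      add_comm s 1, ← two_smul F (1 + s), smul_smul]
    norm_num
  have hidem : IsIdempotentElem ((2⁻¹ : F) • (1 + s) * e) := by
    refine IsIdempotentElem.mul_of_commute ?_ hproj he
    rw [Commute, SemiconjBy, smul_mul_assoc, mul_smul_comm, add_mul, mul_add, one_mul, mul_one,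
      hcomm]
  rw [parityRank, ← trace_eq_rank_of_isIdempotentElem hidem, smul_mul_assoc, trace_smul, add_mul,
    one_mul, trace_add, smul_eq_mul, mul_inv_cancel_left₀ two_ne_zero]

variable [Fintype κ] [CharZero F]

namespace IsJordanSuper

variable (h : IsJordanSuper s E O) (hε : IsPrimitiveFrame E ε)
include h hε

theorem two_mul_parityRank (i : κ) :
    2 * (parityRank s (ε i) : F) = (ε i).trace + (s * ε i).trace :=
  SJ.two_mul_parityRank h.parity_mul_self (hε.idem i) (h.even_comm _ (hε.prim i).mem)

theorem two_mul_parityRank_neg (i : κ) :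
    2 * (parityRank (-s) (ε i) : F) = (ε i).trace - (s * ε i).trace := by
  rw [h.neg.two_mul_parityRank hε i, neg_mul, trace_neg, sub_eq_add_neg]

theorem parityRank_add_parityRank_neg_ne_zero (i : κ) :
    parityRank s (ε i) + parityRank (-s) (ε i) ≠ 0 := fun hzero => hε.trace_ne_zero i (by
  have hsum : (parityRank s (ε i) : F) + parityRank (-s) (ε i) = 0 := mod_cast hzero
  refine mul_left_cancel₀ (two_ne_zero (α := F)) ?_
  linear_combination -h.two_mul_parityRank hε i - h.two_mul_parityRank_neg hε i + 2 * hsum)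

theorem sum_parityRank_eq {n m : ℕ} (hcard : Fintype.card ι = n + m)
    (htrace : s.trace = n - m) : ∑ i, parityRank s (ε i) = n := by
  have htwo : 2 * ((∑ i, parityRank s (ε i) : ℕ) : F) = Fintype.card ι + s.trace := by
    rw [Nat.cast_sum, Finset.mul_sum, Finset.sum_congr rfl fun i _ => h.two_mul_parityRank hε i,
      Finset.sum_add_distrib, ← trace_sum, ← trace_sum, ← Finset.mul_sum, hε.complete, mul_one,
      trace_one]
  rw [hcard, htrace, Nat.cast_add, add_add_sub_cancel, ← two_mul] at htwo
  exact Nat.cast_injective (mul_left_cancel₀ two_ne_zero htwo)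

theorem sum_parityRank_neg_eq {n m : ℕ} (hcard : Fintype.card ι = n + m)
    (htrace : s.trace = n - m) : ∑ i, parityRank (-s) (ε i) = m :=
  h.neg.sum_parityRank_eq hε (hcard.trans (add_comm n m)) (by rw [trace_neg, htrace, neg_sub])

end IsJordanSuper

theorem SupertraceNondegenerate.parityRank_mul_parityRank (hnd : SupertraceNondegenerate s E O)
    (h : IsJordanSuper s E O) (hε : IsPrimitiveFrame E ε) (hij : (peirceGraph ε O).Adj i j) :
    parityRank s (ε i) * parityRank s (ε j) = parityRank (-s) (ε i) * parityRank (-s) (ε j) := by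
  obtain ⟨x, hx, hx0⟩ := Submodule.exists_mem_ne_zero_of_ne_bot hij.2
  obtain ⟨y, hy, hxy⟩ := hnd.exists_commutator_ne_zero h hε hij.1 hx hx0
  have htrace := h.trace_mul_trace_parity_of_commutator_ne_zero hε hij.1 hx hy hxy
  have hcast : (4 : F) * (parityRank s (ε i) * parityRank s (ε j))
      = 4 * (parityRank (-s) (ε i) * parityRank (-s) (ε j)) := by
    calc (4 : F) * (parityRank s (ε i) * parityRank s (ε j))
        = (2 * parityRank s (ε i)) * (2 * parityRank s (ε j)) := by ring
      _ = (2 * parityRank (-s) (ε i)) * (2 * parityRank (-s) (ε j)) := by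
        rw [h.two_mul_parityRank hε, h.two_mul_parityRank hε, h.two_mul_parityRank_neg hε,
          h.two_mul_parityRank_neg hε]
        linear_combination 2 * htrace
      _ = 4 * (parityRank (-s) (ε i) * parityRank (-s) (ε j)) := by ring
  exact_mod_cast mul_left_cancel₀ (by norm_num : (4 : F) ≠ 0) hcast

namespace IsSimpleJordanSuper

variable (h : IsSimpleJordanSuper s E O) (hε : IsPrimitiveFrame E ε)
include h hε

theorem parityRank_eq_of_adj (hij : (peirceGraph ε E).Adj i j) :
    parityRank s (ε i) = parityRank s (ε j) := by
  obtain ⟨u, hu, α, hα, hsq⟩ := h.exists_mul_self_eq_smul hε hij.1 hij.2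
  have hi : ε i * (u * u) = α • ε i := by
    rw [hsq, mul_smul_comm, mul_add, hε.idem i, hε.ortho hij.1, add_zero]
  have hj : ε j * (u * u) = α • ε j := by
    rw [hsq, mul_smul_comm, mul_add, hε.idem j, hε.ortho hij.1.symm, zero_add]
  have hswap {p : Matrix ι ι F} (hp : p * u = u * p) :
      (p * (ε i * (u * u))).trace = (p * (ε j * (u * u))).trace := by
    have hcyc := trace_parity_mul_comm_of_even hp (ε j * u)
    rw [← mul_assoc u, ← hu.2.1] at hcyc
    simpa only [mul_assoc] using hcyc
  have htrace := hswap (p := 1) (by rw [one_mul, mul_one])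
  have hparity := hswap (h.even_comm u hu.1)
  simp only [hi, hj, one_mul, mul_smul_comm, trace_smul, smul_eq_mul, mul_right_inj' hα]
    at htrace hparity
  have hcast : 2 * (parityRank s (ε i) : F) = 2 * parityRank s (ε j) := by
    rw [h.two_mul_parityRank hε, h.two_mul_parityRank hε, htrace, hparity]
  exact_mod_cast mul_left_cancel₀ two_ne_zero hcast

theorem isPeircePair (hone : 1 ∈ E) (hnd : SupertraceNondegenerate s E O) :
    IsPeircePair (peirceGraph ε E) (peirceGraph ε O) where
  preconnected := h.preconnected_peirceGraph hone hε
  odd_odd _ _ _ := hnd.peirceGraph_even_adj h.toIsJordanSuper hε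
  even_odd _ _ _ := h.peirceGraph_odd_adj hε

theorem exists_peirceGraph_odd_adj (hnd : SupertraceNondegenerate s E O) :
    ∃ i j, (peirceGraph ε O).Adj i j := by
  obtain ⟨x, hx, hx0⟩ := Submodule.exists_mem_ne_zero_of_ne_bot h.odd_ne_bot
  obtain ⟨i, j, hij, hproj⟩ := hnd.exists_peirceProj_ne_zero h.toIsJordanSuper hε hx hx0
  exact ⟨i, j, peirceGraph_adj_of_mem hij
    ⟨h.peirceProj_mem_odd hε hx i j, peirceProj_mem hε.toOrthogonalIdempotents hij x⟩ hproj⟩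

omit hε [Fintype κ] in
theorem finrank_odd_lt_or_eq [IsAlgClosed F] (hone : 1 ∈ E) (hnd : SupertraceNondegenerate s E O)
    {n m : ℕ} (hn : Odd n) (hm : Odd m) (hcard : Fintype.card ι = n + m)
    (htrace : s.trace = n - m) :
    Module.finrank F O < n * m ∨ Module.finrank F O = 2 * (n * m) := by
  obtain ⟨κ, _, ε, hε⟩ := h.exists_isPrimitiveFrame hone
  obtain ⟨i, j, hij⟩ := h.exists_peirceGraph_odd_adj hε hnd
  have hsum := h.sum_parityRank_eq hε hcard htrace
  have hsum_neg := h.sum_parityRank_neg_eq hε hcard htrace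
  have hcount := (h.isPeircePair hε hone hnd).two_mul_card_edgeSet_lt_or_eq hij
    (a := fun i => parityRank s (ε i)) (b := fun i => parityRank (-s) (ε i))
    (fun i j hij => ⟨h.parityRank_eq_of_adj hε hij, h.neg.parityRank_eq_of_adj hε hij⟩)
    (fun i j => hnd.parityRank_mul_parityRank h.toIsJordanSuper hε)
    (h.parityRank_add_parityRank_neg_ne_zero hε) (hsum.symm ▸ hn) (hsum_neg.symm ▸ hm)
  rwa [hsum, hsum_neg, ← hnd.finrank_odd_eq_two_mul_card_edgeSet h.toIsJordanSuper hε] at hcount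

end IsSimpleJordanSuper

end PeirceCounting

section SpectralNormalization

open Polynomial

theorem exists_prod_X_sub_C_dvd_X_mul_sq_sub_one [IsAlgClosed F] [NeZero (2 : F)] (S : Multiset F)
    (hS : ∀ μ ∈ S, μ ≠ 0) : ∃ p : F[X], (S.map fun μ => X - C μ).prod ∣ X * p ^ 2 - 1 := by
  induction S using Multiset.induction with
  | empty => exact ⟨0, by simp⟩
  | cons μ S ih =>
    obtain ⟨p, r, hr⟩ := ih fun ν hν => hS ν (Multiset.mem_cons_of_mem hν)
    have hμ : μ ≠ 0 := hS μ (Multiset.mem_cons_self μ S)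
    rw [Multiset.map_cons, Multiset.prod_cons]
    set h := (S.map fun μ => X - C μ).prod
    suffices ∃ t : F, r.eval μ + 2 * μ * p.eval μ * t + μ * h.eval μ * t ^ 2 = 0 by
      obtain ⟨t, ht⟩ := this
      obtain ⟨w, hw⟩ : X - C μ ∣ r + 2 * X * p * C t + X * h * C t ^ 2 := by
        rw [dvd_iff_isRoot, IsRoot.def]
        simpa using ht
      exact ⟨p + C t * h, w, by linear_combination hr + h * hw⟩
    have hr_eval : μ * p.eval μ ^ 2 - 1 = h.eval μ * r.eval μ := by
      simpa using congrArg (eval μ) hr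
    by_cases hh : h.eval μ = 0
    · have hp : p.eval μ ≠ 0 := fun hp => by simp [hh, hp] at hr_eval
      refine ⟨-r.eval μ / (2 * μ * p.eval μ), ?_⟩
      rw [hh]
      field_simp
      ring
    · obtain ⟨ρ, hρ⟩ := IsAlgClosed.exists_pow_nat_eq μ⁻¹ two_pos
      refine ⟨(ρ - p.eval μ) / h.eval μ, mul_left_cancel₀ hh ?_⟩
      have hρ' : μ * ρ ^ 2 = 1 := by rw [hρ, mul_inv_cancel₀ hμ]
      field_simp
      linear_combination hρ' - hr_eval

theorem exists_dvd_X_mul_sq_sub_one [IsAlgClosed F] [NeZero (2 : F)] {g : F[X]}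
    (hg : ¬ X ∣ g) : ∃ p : F[X], g ∣ X * p ^ 2 - 1 := by
  have hg0 : g ≠ 0 := fun h0 => hg (h0 ▸ dvd_zero X)
  obtain ⟨p, hp⟩ := exists_prod_X_sub_C_dvd_X_mul_sq_sub_one g.roots fun μ hμ h0 => by
    rw [h0, mem_roots hg0, ← dvd_iff_isRoot, C_0, sub_zero] at hμ
    exact hg hμ
  refine ⟨p, ?_⟩
  rw [(IsAlgClosed.splits g).eq_prod_roots]
  exact (C_mul_dvd (leadingCoeff_ne_zero.2 hg0)).2 hp

-- `aeval q a` is the projection onto the Fitting component on which `q` is invertible, and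
-- `aeval q c` is there an inverse square root of `q`.
theorem exists_fitting_idempotent_and_inverse_sqrt [IsAlgClosed F] [NeZero (2 : F)] {R : Type*}
    [Ring R] [Algebra F R] {q : R} (hq : IsIntegral F q) :
    ∃ a c : F[X], IsIdempotentElem (aeval q a) ∧ IsNilpotent (aeval q (X * (1 - a))) ∧
      IsUnit (aeval q c) ∧ aeval q (c * c * (X * a)) = aeval q a := by
  obtain ⟨g, hg, hXg⟩ :=
    (minpoly F q).exists_eq_pow_rootMultiplicity_mul_and_not_dvd (minpoly.ne_zero hq) 0
  set j := (minpoly F q).rootMultiplicity 0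
  rw [map_zero, sub_zero] at hg hXg
  have hvanish (w : F[X]) : aeval q (X ^ j * g * w) = 0 := by
    rw [map_mul, ← hg, minpoly.aeval, zero_mul]
  have hcongr {x y : F[X]} (w : F[X]) (hxy : x = y + X ^ j * g * w) : aeval q x = aeval q y := by
    rw [hxy, map_add, hvanish, add_zero]
  obtain ⟨u, w, huw⟩ : IsCoprime (X ^ j) g :=
    ((irreducible_X.coprime_iff_not_dvd).2 hXg).pow_left
  obtain ⟨p, r, hr⟩ := exists_dvd_X_mul_sq_sub_one hXg
  have hmul (v : F[X]) : aeval q ((u * X ^ j * p + w * g) * (u * X ^ j * v + w * g))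
      = aeval q (u * X ^ j * (p * v) + w * g) :=
    hcongr (u * w * (p + v - p * v - 1)) (by
      linear_combination (u * X ^ j * (p * v) + w * g) * huw)
  refine ⟨u * X ^ j, u * X ^ j * p + w * g, ?_, ⟨j + 1, ?_⟩, ?_, ?_⟩
  · rw [IsIdempotentElem, ← map_mul]
    exact hcongr (-u * w) (by linear_combination u * X ^ j * huw)
  · have hpow : (X * (1 - u * X ^ j)) ^ (j + 1) = X ^ j * g * (X * w * (w * g) ^ j) := by
      rw [← huw, add_sub_cancel_left]
      ring
    rw [← map_pow, hpow, hvanish]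
  · have hcomm : Commute (aeval q (u * X ^ j * p + w * g))
        (aeval q (u * X ^ j * (X * p) + w * g)) := (Commute.all _ _).map (aeval q)
    have hinv : aeval q (u * X ^ j * p + w * g) * aeval q (u * X ^ j * (X * p) + w * g) = 1 := by
      rw [← map_mul, hmul, ← map_one (aeval (R := F) q)]
      exact hcongr (u * r) (by linear_combination huw + u * X ^ j * hr)
    exact (hcomm.isUnit_mul_iff.1 (hinv ▸ isUnit_one)).1
  · rw [map_mul, hmul, ← map_mul]
    exact hcongr (u * r - u * w * X * p ^ 2 + w * u * X) (by
      linear_combination u * X ^ j * X * p ^ 2 * huw + u * X ^ j * hr)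

variable {ι : Type*} [Fintype ι] [DecidableEq ι]

theorem pow_card_eq_zero_of_isNilpotent {y : Matrix ι ι F} (hy : IsNilpotent y) :
    y ^ Fintype.card ι = 0 := by
  have hchar := sub_eq_zero.1 (isNilpotent_charpoly_sub_pow_of_isNilpotent hy).eq_zero
  rw [← aeval_X_pow (R := F) y, ← hchar, aeval_self_charpoly]

theorem add_pow_succ_of_mul_eq_zero {R : Type*} [Semiring R] {a b : R} (hab : a * b = 0)
    (hba : b * a = 0) (k : ℕ) : (a + b) ^ (k + 1) = a ^ (k + 1) + b ^ (k + 1) := by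
  induction k with
  | zero => simp only [zero_add, pow_one]
  | succ k ih =>
    rw [pow_succ, ih, mul_add, add_mul, add_mul, ← pow_succ, ← pow_succ, pow_succ b k,
      pow_succ a k, mul_assoc, mul_assoc, hab, hba, mul_zero, mul_zero, zero_add, add_zero]

omit [DecidableEq ι] in
theorem rank_lt_rank_add {e a b : Matrix ι ι F} (hea : e * a = a) (hae : a * e = a)
    (heb : e * b = 0) (hbe : b * e = 0) (hb : b ≠ 0) : a.rank < (a + b).rank := by
  classical
  refine Submodule.finrank_lt_finrank_of_lt (lt_of_le_not_ge ?_ fun hle => hb ?_)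
  · rintro _ ⟨x, rfl⟩
    refine ⟨e *ᵥ x, ?_⟩
    rw [mulVecLin_apply, mulVecLin_apply, mulVec_mulVec, add_mul, hae, hbe, add_zero]
  · refine ext_of_mulVec_single fun i => ?_
    obtain ⟨y, hy⟩ := hle ⟨Pi.single i 1, rfl⟩
    have hproj := congrArg ((1 - e) *ᵥ ·) hy
    simp only [mulVecLin_apply, mulVec_mulVec, sub_mul, mul_add, one_mul, hea, heb, sub_self,
      zero_mulVec, zero_add, sub_zero] at hproj
    rw [zero_mulVec, hproj]

theorem exists_isUnit_one_add_smul [Infinite F] (z : Matrix ι ι F) {α : F} (hα : α ≠ 0) (β : F) :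
    ∃ t : F, IsUnit (1 + t • z) ∧ t * (α + t * β) ≠ 0 := by
  obtain ⟨c, hc⟩ := ((z.finite_spectrum.insert 0).insert (β / α)).exists_notMem
  simp only [Set.mem_insert_iff, not_or] at hc
  obtain ⟨hcβ, hc0, hcz⟩ := hc
  refine ⟨-c⁻¹, ?_, mul_ne_zero (neg_ne_zero.2 (inv_ne_zero hc0)) fun h0 => hcβ ?_⟩
  · have hunit := (spectrum.notMem_iff.1 hcz).smul (Units.mk0 c hc0)⁻¹
    convert hunit using 1
    rw [Units.smul_def, Units.val_inv_eq_inv_val, Units.val_mk0, smul_sub,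
      Algebra.algebraMap_eq_smul_one, smul_smul, inv_mul_cancel₀ hc0, one_smul, neg_smul,
      sub_eq_add_neg]
  · field_simp
    field_simp at h0
    linear_combination h0

end SpectralNormalization

section TransitivePairs

open Polynomial

variable {ι : Type*} [Fintype ι] [DecidableEq ι] {s k : Matrix ι ι F}

section ParityVectors

variable [NeZero (2 : F)]

theorem covector_eq_zero_of_forall_even (hs : s * s = 1) {g : ι → F} (hg : g ᵥ* s = g)
    (hzero : ∀ w, s *ᵥ w = w → g ⬝ᵥ w = 0) : g = 0 := by
  refine dotProduct_eq_zero g fun x => (mul_eq_zero.1 ?_).resolve_left (two_ne_zero (α := F))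
  have hx := hzero (x + s *ᵥ x) (by rw [mulVec_add, mulVec_mulVec, hs, one_mulVec, add_comm])
  rwa [dotProduct_add, dotProduct_mulVec, hg, ← two_mul] at hx

theorem vector_eq_zero_of_forall_even (hs : s * s = 1) {w : ι → F} (hw : s *ᵥ w = w)
    (hzero : ∀ g, g ᵥ* s = g → g ⬝ᵥ w = 0) : w = 0 := by
  refine covector_eq_zero_of_forall_even (s := sᵀ) (by rw [← transpose_mul, hs, transpose_one])
    (by rw [vecMul_transpose, hw]) fun g hg => ?_
  rw [dotProduct_comm]
  exact hzero g (by rwa [mulVec_transpose] at hg)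

theorem covector_eq_zero_of_forall_odd (hs : s * s = 1) {g : ι → F} (hg : g ᵥ* s = -g)
    (hzero : ∀ w, s *ᵥ w = -w → g ⬝ᵥ w = 0) : g = 0 :=
  covector_eq_zero_of_forall_even (s := -s) (by rw [neg_mul_neg, hs])
    (by rw [vecMul_neg, hg, neg_neg]) fun w hw => hzero w (by
      rwa [neg_mulVec, neg_eq_iff_eq_neg] at hw)

theorem vector_eq_zero_of_forall_odd (hs : s * s = 1) {w : ι → F} (hw : s *ᵥ w = -w)
    (hzero : ∀ g, g ᵥ* s = -g → g ⬝ᵥ w = 0) : w = 0 :=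
  vector_eq_zero_of_forall_even (s := -s) (by rw [neg_mul_neg, hs])
    (by rw [neg_mulVec, hw, neg_neg]) fun g hg => hzero g (by
      rwa [vecMul_neg, neg_eq_iff_eq_neg] at hg)

end ParityVectors

theorem exists_mul_mul_eq_of_isUnit {G : Submodule F (Matrix ι ι F)} (hk : IsUnit k)
    (hG : ∀ x ∈ G, k * x * k ∈ G) {y : Matrix ι ι F} (hy : y ∈ G) : ∃ x ∈ G, k * x * k = y := by
  let conj : G →ₗ[F] G := (LinearMap.mulLeftRight F (k, k)).restrict hG
  have hinj : Function.Injective conj := fun x y hxy =>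
    Subtype.ext (hk.mul_left_cancel (hk.mul_right_cancel (congrArg Subtype.val hxy)))
  obtain ⟨x, hx⟩ := LinearMap.surjective_of_injective hinj ⟨y, hy⟩
  exact ⟨x, x.2, congrArg Subtype.val hx⟩

/-- A nonzero even vector `v` and a nonzero even covector `f` on which the superalgebra with even
part `E` and odd part `O` acts as freely as the identity `f (b v) = (f b) v` permits. -/
structure IsTransitivePair (s : Matrix ι ι F) (E O : Submodule F (Matrix ι ι F)) (v f : ι → F) :
    Prop where
  vector_ne_zero : v ≠ 0
  covector_ne_zero : f ≠ 0
  parity_mulVec : s *ᵥ v = v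
  vecMul_parity : f ᵥ* s = f
  exists_even : ∀ w g, s *ᵥ w = w → g ᵥ* s = g → f ⬝ᵥ w = g ⬝ᵥ v →
    ∃ b ∈ E, b *ᵥ v = w ∧ f ᵥ* b = g
  exists_odd : ∀ w g, s *ᵥ w = -w → g ᵥ* s = -g → ∃ x ∈ O, x *ᵥ v = w ∧ f ᵥ* x = g

/-- `q ∈ E` represents the functional `b ↦ f (b v)` on `E` with respect to the trace form. -/
def RepresentsPair (E : Submodule F (Matrix ι ι F)) (v f : ι → F) (q : Matrix ι ι F) : Prop :=
  q ∈ E ∧ ∀ b ∈ E, (q * b).trace = f ⬝ᵥ b *ᵥ v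

variable {E O : Submodule F (Matrix ι ι F)} {v f : ι → F} {q : Matrix ι ι F}

theorem IsSimpleJordanSuper.exists_representsPair [CharZero F] (h : IsSimpleJordanSuper s E O)
    (v f : ι → F) : ∃ q, RepresentsPair E v f q :=
  h.exists_even_forall_trace_mul_eq
    ((dotProductBilin F F f).comp ((mulVecBilin F F).flip v))

theorem IsTransitivePair.ne_zero [NeZero (2 : F)] (hpair : IsTransitivePair s E O v f)
    (hs : s * s = 1) (hq : RepresentsPair E v f q) : q ≠ 0 := by
  rintro rfl
  obtain ⟨φ, hφ, hφv⟩ : ∃ φ, φ ᵥ* s = φ ∧ φ ⬝ᵥ v ≠ 0 := by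
    by_contra! hall
    exact hpair.vector_ne_zero (vector_eq_zero_of_forall_even hs hpair.parity_mulVec hall)
  obtain ⟨ψ, hψ, hfψ⟩ : ∃ ψ, s *ᵥ ψ = ψ ∧ f ⬝ᵥ ψ ≠ 0 := by
    by_contra! hall
    exact hpair.covector_ne_zero (covector_eq_zero_of_forall_even hs hpair.vecMul_parity hall)
  obtain ⟨b, hb, -, hfb⟩ := hpair.exists_even ((φ ⬝ᵥ v / f ⬝ᵥ ψ) • ψ) φ (by rw [mulVec_smul, hψ])
    hφ (by rw [dotProduct_smul, smul_eq_mul, div_mul_cancel₀ _ hfψ])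
  have htrace := hq.2 b hb
  rw [zero_mul, trace_zero, dotProduct_mulVec, hfb] at htrace
  exact hφv htrace.symm

namespace IsJordanSuper

variable [NeZero (2 : F)]

theorem isTransitivePair_mulVec_vecMul (h : IsJordanSuper s E O)
    (hpair : IsTransitivePair s E O v f) (hk : k ∈ E) (hunit : IsUnit k) :
    IsTransitivePair s E O (k *ᵥ v) (f ᵥ* k) := by
  have hcomm := h.even_comm k hk
  have hleft := mulVec_injective_iff_isUnit.2 hunit
  have hright := vecMul_injective_iff_isUnit.2 hunit
  refine ⟨fun h0 => hpair.vector_ne_zero (hleft (h0.trans (mulVec_zero k).symm)),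
    fun h0 => hpair.covector_ne_zero (hright (h0.trans (zero_vecMul k).symm)), ?_, ?_, ?_, ?_⟩
  · rw [mulVec_mulVec, hcomm, ← mulVec_mulVec, hpair.parity_mulVec]
  · rw [vecMul_vecMul, ← hcomm, ← vecMul_vecMul, hpair.vecMul_parity]
  · intro w g hw hg hwg
    obtain ⟨b, hb, hbv, hfb⟩ := hpair.exists_even (k *ᵥ w) (g ᵥ* k)
      (by rw [mulVec_mulVec, hcomm, ← mulVec_mulVec, hw])
      (by rw [vecMul_vecMul, ← hcomm, ← vecMul_vecMul, hg])
      (by rw [dotProduct_mulVec, hwg, dotProduct_mulVec])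
    obtain ⟨c, hc, rfl⟩ := exists_mul_mul_eq_of_isUnit hunit
      (fun x hx => h.mul_mul_self_mem_even hk hx) hb
    refine ⟨c, hc, hleft ?_, hright ?_⟩
    · simpa only [mulVec_mulVec, mul_assoc] using hbv
    · simpa only [vecMul_vecMul, mul_assoc] using hfb
  · intro w g hw hg
    obtain ⟨b, hb, hbv, hfb⟩ := hpair.exists_odd (k *ᵥ w) (g ᵥ* k)
      (by rw [mulVec_mulVec, hcomm, ← mulVec_mulVec, hw, mulVec_neg])
      (by rw [vecMul_vecMul, ← hcomm, ← vecMul_vecMul, hg, neg_vecMul])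
    obtain ⟨c, hc, rfl⟩ := exists_mul_mul_eq_of_isUnit hunit
      (fun x hx => h.mul_mul_self_mem_odd hk hx) hb
    refine ⟨c, hc, hleft ?_, hright ?_⟩
    · simpa only [mulVec_mulVec, mul_assoc] using hbv
    · simpa only [vecMul_vecMul, mul_assoc] using hfb

theorem representsPair_mul_mul (h : IsJordanSuper s E O) (hq : RepresentsPair E v f q)
    (hk : k ∈ E) : RepresentsPair E (k *ᵥ v) (f ᵥ* k) (k * q * k) := by
  refine ⟨h.mul_mul_self_mem_even hk hq.1, fun b hb => ?_⟩
  calc (k * q * k * b).trace = (q * (k * b * k)).trace := by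
        rw [mul_assoc, mul_assoc, trace_mul_comm, mul_assoc, mul_assoc]
    _ = f ⬝ᵥ (k * b * k) *ᵥ v := hq.2 _ (h.mul_mul_self_mem_even hk hb)
    _ = (f ᵥ* k) ⬝ᵥ b *ᵥ k *ᵥ v := by
        rw [← mulVec_mulVec, ← mulVec_mulVec, dotProduct_mulVec]

theorem aeval_mem (h : IsJordanSuper s E O) (hone : 1 ∈ E) (hq : q ∈ E) (p : F[X]) :
    aeval q p ∈ E := by
  rw [← p.divX_mul_X_add, map_add, aeval_C, Algebra.algebraMap_eq_smul_one]
  refine E.add_mem ?_ (E.smul_mem _ hone)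
  simpa only [zero_add, pow_one] using h.aeval_mul_X_pow_succ_mem hq p.divX 0

end IsJordanSuper

theorem trace_conj_one_add_smul {y z : Matrix ι ι F} (hy : y.trace = 0) (t : F) :
    ((1 + t • z) * y * (1 + t • z)).trace
      = t * (2 * (y * z).trace + t * (y * (z * z)).trace) := by
  have hcomm := trace_mul_comm z y
  have hcomm' := trace_mul_comm (z * y) z
  simp only [add_mul, mul_add, one_mul, mul_one, smul_mul_assoc, mul_smul_comm, trace_add,
    trace_smul, smul_eq_mul, mul_assoc] at hcomm' ⊢
  rw [trace_mul_comm z (y * z), mul_assoc] at *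
  linear_combination hy + t * hcomm

theorem rank_pow_lt_rank_conj_pow {e : Matrix ι ι F} (hidem : IsIdempotentElem e)
    (hcomm : q * e = e * q) (hnil : IsNilpotent (q * (1 - e))) (hke : k * e = e) (hek : e * k = e)
    (hconj : ¬ IsNilpotent (k * (q * (1 - e)) * k)) :
    (q ^ (Fintype.card ι + 1)).rank < ((k * q * k) ^ (Fintype.card ι + 1)).rank := by
  have hqe : q = q * e + q * (1 - e) := by rw [mul_sub, mul_one, add_sub_cancel]
  have hye : q * (1 - e) * e = 0 := by rw [mul_assoc, hidem.one_sub_mul_self, mul_zero]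
  have hey : e * (q * (1 - e)) = 0 := by
    rw [← mul_assoc, ← hcomm, mul_assoc, hidem.mul_one_sub_self, mul_zero]
  generalize q * (1 - e) = y at *
  have heb : e * (k * y * k) = 0 := by rw [← mul_assoc, ← mul_assoc, hek, hey, zero_mul]
  have hbe : k * y * k * e = 0 := by rw [mul_assoc, hke, mul_assoc, hye, mul_zero]
  have hkqk : k * q * k = q * e + k * y * k := by
    conv_lhs => rw [hqe, mul_add, add_mul, hcomm, ← mul_assoc, hke, ← hcomm, mul_assoc q, hek]
  have hqpow : q ^ (Fintype.card ι + 1) = (q * e) ^ (Fintype.card ι + 1) := by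
    conv_lhs => rw [hqe]
    rw [add_pow_succ_of_mul_eq_zero (by rw [mul_assoc, hey, mul_zero])
      (by rw [hcomm, ← mul_assoc, hye, zero_mul]), pow_succ y, pow_card_eq_zero_of_isNilpotent hnil,
      zero_mul, add_zero]
  rw [hkqk, hqpow, add_pow_succ_of_mul_eq_zero (by rw [mul_assoc, heb, mul_zero])
    (by rw [hcomm, ← mul_assoc, hbe, zero_mul])]
  refine rank_lt_rank_add (e := e) ?_ ?_ ?_ ?_ fun h0 => hconj ⟨_, h0⟩
  · rw [pow_succ', hcomm, ← mul_assoc, ← mul_assoc, hidem.eq]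
  · rw [pow_succ, mul_assoc, mul_assoc, hidem.eq]
  · rw [pow_succ', ← mul_assoc, heb, zero_mul]
  · rw [pow_succ, mul_assoc, hbe, mul_zero]

theorem IsSimpleJordanSuper.exists_isUnit_rank_pow_lt [CharZero F] (h : IsSimpleJordanSuper s E O)
    (hone : 1 ∈ E) {e : Matrix ι ι F} (he : e ∈ E) (hidem : IsIdempotentElem e)
    (hcomm : q * e = e * q) (hy : q * (1 - e) ∈ E) (hnil : IsNilpotent (q * (1 - e)))
    (hne : q * (1 - e) ≠ 0) : ∃ k ∈ E, IsUnit k ∧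
      (q ^ (Fintype.card ι + 1)).rank < ((k * q * k) ^ (Fintype.card ι + 1)).rank := by
  obtain ⟨z, hz, htrace⟩ : ∃ z ∈ E, (q * (1 - e) * z).trace ≠ 0 := by
    by_contra! hall
    exact hne (h.eq_zero_of_forall_trace_mul_eq_zero hy hall)
  have hzE := h.mul_mul_self_mem_even (E.sub_mem hone he) hz
  have hez : e * ((1 - e) * z * (1 - e)) = 0 := by
    rw [← mul_assoc, ← mul_assoc, hidem.mul_one_sub_self, zero_mul, zero_mul]
  have hze : (1 - e) * z * (1 - e) * e = 0 := by
    rw [mul_assoc, hidem.one_sub_mul_self, mul_zero]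
  have htrace' : (q * (1 - e) * ((1 - e) * z * (1 - e))).trace ≠ 0 := by
    have hcomm' : (1 - e) * q = q * (1 - e) := by rw [sub_mul, mul_sub, hcomm, one_mul, mul_one]
    have hidem' := hidem.one_sub.eq
    rwa [← mul_assoc, trace_mul_comm, ← mul_assoc, ← mul_assoc, ← mul_assoc, hcomm',
      mul_assoc q, hidem', mul_assoc q, hidem']
  generalize (1 - e) * z * (1 - e) = z at *
  obtain ⟨t, hunit, ht⟩ := exists_isUnit_one_add_smul z (_root_.mul_ne_zero two_ne_zero htrace')
    (q * (1 - e) * (z * z)).trace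
  refine ⟨1 + t • z, E.add_mem hone (E.smul_mem t hzE), hunit,
    rank_pow_lt_rank_conj_pow hidem hcomm hnil ?_ ?_ fun hconj => ht ?_⟩
  · rw [add_mul, one_mul, smul_mul_assoc, hze, smul_zero, add_zero]
  · rw [mul_add, mul_one, mul_smul_comm, hez, smul_zero, add_zero]
  · rw [← trace_conj_one_add_smul (isNilpotent_trace_of_isNilpotent hnil).eq_zero]
    exact (isNilpotent_trace_of_isNilpotent hconj).eq_zero

theorem IsSimpleJordanSuper.exists_isTransitivePair_isIdempotentElem [CharZero F] [IsAlgClosed F]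
    (h : IsSimpleJordanSuper s E O) (hone : 1 ∈ E) (hpair : IsTransitivePair s E O v f) :
    ∃ v f q, IsTransitivePair s E O v f ∧ RepresentsPair E v f q ∧ IsIdempotentElem q := by
  let ranks : Set ℕ := {r | ∃ v f q, IsTransitivePair s E O v f ∧ RepresentsPair E v f q ∧
    (q ^ (Fintype.card ι + 1)).rank = r}
  obtain ⟨q, hq⟩ := h.exists_representsPair v f
  have hbdd : BddAbove ranks := ⟨Fintype.card ι, by
    rintro _ ⟨_, _, q, -, -, rfl⟩
    exact rank_le_card_width _⟩
  obtain ⟨v, f, q, hpair, hq, hmax⟩ := Nat.sSup_mem (s := ranks) ⟨_, v, f, q, hpair, hq, rfl⟩ hbdd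
  obtain ⟨a, c, hidem, hnil, hunit, hsqrt⟩ :=
    exists_fitting_idempotent_and_inverse_sqrt (F := F) (Matrix.isIntegral q)
  rw [map_mul, aeval_X, map_sub, map_one] at hnil
  have hy : q * (1 - aeval q a) = 0 := by
    by_contra hne
    have hcomm : Commute q (aeval q a) := by
      simpa only [aeval_X] using (Commute.all X a).map (aeval q)
    have hmem := h.aeval_mem hone hq.1 (X * (1 - a))
    rw [map_mul, aeval_X, map_sub, map_one] at hmem
    obtain ⟨k, hk, hkunit, hlt⟩ := h.exists_isUnit_rank_pow_lt hone (h.aeval_mem hone hq.1 a) hidem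
      hcomm.eq hmem hnil hne
    exact (hmax ▸ hlt).not_ge (le_csSup hbdd ⟨_, _, _,
      h.isTransitivePair_mulVec_vecMul hpair hk hkunit, h.representsPair_mul_mul hq hk, rfl⟩)
  have hc := h.aeval_mem hone hq.1 c
  refine ⟨_, _, _, h.isTransitivePair_mulVec_vecMul hpair hc hunit,
    h.representsPair_mul_mul hq hc, ?_⟩
  have hqa : aeval q (X * a) = q := by
    rw [mul_sub, mul_one, sub_eq_zero] at hy
    rw [map_mul, aeval_X, ← hy]
  suffices hconj : aeval q c * q * aeval q c = aeval q a by rwa [hconj]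
  rw [← hsqrt]
  conv_lhs => enter [1, 2]; rw [← hqa]
  rw [← map_mul, ← map_mul, mul_right_comm]

end TransitivePairs

section IdempotentPairs

variable {ι : Type*} [Fintype ι] [DecidableEq ι] {s k q x y : Matrix ι ι F}
  {E O : Submodule F (Matrix ι ι F)} {v f u w g : ι → F}

omit [DecidableEq ι] in
theorem parity_mulVec_of_anticommute (hx : s * x = -(x * s)) (hw : s *ᵥ w = w) :
    s *ᵥ x *ᵥ w = -(x *ᵥ w) := by
  rw [mulVec_mulVec, hx, neg_mulVec, ← mulVec_mulVec, hw]

omit [DecidableEq ι] in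
theorem vecMul_parity_of_anticommute (hx : s * x = -(x * s)) (hg : g ᵥ* s = g) :
    (g ᵥ* x) ᵥ* s = -(g ᵥ* x) := by
  rw [vecMul_vecMul, ← neg_eq_iff_eq_neg.2 hx, vecMul_neg, ← vecMul_vecMul, hg]

/-- A transitive pair `(v, f)` for a unital simple superalgebra whose functional `b ↦ f (b v)` is
represented by an idempotent `q`. -/
structure IsIdempotentPair (s : Matrix ι ι F) (E O : Submodule F (Matrix ι ι F)) (v f : ι → F)
    (q : Matrix ι ι F) : Prop extends IsSimpleJordanSuper s E O, IsTransitivePair s E O v f where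
  one_mem : 1 ∈ E
  represents : RepresentsPair E v f q
  isIdempotentElem : IsIdempotentElem q

/-- The odd part of the Peirce component of an idempotent `q` for the Jordan eigenvalue `1/2`. -/
def oddPeirceHalf (O : Submodule F (Matrix ι ι F)) (q : Matrix ι ι F) :
    Submodule F (Matrix ι ι F) :=
  O ⊓ LinearMap.ker (LinearMap.mulLeft F q + LinearMap.mulRight F q - LinearMap.id)

theorem mem_oddPeirceHalf : x ∈ oddPeirceHalf O q ↔ x ∈ O ∧ q * x + x * q = x :=
  and_congr_right fun _ => sub_eq_zero

namespace IsIdempotentPair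

variable [CharZero F]

theorem ne_zero (h : IsIdempotentPair s E O v f q) : q ≠ 0 :=
  h.toIsTransitivePair.ne_zero h.parity_mul_self h.represents

theorem dotProduct_ne_zero (h : IsIdempotentPair s E O v f q) : f ⬝ᵥ v ≠ 0 := fun h0 =>
  h.ne_zero (eq_zero_of_isIdempotentElem_of_trace_eq_zero h.isIdempotentElem (by
    rw [← mul_one q, h.represents.2 1 h.one_mem, one_mulVec, h0]))

theorem exists_even_vecMul_eq (h : IsIdempotentPair s E O v f q) (hg : g ᵥ* s = g) :
    ∃ b ∈ E, b *ᵥ v = (g ⬝ᵥ v / f ⬝ᵥ v) • v ∧ f ᵥ* b = g :=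
  h.exists_even _ g (by rw [mulVec_smul, h.parity_mulVec]) hg
    (by rw [dotProduct_smul, smul_eq_mul, div_mul_cancel₀ _ h.dotProduct_ne_zero])

theorem exists_even_mulVec_eq (h : IsIdempotentPair s E O v f q) (hw : s *ᵥ w = w) :
    ∃ b ∈ E, b *ᵥ v = w ∧ f ᵥ* b = (f ⬝ᵥ w / f ⬝ᵥ v) • f :=
  h.exists_even w _ hw (by rw [smul_vecMul, h.vecMul_parity])
    (by rw [smul_dotProduct, smul_eq_mul, div_mul_cancel₀ _ h.dotProduct_ne_zero])

omit [CharZero F] in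
theorem dotProduct_add_dotProduct_eq_zero (h : IsIdempotentPair s E O v f q) {c : Matrix ι ι F}
    (hc : c ∈ E) (hcq : c * q + q * c = 0) {b : Matrix ι ι F} (hb : b ∈ E) :
    (f ᵥ* c) ⬝ᵥ b *ᵥ v + (f ᵥ* b) ⬝ᵥ c *ᵥ v = 0 :=
  calc (f ᵥ* c) ⬝ᵥ b *ᵥ v + (f ᵥ* b) ⬝ᵥ c *ᵥ v = f ⬝ᵥ (c * b + b * c) *ᵥ v := by
        rw [add_mulVec, dotProduct_add, ← mulVec_mulVec, ← mulVec_mulVec, dotProduct_mulVec f c,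
          dotProduct_mulVec f b]
    _ = (q * (c * b + b * c)).trace := (h.represents.2 _ (h.even_even c hc b hb)).symm
    _ = ((c * q + q * c) * b).trace := by
        rw [mul_add, add_mul, trace_add, trace_add, ← mul_assoc q b, trace_mul_comm (q * b),
          add_comm, mul_assoc, mul_assoc]
    _ = 0 := by rw [hcq, zero_mul, trace_zero]

theorem mulVec_eq_zero_and_vecMul_eq_zero (h : IsIdempotentPair s E O v f q) {c : Matrix ι ι F}
    (hc : c ∈ E) (hcq : c * q + q * c = 0) : c *ᵥ v = 0 ∧ f ᵥ* c = 0 := by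
  have hcomm := h.even_comm c hc
  have hsum {b : Matrix ι ι F} (hb : b ∈ E) := h.dotProduct_add_dotProduct_eq_zero hc hcq hb
  have hfcv : (f ᵥ* c) ⬝ᵥ v = 0 := by
    refine eq_zero_of_add_self_eq_zero F ?_
    simpa only [one_mulVec, vecMul_one, dotProduct_mulVec] using hsum h.one_mem
  constructor
  · refine vector_eq_zero_of_forall_even h.parity_mul_self ?_ fun g hg => ?_
    · rw [mulVec_mulVec, hcomm, ← mulVec_mulVec, h.parity_mulVec]
    · obtain ⟨b, hb, hbv, hfb⟩ := h.exists_even_vecMul_eq hg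
      simpa only [hbv, hfb, dotProduct_smul, hfcv, smul_zero, zero_add] using hsum hb
  · refine covector_eq_zero_of_forall_even h.parity_mul_self ?_ fun w hw => ?_
    · rw [vecMul_vecMul, ← hcomm, ← vecMul_vecMul, h.vecMul_parity]
    · obtain ⟨b, hb, hbv, hfb⟩ := h.exists_even_mulVec_eq hw
      simpa only [hbv, hfb, smul_dotProduct, dotProduct_mulVec f, hfcv, smul_zero, add_zero]
        using hsum hb

theorem mulVec_vector_and_vecMul_covector (h : IsIdempotentPair s E O v f q) :
    q *ᵥ v = v ∧ f ᵥ* q = f := by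
  have hzero := h.mulVec_eq_zero_and_vecMul_eq_zero (E.sub_mem h.one_mem h.represents.1) (by
    rw [h.isIdempotentElem.one_sub_mul_self, h.isIdempotentElem.mul_one_sub_self, add_zero])
  rw [sub_mulVec, one_mulVec, vecMul_sub, vecMul_one, sub_eq_zero, sub_eq_zero] at hzero
  exact ⟨hzero.1.symm, hzero.2.symm⟩

theorem mulVec_odd_eq_zero (h : IsIdempotentPair s E O v f q) (hw : s *ᵥ w = -w) :
    q *ᵥ w = 0 := by
  have hq := h.represents.1
  obtain ⟨x, hx, rfl, -⟩ := h.exists_odd w 0 hw (by rw [zero_vecMul, neg_zero])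
  refine vector_eq_zero_of_forall_odd h.parity_mul_self ?_ fun g hg => ?_
  · rw [mulVec_mulVec, h.even_comm q hq, ← mulVec_mulVec, hw, mulVec_neg]
  · obtain ⟨y, hy, hyv, rfl⟩ := h.exists_odd 0 g (by rw [mulVec_zero, neg_zero]) hg
    have hrep := h.represents.2 _ (h.odd_odd _ (h.mul_mul_self_mem_odd hq hx) y hy)
    have htrace : (q * (q * x * q * y - y * (q * x * q))).trace = 0 := by
      rw [mul_sub, trace_sub, trace_mul_comm q (y * _), sub_eq_zero, mul_assoc y, mul_assoc _ q q,
        h.isIdempotentElem.eq, trace_mul_comm y]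
      simp only [← mul_assoc, h.isIdempotentElem.eq]
    rw [htrace, sub_mulVec, ← mulVec_mulVec, hyv, mulVec_zero, zero_sub, dotProduct_neg,
      ← mulVec_mulVec, dotProduct_mulVec, ← mulVec_mulVec, ← mulVec_mulVec,
      h.mulVec_vector_and_vecMul_covector.1] at hrep
    exact neg_eq_zero.1 hrep.symm

theorem mul_parity (h : IsIdempotentPair s E O v f q) : q * s = q := by
  have hzero : q * (1 - s) = 0 := ext_of_mulVec_single fun j => by
    rw [← mulVec_mulVec, zero_mulVec, h.mulVec_odd_eq_zero]
    rw [mulVec_mulVec, mul_sub, h.parity_mul_self, mul_one, ← neg_mulVec, neg_sub]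
  rw [mul_sub, mul_one, sub_eq_zero] at hzero
  exact hzero.symm

theorem parity_mul (h : IsIdempotentPair s E O v f q) : s * q = q := by
  rw [h.even_comm q h.represents.1, h.mul_parity]

theorem vecMul_odd_eq_zero (h : IsIdempotentPair s E O v f q) (hg : g ᵥ* s = -g) :
    g ᵥ* q = 0 := by
  refine eq_zero_of_add_self_eq_zero F ?_
  conv_lhs => enter [1]; rw [← h.parity_mul, ← vecMul_vecMul, hg, neg_vecMul]
  exact neg_add_cancel _

theorem mul_odd_mul_eq_zero (h : IsIdempotentPair s E O v f q) (hx : x ∈ O) : q * x * q = 0 := by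
  refine eq_zero_of_add_self_eq_zero F ?_
  conv_lhs =>
    enter [1, 1]
    rw [← h.mul_parity, mul_assoc, h.odd_anticomm x hx]
  rw [mul_neg, neg_mul, ← mul_assoc, mul_assoc _ s, h.parity_mul, neg_add_cancel]

theorem supertraceNondegenerate (h : IsIdempotentPair s E O v f q) :
    SupertraceNondegenerate s E O := by
  refine h.supertraceNondegenerate_or_supertraceIsotropic.resolve_right fun hiso => ?_
  have hq : q ∈ traceRadical s E E := hiso.1.symm ▸ h.represents.1
  have htrace := hq.2 q h.represents.1
  rw [h.isIdempotentElem.eq, h.parity_mul] at htrace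
  exact h.ne_zero (eq_zero_of_isIdempotentElem_of_trace_eq_zero h.isIdempotentElem htrace)

theorem exists_mem_oddPeirceHalf (h : IsIdempotentPair s E O v f q) (hw : s *ᵥ w = -w)
    (hg : g ᵥ* s = -g) : ∃ x ∈ oddPeirceHalf O q, x *ᵥ v = w ∧ f ᵥ* x = g := by
  obtain ⟨x, hx, rfl, rfl⟩ := h.exists_odd w g hw hg
  obtain ⟨hqv, hfq⟩ := h.mulVec_vector_and_vecMul_covector
  refine ⟨q * x + x * q, mem_oddPeirceHalf.2 ⟨h.even_odd q h.represents.1 x hx, ?_⟩, ?_, ?_⟩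
  · rw [mul_add, add_mul, ← mul_assoc, ← mul_assoc, h.mul_odd_mul_eq_zero hx, mul_assoc x,
      h.isIdempotentElem.eq, add_zero, zero_add]
  · rw [add_mulVec, ← mulVec_mulVec, ← mulVec_mulVec, hqv, h.mulVec_odd_eq_zero hw, zero_add]
  · rw [vecMul_add, ← vecMul_vecMul, ← vecMul_vecMul, hfq, h.vecMul_odd_eq_zero hg, add_zero]

theorem trace_parity_mul_mul_eq (h : IsIdempotentPair s E O v f q) (hx : x ∈ oddPeirceHalf O q)
    (hy : y ∈ O) : (s * (x * y)).trace = (f ᵥ* x) ⬝ᵥ y *ᵥ v - (f ᵥ* y) ⬝ᵥ x *ᵥ v := by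
  obtain ⟨hxO, hhalf⟩ := mem_oddPeirceHalf.1 hx
  have hsx : s * x = q * x - x * q := by
    conv_lhs => rw [← hhalf]
    rw [mul_add, ← mul_assoc, ← mul_assoc, h.parity_mul, h.odd_anticomm x hxO, neg_mul, mul_assoc x,
      h.parity_mul, ← sub_eq_add_neg]
  calc (s * (x * y)).trace = (q * (x * y - y * x)).trace := by
        rw [← mul_assoc, hsx, sub_mul, mul_sub, trace_sub, trace_sub, mul_assoc, mul_assoc x,
          trace_mul_comm x, mul_assoc]
    _ = f ⬝ᵥ (x * y - y * x) *ᵥ v := h.represents.2 _ (h.odd_odd x hxO y hy)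
    _ = (f ᵥ* x) ⬝ᵥ y *ᵥ v - (f ᵥ* y) ⬝ᵥ x *ᵥ v := by
        rw [sub_mulVec, dotProduct_sub, ← mulVec_mulVec, ← mulVec_mulVec, dotProduct_mulVec f x,
          dotProduct_mulVec f y]

theorem eq_zero_of_mem_oddPeirceHalf (h : IsIdempotentPair s E O v f q)
    (hx : x ∈ oddPeirceHalf O q) (hxv : x *ᵥ v = 0) (hfx : f ᵥ* x = 0) : x = 0 := by
  rw [← Submodule.mem_bot F, ← h.supertraceNondegenerate.2]
  refine ⟨(mem_oddPeirceHalf.1 hx).1, fun y hy => ?_⟩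
  rw [h.trace_parity_mul_mul_eq hx hy, hxv, hfx, zero_dotProduct, dotProduct_zero, sub_zero]

theorem exists_even_of_mulVec_eq (h : IsIdempotentPair s E O v f q) (hu : q *ᵥ u = u)
    (hg : g ᵥ* q = g) (hfu : f ⬝ᵥ u = g ⬝ᵥ v) :
    ∃ k ∈ E, (q * k = k ∧ k * q = k) ∧ k *ᵥ v = u ∧ f ᵥ* k = g := by
  obtain ⟨hqv, hfq⟩ := h.mulVec_vector_and_vecMul_covector
  obtain ⟨k, hk, hkv, hfk⟩ := h.exists_even u g (by rw [← hu, mulVec_mulVec, h.parity_mul])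
    (by rw [← hg, vecMul_vecMul, h.mul_parity]) hfu
  refine ⟨q * k * q, h.mul_mul_self_mem_even h.represents.1 hk, ⟨?_, ?_⟩, ?_, ?_⟩
  · rw [← mul_assoc, ← mul_assoc, h.isIdempotentElem.eq]
  · rw [mul_assoc, h.isIdempotentElem.eq]
  · rw [← mulVec_mulVec, hqv, ← mulVec_mulVec, hkv, hu]
  · rw [← vecMul_vecMul, ← vecMul_vecMul, hfq, hfk, hg]

section CornerAction

variable (h : IsIdempotentPair s E O v f q) (hk : k ∈ E) (hcorner : q * k = k ∧ k * q = k)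
  (hx : x ∈ oddPeirceHalf O q)

include h hcorner

theorem corner_mulVec_odd_eq_zero (hw : s *ᵥ w = -w) : k *ᵥ w = 0 := by
  rw [← hcorner.2, ← mulVec_mulVec, h.mulVec_odd_eq_zero hw, mulVec_zero]

include hx

theorem corner_jordan_mulVec : (k * x + x * k) *ᵥ v = x *ᵥ k *ᵥ v := by
  have hodd := h.odd_anticomm x (mem_oddPeirceHalf.1 hx).1
  rw [add_mulVec, ← mulVec_mulVec, ← mulVec_mulVec, h.corner_mulVec_odd_eq_zero hcorner
    (parity_mulVec_of_anticommute hodd h.parity_mulVec), zero_add]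

theorem vecMul_corner_jordan : f ᵥ* (k * x + x * k) = (f ᵥ* k) ᵥ* x := by
  have hodd := h.odd_anticomm x (mem_oddPeirceHalf.1 hx).1
  have hzero : (f ᵥ* x) ᵥ* k = 0 := by
    rw [← hcorner.1, ← vecMul_vecMul, h.vecMul_odd_eq_zero
      (vecMul_parity_of_anticommute hodd h.vecMul_parity), zero_vecMul]
  rw [vecMul_add, ← vecMul_vecMul, ← vecMul_vecMul, hzero, add_zero]

include hk

theorem corner_jordan_mem_oddPeirceHalf : k * x + x * k ∈ oddPeirceHalf O q := by
  have hxO := (mem_oddPeirceHalf.1 hx).1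
  have hqxk : q * x * k = 0 := by
    rw [← hcorner.1, ← mul_assoc, h.mul_odd_mul_eq_zero hxO, zero_mul]
  have hkxq : k * x * q = 0 := by
    rw [← hcorner.2, mul_assoc, mul_assoc, ← mul_assoc q, h.mul_odd_mul_eq_zero hxO, mul_zero]
  refine mem_oddPeirceHalf.2 ⟨h.even_odd k hk x hxO, ?_⟩
  rw [mul_add, add_mul, ← mul_assoc, ← mul_assoc, hcorner.1, hqxk, hkxq, mul_assoc x, hcorner.2,
    add_zero, zero_add]

theorem dotProduct_corner_symm (hy : y ∈ oddPeirceHalf O q) :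
    ((f ᵥ* k) ᵥ* x) ⬝ᵥ y *ᵥ v - (f ᵥ* y) ⬝ᵥ x *ᵥ k *ᵥ v
      = (f ᵥ* x) ⬝ᵥ y *ᵥ k *ᵥ v - ((f ᵥ* k) ᵥ* y) ⬝ᵥ x *ᵥ v := by
  have hkx := h.corner_jordan_mem_oddPeirceHalf hk hcorner hx
  have hky := h.corner_jordan_mem_oddPeirceHalf hk hcorner hy
  rw [← h.corner_jordan_mulVec hcorner hx, ← h.vecMul_corner_jordan hcorner hx,
    ← h.corner_jordan_mulVec hcorner hy, ← h.vecMul_corner_jordan hcorner hy,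
    ← h.trace_parity_mul_mul_eq hkx (mem_oddPeirceHalf.1 hy).1,
    ← h.trace_parity_mul_mul_eq hx (mem_oddPeirceHalf.1 hky).1]
  have htrace := trace_parity_mul_comm_of_even (h.even_comm k hk) (x * y)
  simp only [mul_add, add_mul, trace_add, mul_assoc] at htrace ⊢
  linear_combination htrace

end CornerAction

end IsIdempotentPair

end IdempotentPairs

section RankOne

theorem exists_ne_zero_forall_eq_zero_of_skew [NeZero (2 : F)] {V : Type*} [AddCommGroup V]
    [Module F V] (B : LinearMap.BilinForm F V) (hskew : ∀ x y, B x y = -B y x)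
    (hodd : Odd (Module.finrank F V)) : ∃ x ≠ 0, ∀ y, B x y = 0 := by
  have : Module.Finite F V := Module.finite_of_finrank_pos hodd.pos
  let b := Module.finBasis F V
  suffices hdet : (LinearMap.toMatrix₂ b b B).det = 0 by
    have hsep : ¬ B.SeparatingLeft := by
      rw [LinearMap.separatingLeft_iff_det_ne_zero b, not_not, hdet]
    simpa only [LinearMap.SeparatingLeft, not_forall, exists_prop, and_comm] using hsep
  have htranspose : (LinearMap.toMatrix₂ b b B)ᵀ = -LinearMap.toMatrix₂ b b B := by
    ext i j
    rw [transpose_apply, neg_apply, LinearMap.toMatrix₂_apply, LinearMap.toMatrix₂_apply, hskew]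
  have hdet := congrArg det htranspose
  rw [det_transpose, det_neg, Fintype.card_fin, hodd.neg_one_pow, neg_one_mul,
    eq_neg_iff_add_eq_zero] at hdet
  exact eq_zero_of_add_self_eq_zero F hdet

variable {ι : Type*} [Fintype ι] [DecidableEq ι] {s q x : Matrix ι ι F}
  {E O : Submodule F (Matrix ι ι F)} {v f u w g : ι → F}

/-- The row vectors on which the involution `s` acts as `-1`. -/
def oddCovectors (s : Matrix ι ι F) : Submodule F (ι → F) := LinearMap.ker (1 + s).vecMulLinear

theorem mem_oddCovectors : g ∈ oddCovectors s ↔ g ᵥ* s = -g := by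
  rw [oddCovectors, LinearMap.mem_ker, vecMulLinear_apply, vecMul_add, vecMul_one, add_comm,
    add_eq_zero_iff_eq_neg]

theorem two_mul_finrank_oddCovectors [CharZero F] (hs : s * s = 1) :
    2 * (Module.finrank F (oddCovectors s) : F) = Fintype.card ι - s.trace := by
  have hrank : parityRank s 1 = Module.finrank F (LinearMap.range (1 + s).vecMulLinear) := by
    rw [parityRank, mul_one, rank_smul_of_mem_nonZeroDivisors _
      (mem_nonZeroDivisors_of_ne_zero (inv_ne_zero two_ne_zero)), ← rank_transpose, rank,
      mulVecLin_transpose]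
  have hsum := LinearMap.finrank_range_add_finrank_ker (1 + s).vecMulLinear
  rw [← hrank, Module.finrank_fintype_fun_eq_card] at hsum
  have htrace := two_mul_parityRank hs (IsIdempotentElem.one (M := Matrix ι ι F))
    (by rw [mul_one, one_mul])
  rw [trace_one, mul_one] at htrace
  have hcast : (parityRank s 1 : F) + Module.finrank F (oddCovectors s) = Fintype.card ι :=
    mod_cast hsum
  linear_combination 2 * hcast - htrace

/-- The odd elements of the Peirce half space of `q` that annihilate the vector `v`. -/
def oddPeirceAnnihilator (O : Submodule F (Matrix ι ι F)) (q : Matrix ι ι F) (v : ι → F) :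
    Submodule F (Matrix ι ι F) :=
  oddPeirceHalf O q ⊓ LinearMap.ker ((mulVecBilin F F).flip v)

namespace IsIdempotentPair

variable [CharZero F]

theorem vecMul_eq_zero_of_mem_oddPeirceAnnihilator (h : IsIdempotentPair s E O v f q)
    (hx : x ∈ oddPeirceAnnihilator O q v) (hg : g ᵥ* q = g) (hgv : g ⬝ᵥ v = 0) : g ᵥ* x = 0 := by
  obtain ⟨hx, hxv : x *ᵥ v = 0⟩ := hx
  obtain ⟨k, hk, hcorner, hkv, hfk⟩ := h.exists_even_of_mulVec_eq (u := 0) (mulVec_zero q) hg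
    (by rw [hgv, dotProduct_zero])
  have hgs : g ᵥ* s = g := by rw [← hg, vecMul_vecMul, h.mul_parity]
  refine covector_eq_zero_of_forall_odd h.parity_mul_self (vecMul_parity_of_anticommute
    (h.odd_anticomm x (mem_oddPeirceHalf.1 hx).1) hgs) fun w hw => ?_
  obtain ⟨y, hy, rfl, -⟩ := h.exists_mem_oddPeirceHalf hw (g := 0) (by rw [zero_vecMul, neg_zero])
  simpa only [hkv, hfk, hxv, mulVec_zero, dotProduct_zero, sub_zero]
    using h.dotProduct_corner_symm hk hcorner hx hy

theorem mulVec_odd_eq_smul (h : IsIdempotentPair s E O v f q)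
    (hx : x ∈ oddPeirceAnnihilator O q v) (hw : s *ᵥ w = -w) :
    x *ᵥ w = ((f ᵥ* x) ⬝ᵥ w / f ⬝ᵥ v) • v := by
  obtain ⟨hqv, hfq⟩ := h.mulVec_vector_and_vecMul_covector
  have hqxw : q *ᵥ x *ᵥ w = x *ᵥ w := by
    conv_rhs => rw [← (mem_oddPeirceHalf.1 hx.1).2, add_mulVec, ← mulVec_mulVec,
      ← mulVec_mulVec, h.mulVec_odd_eq_zero hw, mulVec_zero, add_zero]
  refine dotProduct_eq _ _ fun g => ?_
  have hzero := h.vecMul_eq_zero_of_mem_oddPeirceAnnihilator hx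
    (g := g ᵥ* q - ((g ᵥ* q) ⬝ᵥ v / f ⬝ᵥ v) • f)
    (by rw [sub_vecMul, vecMul_vecMul, h.isIdempotentElem.eq, smul_vecMul, hfq])
    (by rw [sub_dotProduct, smul_dotProduct, smul_eq_mul,
      div_mul_cancel₀ _ h.dotProduct_ne_zero, sub_self])
  have hdot := congrArg (· ⬝ᵥ w) hzero
  simp only [sub_vecMul, smul_vecMul, sub_dotProduct, smul_dotProduct, zero_dotProduct,
    ← dotProduct_mulVec, hqxw, hqv, smul_eq_mul] at hdot
  rw [dotProduct_comm, smul_dotProduct, ← dotProduct_mulVec, dotProduct_comm v, smul_eq_mul]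
  linear_combination hdot

theorem finrank_oddPeirceAnnihilator (h : IsIdempotentPair s E O v f q) :
    Module.finrank F (oddPeirceAnnihilator O q v) = Module.finrank F (oddCovectors s) := by
  let restrict : oddPeirceAnnihilator O q v →ₗ[F] oddCovectors s :=
    LinearMap.restrict (vecMulBilin F F f) fun x hx => mem_oddCovectors.2
      (vecMul_parity_of_anticommute (h.odd_anticomm x (mem_oddPeirceHalf.1 hx.1).1)
        h.vecMul_parity)
  refine (LinearEquiv.ofBijective restrict ⟨?_, ?_⟩).finrank_eq
  · rw [← LinearMap.ker_eq_bot, LinearMap.ker_eq_bot']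
    exact fun x hfx => Subtype.ext
      (h.eq_zero_of_mem_oddPeirceHalf x.2.1 x.2.2 (congrArg Subtype.val hfx))
  · rintro ⟨g, hg⟩
    obtain ⟨x, hx, hxv, hfx⟩ := h.exists_mem_oddPeirceHalf (w := 0)
      (by rw [mulVec_zero, neg_zero]) (mem_oddCovectors.1 hg)
    exact ⟨⟨x, hx, hxv⟩, Subtype.ext hfx⟩

theorem exists_mem_oddPeirceAnnihilator_mulVec_eq_zero (h : IsIdempotentPair s E O v f q)
    (hodd : Odd (Module.finrank F (oddCovectors s))) (hu : q *ᵥ u = u) (hfu : f ⬝ᵥ u = 0) :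
    ∃ x ∈ oddPeirceAnnihilator O q v, x ≠ 0 ∧ x *ᵥ u = 0 := by
  obtain ⟨k, hk, hcorner, rfl, hfk⟩ := h.exists_even_of_mulVec_eq hu (zero_vecMul q)
    (by rw [hfu, zero_dotProduct])
  let B : LinearMap.BilinForm F (oddPeirceAnnihilator O q v) :=
    (dotProductBilin F F).compl₁₂ ((mulVecBilin F F).flip (k *ᵥ v) ∘ₗ Submodule.subtype _)
      (vecMulBilin F F f ∘ₗ Submodule.subtype _)
  have hB (x y : oddPeirceAnnihilator O q v) :
      B x y = (f ᵥ* y.1) ⬝ᵥ x.1 *ᵥ k *ᵥ v := dotProduct_comm _ _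
  obtain ⟨x, hx0, hx⟩ := exists_ne_zero_forall_eq_zero_of_skew B (fun x y => by
    have hsymm := h.dotProduct_corner_symm hk hcorner x.2.1 y.2.1
    rw [hfk, zero_vecMul, zero_vecMul, zero_dotProduct, zero_dotProduct] at hsymm
    rw [hB, hB]
    linear_combination -hsymm) (h.finrank_oddPeirceAnnihilator ▸ hodd)
  refine ⟨x, x.2, fun h0 => hx0 (Subtype.ext h0), ?_⟩
  refine vector_eq_zero_of_forall_odd h.parity_mul_self (parity_mulVec_of_anticommute
    (h.odd_anticomm x (mem_oddPeirceHalf.1 x.2.1).1) ?_) fun g hg => ?_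
  · rw [mulVec_mulVec, h.even_comm k hk, ← mulVec_mulVec, h.parity_mulVec]
  · obtain ⟨y, hy, hyv, rfl⟩ := h.exists_mem_oddPeirceHalf (w := 0)
      (by rw [mulVec_zero, neg_zero]) hg
    exact (hB x ⟨y, hy, hyv⟩).symm.trans (hx _)

theorem eq_zero_of_mulVec_eq_of_dotProduct_eq_zero (h : IsIdempotentPair s E O v f q)
    (hodd : Odd (Module.finrank F (oddCovectors s))) (hu : q *ᵥ u = u) (hfu : f ⬝ᵥ u = 0) :
    u = 0 := by
  by_contra hu0
  obtain ⟨x, hx, hx0, hxu⟩ := h.exists_mem_oddPeirceAnnihilator_mulVec_eq_zero hodd hu hfu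
  obtain ⟨k, hk, hcorner, rfl, hfk⟩ := h.exists_even_of_mulVec_eq hu (zero_vecMul q)
    (by rw [hfu, zero_dotProduct])
  have hjordan : k * x + x * k = 0 := h.eq_zero_of_mem_oddPeirceHalf
    (h.corner_jordan_mem_oddPeirceHalf hk hcorner hx.1)
    (by rw [h.corner_jordan_mulVec hcorner hx.1, hxu])
    (by rw [h.vecMul_corner_jordan hcorner hx.1, hfk, zero_vecMul])
  refine hx0 (h.eq_zero_of_mem_oddPeirceHalf hx.1 hx.2 ?_)
  refine covector_eq_zero_of_forall_odd h.parity_mul_self (vecMul_parity_of_anticommute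
    (h.odd_anticomm x (mem_oddPeirceHalf.1 hx.1).1) h.vecMul_parity) fun w hw => ?_
  have hzero : ((f ᵥ* x) ⬝ᵥ w / f ⬝ᵥ v) • k *ᵥ v = 0 :=
    calc ((f ᵥ* x) ⬝ᵥ w / f ⬝ᵥ v) • k *ᵥ v = k *ᵥ x *ᵥ w := by
          rw [h.mulVec_odd_eq_smul hx hw, mulVec_smul]
      _ = (k * x + x * k) *ᵥ w := by
          rw [add_mulVec, ← mulVec_mulVec, ← mulVec_mulVec,
            h.corner_mulVec_odd_eq_zero hcorner hw, mulVec_zero, add_zero]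
      _ = 0 := by rw [hjordan, zero_mulVec]
  exact (div_eq_zero_iff.1 ((smul_eq_zero.1 hzero).resolve_right hu0)).resolve_right
    h.dotProduct_ne_zero

theorem vecMulVec_mem_even (h : IsIdempotentPair s E O v f q)
    (hodd : Odd (Module.finrank F (oddCovectors s))) : vecMulVec v f ∈ E := by
  obtain ⟨hqv, hfq⟩ := h.mulVec_vector_and_vecMul_covector
  suffices hq : vecMulVec v f = (f ⬝ᵥ v) • q from hq ▸ E.smul_mem _ h.represents.1
  refine ext_of_mulVec_single fun j => (sub_eq_zero.1 ?_).symm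
  refine h.eq_zero_of_mulVec_eq_of_dotProduct_eq_zero hodd ?_ ?_
  · rw [smul_mulVec, vecMulVec_mulVec, mulVec_sub, mulVec_smul, mulVec_smul, mulVec_mulVec,
      h.isIdempotentElem.eq, hqv]
  · rw [smul_mulVec, vecMulVec_mulVec, dotProduct_sub, dotProduct_smul, dotProduct_smul,
      dotProduct_mulVec, hfq, MulOpposite.smul_eq_mul_unop, MulOpposite.unop_op, smul_eq_mul,
      sub_self]

end IsIdempotentPair

end RankOne

section FullSuperalgebras

variable {ι : Type*} [Fintype ι] [DecidableEq ι] {s t q : Matrix ι ι F}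
  {E O K : Submodule F (Matrix ι ι F)} {v f w g : ι → F}

omit [DecidableEq ι] in
theorem dotProduct_eq_zero_of_odd_even [NeZero (2 : F)] (hg : g ᵥ* s = -g) (hw : s *ᵥ w = w) :
    g ⬝ᵥ w = 0 := by
  refine eq_zero_of_add_self_eq_zero F ?_
  nth_rewrite 1 [← hw]
  rw [dotProduct_mulVec, hg, neg_dotProduct, neg_add_cancel]

omit [DecidableEq ι] in
theorem dotProduct_eq_zero_of_even_odd [NeZero (2 : F)] (hg : g ᵥ* s = g) (hw : s *ᵥ w = -w) :
    g ⬝ᵥ w = 0 :=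
  dotProduct_eq_zero_of_odd_even (s := -s) (by rw [vecMul_neg, hg])
    (by rw [neg_mulVec, hw, neg_neg])

omit [DecidableEq ι] in
theorem mul_eq_sum_vecMulVec (A B : Matrix ι ι F) : A * B = ∑ j, vecMulVec (A.col j) (B.row j) := by
  ext a b
  rw [mul_apply, Matrix.sum_apply]
  rfl

theorem one_add_mul_mul_one_add_mem (hs : s * s = 1) (ht : t * t = 1)
    (hK : ∀ w g, s *ᵥ w = w → g ᵥ* t = g → vecMulVec w g ∈ K) (X : Matrix ι ι F) :
    (1 + s) * X * (1 + t) ∈ K := by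
  rw [mul_eq_sum_vecMulVec]
  refine K.sum_mem fun j _ => hK _ _ ?_ ?_
  · rw [← mulVec_single_one, mulVec_mulVec, ← mul_assoc, mul_add, hs, mul_one, add_comm]
  · rw [← single_one_vecMul, vecMul_vecMul, add_mul, ht, one_mul, add_comm]

section NeZeroTwo

variable [NeZero (2 : F)]

theorem commutantSub_le_of_vecMulVec_mem (hs : s * s = 1)
    (heven : ∀ w g, s *ᵥ w = w → g ᵥ* s = g → vecMulVec w g ∈ K)
    (hodd : ∀ w g, s *ᵥ w = -w → g ᵥ* s = -g → vecMulVec w g ∈ K) : commutantSub s ≤ K := by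
  have hs' : -s * -s = 1 := by rw [neg_mul_neg, hs]
  intro X hX
  rw [mem_commutantSub] at hX
  have hsum : X + X + (X + X) = (1 + s) * X * (1 + s) + (1 + -s) * X * (1 + -s) := by
    have hsXs : s * X * s = X := by rw [hX, mul_assoc, hs, mul_one]
    simp only [add_mul, mul_add, one_mul, mul_one, neg_mul, mul_neg, hsXs]
    abel
  refine mem_of_add_self_mem (F := F) (mem_of_add_self_mem (F := F) (hsum ▸ K.add_mem
    (one_add_mul_mul_one_add_mem hs hs heven X)
    (one_add_mul_mul_one_add_mem hs' hs' (fun w g hw hg => hodd w g ?_ ?_) X)))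
  · rwa [neg_mulVec, neg_eq_iff_eq_neg] at hw
  · rwa [vecMul_neg, neg_eq_iff_eq_neg] at hg

theorem anticommutantSub_le_of_vecMulVec_mem (hs : s * s = 1)
    (heven_odd : ∀ w g, s *ᵥ w = w → g ᵥ* s = -g → vecMulVec w g ∈ K)
    (hodd_even : ∀ w g, s *ᵥ w = -w → g ᵥ* s = g → vecMulVec w g ∈ K) :
    anticommutantSub s ≤ K := by
  have hs' : -s * -s = 1 := by rw [neg_mul_neg, hs]
  intro X hX
  rw [mem_anticommutantSub] at hX
  have hsum : X + X + (X + X) = (1 + s) * X * (1 + -s) + (1 + -s) * X * (1 + s) := by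
    have hsXs : s * X * s = -X := by rw [hX, neg_mul, mul_assoc, hs, mul_one]
    simp only [add_mul, mul_add, one_mul, mul_one, neg_mul, mul_neg, hsXs, neg_neg]
    abel
  refine mem_of_add_self_mem (F := F) (mem_of_add_self_mem (F := F) (hsum ▸ K.add_mem
    (one_add_mul_mul_one_add_mem hs hs' (fun w g hw hg => heven_odd w g hw ?_) X)
    (one_add_mul_mul_one_add_mem hs' hs (fun w g hw hg => hodd_even w g ?_ hg) X)))
  · rwa [vecMul_neg, neg_eq_iff_eq_neg] at hg
  · rwa [neg_mulVec, neg_eq_iff_eq_neg] at hw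

theorem exists_odd_dotProduct_eq_one (hs : s * s = 1) (hne : s ≠ 1) :
    ∃ w g, s *ᵥ w = -w ∧ g ᵥ* s = -g ∧ g ⬝ᵥ w = 1 := by
  obtain ⟨w, hw, hw0⟩ : ∃ w, s *ᵥ w = -w ∧ w ≠ 0 := by
    by_contra! hall
    refine hne (ext_of_mulVec_single fun j => ?_)
    have hcol := hall ((s - 1) *ᵥ Pi.single j 1) (by
      rw [mulVec_mulVec, mul_sub, hs, mul_one, ← neg_mulVec, neg_sub])
    rwa [sub_mulVec, sub_eq_zero] at hcol
  obtain ⟨g, hg, hgw⟩ : ∃ g, g ᵥ* s = -g ∧ g ⬝ᵥ w ≠ 0 := by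
    by_contra! hall
    exact hw0 (vector_eq_zero_of_forall_odd hs hw hall)
  exact ⟨w, (g ⬝ᵥ w)⁻¹ • g, hw, by rw [smul_vecMul, hg, smul_neg],
    by rw [smul_dotProduct, smul_eq_mul, inv_mul_cancel₀ hgw]⟩

namespace IsJordanSuper

omit [NeZero (2 : F)] in
theorem vecMulVec_sub_smul_mem_even (h : IsJordanSuper s E O) (hO : anticommutantSub s ≤ O)
    (hw : s *ᵥ w = w) (hg : g ᵥ* s = g) {w' g' : ι → F} (hw' : s *ᵥ w' = -w')
    (hg' : g' ᵥ* s = -g') (hg'w' : g' ⬝ᵥ w' = 1) :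
    vecMulVec w g - (g ⬝ᵥ w) • vecMulVec w' g' ∈ E := by
  have hcomm := h.odd_odd (vecMulVec w g')
    (hO (by rw [mem_anticommutantSub, mul_vecMulVec, vecMulVec_mul, hw, hg', vecMulVec_neg,
      neg_neg]))
    (vecMulVec w' g)
    (hO (by rw [mem_anticommutantSub, mul_vecMulVec, vecMulVec_mul, hw', hg, neg_vecMulVec]))
  rwa [vecMulVec_mul_vecMulVec, vecMulVec_mul_vecMulVec, hg'w', one_smul, vecMulVec_smul]
    at hcomm

theorem vecMulVec_mem_even_of_anticommutantSub_le (h : IsJordanSuper s E O) (hne : s ≠ 1)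
    (hO : anticommutantSub s ≤ O) (hw : s *ᵥ w = w) (hg : g ᵥ* s = g) : vecMulVec w g ∈ E := by
  obtain ⟨w', g', hw', hg', hg'w'⟩ := exists_odd_dotProduct_eq_one h.parity_mul_self hne
  have hdiff {w : ι → F} (hw : s *ᵥ w = w) :=
    h.vecMulVec_sub_smul_mem_even hO hw hg hw' hg' hg'w'
  have hgw' := dotProduct_eq_zero_of_even_odd hg hw'
  have hg'w := dotProduct_eq_zero_of_odd_even hg' hw
  obtain hgw | hgw := eq_or_ne (g ⬝ᵥ w) 0
  · simpa only [hgw, zero_smul, sub_zero] using hdiff hw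
  · suffices hscaled : vecMulVec ((g ⬝ᵥ w)⁻¹ • w) g ∈ E by
      rw [smul_vecMulVec] at hscaled
      exact (E.smul_mem_iff (inv_ne_zero hgw)).1 hscaled
    have hmem := hdiff (w := (g ⬝ᵥ w)⁻¹ • w) (by rw [mulVec_smul, hw])
    have hg'w₁ : g' ⬝ᵥ ((g ⬝ᵥ w)⁻¹ • w) = 0 := by rw [dotProduct_smul, hg'w, smul_zero]
    have hgw₁ : g ⬝ᵥ ((g ⬝ᵥ w)⁻¹ • w) = 1 := by
      rw [dotProduct_smul, smul_eq_mul, inv_mul_cancel₀ hgw]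
    rw [hgw₁, one_smul] at hmem
    generalize (g ⬝ᵥ w)⁻¹ • w = w₁ at *
    have hsq := h.mul_self_mem hmem
    rw [mul_sub, sub_mul, sub_mul] at hsq
    simp only [vecMulVec_mul_vecMulVec, hgw₁, hgw', hg'w₁, hg'w', one_smul, zero_smul,
      vecMulVec_zero, sub_zero, zero_sub, sub_neg_eq_add] at hsq
    refine mem_of_add_self_mem (F := F) ?_
    convert E.add_mem hmem hsq using 1
    abel

theorem commutantSub_le_of_anticommutantSub_le (h : IsJordanSuper s E O) (hne : s ≠ 1)
    (hne' : s ≠ -1) (hO : anticommutantSub s ≤ O) : commutantSub s ≤ E := by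
  refine commutantSub_le_of_vecMulVec_mem h.parity_mul_self
    (fun w g hw hg => h.vecMulVec_mem_even_of_anticommutantSub_le hne hO hw hg)
    fun w g hw hg => h.neg.vecMulVec_mem_even_of_anticommutantSub_le
      (fun h1 => hne' (neg_eq_iff_eq_neg.1 h1)) (fun X hX => hO ?_)
      (by rw [neg_mulVec, hw, neg_neg]) (by rw [vecMul_neg, hg, neg_neg])
  rwa [mem_anticommutantSub, neg_mul, mul_neg, neg_inj] at hX

end IsJordanSuper

end NeZeroTwo

theorem IsIdempotentPair.anticommutantSub_le [CharZero F] (h : IsIdempotentPair s E O v f q)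
    (hodd : Odd (Module.finrank F (oddCovectors s))) : anticommutantSub s ≤ O := by
  have hvf := h.vecMulVec_mem_even hodd
  have hfv := h.dotProduct_ne_zero
  have heven_left {w : ι → F} (hw : s *ᵥ w = w) : vecMulVec w f ∈ E := by
    obtain ⟨b, hb, hbv, hfb⟩ := h.exists_even_mulVec_eq hw
    have hmem := h.even_even b hb _ hvf
    rw [mul_vecMulVec, vecMulVec_mul, hbv, hfb, vecMulVec_smul] at hmem
    exact (E.add_mem_iff_left (E.smul_mem _ hvf)).1 hmem
  have heven_right {g : ι → F} (hg : g ᵥ* s = g) : vecMulVec v g ∈ E := by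
    obtain ⟨b, hb, hbv, hfb⟩ := h.exists_even_vecMul_eq hg
    have hmem := h.even_even b hb _ hvf
    rw [mul_vecMulVec, vecMulVec_mul, hbv, hfb, smul_vecMulVec] at hmem
    exact (E.add_mem_iff_right (E.smul_mem _ hvf)).1 hmem
  have hodd_left {w : ι → F} (hw : s *ᵥ w = -w) : vecMulVec w f ∈ O := by
    obtain ⟨x, hx, hxv, hfx⟩ := h.exists_odd w 0 hw (by rw [zero_vecMul, neg_zero])
    have hmem := h.even_odd _ hvf x hx
    rwa [mul_vecMulVec, vecMulVec_mul, hxv, hfx, vecMulVec_zero, zero_add] at hmem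
  have hodd_right {g : ι → F} (hg : g ᵥ* s = -g) : vecMulVec v g ∈ O := by
    obtain ⟨x, hx, hxv, hfx⟩ := h.exists_odd 0 g (by rw [mulVec_zero, neg_zero]) hg
    have hmem := h.even_odd _ hvf x hx
    rwa [mul_vecMulVec, vecMulVec_mul, hxv, hfx, zero_vecMulVec, add_zero] at hmem
  refine anticommutantSub_le_of_vecMulVec_mem h.parity_mul_self (fun w g hw hg => ?_)
    fun w g hw hg => ?_
  · have hmem := h.even_odd _ (heven_left hw) _ (hodd_right hg)
    rw [vecMulVec_mul_vecMulVec, vecMulVec_mul_vecMulVec, dotProduct_eq_zero_of_odd_even hg hw,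
      zero_smul, vecMulVec_zero, add_zero, vecMulVec_smul] at hmem
    exact (O.smul_mem_iff hfv).1 hmem
  · have hmem := h.even_odd _ (heven_right hg) _ (hodd_left hw)
    rw [vecMulVec_mul_vecMulVec, vecMulVec_mul_vecMulVec, dotProduct_eq_zero_of_even_odd hg hw,
      zero_smul, vecMulVec_zero, zero_add, vecMulVec_smul] at hmem
    exact (O.smul_mem_iff hfv).1 hmem

end FullSuperalgebras

section SumsOfTwoSubsuperalgebras

open Module (finrank)

variable {ι : Type*} [Fintype ι] [DecidableEq ι] {s p : Matrix ι ι F}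
  {E O E' O' : Submodule F (Matrix ι ι F)} {v f : ι → F} {n m : ℕ}

theorem exists_even_covector_dotProduct_eq_one [NeZero (2 : F)] (hs : s * s = 1) (hv : v ≠ 0)
    (hsv : s *ᵥ v = v) : ∃ φ, φ ᵥ* s = φ ∧ φ ⬝ᵥ v = 1 := by
  obtain ⟨φ, hφ, hφv⟩ : ∃ φ, φ ᵥ* s = φ ∧ φ ⬝ᵥ v ≠ 0 := by
    by_contra! hall
    exact hv (vector_eq_zero_of_forall_even hs hsv hall)
  exact ⟨(φ ⬝ᵥ v)⁻¹ • φ, by rw [smul_vecMul, hφ],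
    by rw [smul_dotProduct, smul_eq_mul, inv_mul_cancel₀ hφv]⟩

theorem exists_even_vector_dotProduct_eq_one [NeZero (2 : F)] (hs : s * s = 1) (hf : f ≠ 0)
    (hfs : f ᵥ* s = f) : ∃ ψ, s *ᵥ ψ = ψ ∧ f ⬝ᵥ ψ = 1 := by
  obtain ⟨ψ, hψ, hψf⟩ := exists_even_covector_dotProduct_eq_one (s := sᵀ)
    (by rw [← transpose_mul, hs, transpose_one]) hf (by rw [mulVec_transpose, hfs])
  exact ⟨ψ, by rwa [vecMul_transpose] at hψ, by rwa [dotProduct_comm] at hψf⟩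

theorem isTransitivePair_of_le_sup [NeZero (2 : F)] (hs : s * s = 1) (hv : v ≠ 0) (hf : f ≠ 0)
    (hsv : s *ᵥ v = v) (hfs : f ᵥ* s = f) (hE : ∀ a ∈ E, a *ᵥ v = 0 ∧ f ᵥ* a = 0)
    (hO : ∀ x ∈ O, x *ᵥ v = 0 ∧ f ᵥ* x = 0) (heven : commutantSub s ≤ E ⊔ E')
    (hodd : anticommutantSub s ≤ O ⊔ O') : IsTransitivePair s E' O' v f := by
  obtain ⟨φ, hφ, hφv⟩ := exists_even_covector_dotProduct_eq_one hs hv hsv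
  obtain ⟨ψ, hψ, hfψ⟩ := exists_even_vector_dotProduct_eq_one hs hf hfs
  refine ⟨hv, hf, hsv, hfs, fun w g hw hg hwg => ?_, fun w g hw hg => ?_⟩
  · obtain ⟨a, ha, b, hb, hab⟩ := Submodule.mem_sup.1
      (heven (x := vecMulVec w φ + vecMulVec ψ g - (f ⬝ᵥ w) • vecMulVec ψ φ) (by
        simp only [mem_commutantSub, mul_sub, sub_mul, mul_add, add_mul, mul_smul_comm,
          smul_mul_assoc, mul_vecMulVec, vecMulVec_mul, hw, hφ, hψ, hg]))
    have habv := congrArg (· *ᵥ v) hab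
    have hfab := congrArg (f ᵥ* ·) hab
    simp only [add_mulVec, sub_mulVec, smul_mulVec, vecMulVec_mulVec, (hE a ha).1, hφv, hwg,
      MulOpposite.op_one, op_smul_eq_smul, one_smul, zero_add, add_sub_cancel_right] at habv
    simp only [vecMul_add, vecMul_sub, vecMul_smul, vecMul_vecMulVec, (hE a ha).2, hfψ, one_smul,
      zero_add, add_sub_cancel_left] at hfab
    exact ⟨b, hb, habv, hfab⟩
  · obtain ⟨a, ha, b, hb, hab⟩ := Submodule.mem_sup.1
      (hodd (x := vecMulVec w φ + vecMulVec ψ g) (by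
        simp only [mem_anticommutantSub, mul_add, add_mul, mul_vecMulVec, vecMulVec_mul, hw, hφ,
          hψ, hg, neg_vecMulVec, vecMulVec_neg, neg_add, neg_neg]))
    have habv := congrArg (· *ᵥ v) hab
    have hfab := congrArg (f ᵥ* ·) hab
    simp only [add_mulVec, vecMulVec_mulVec, (hO a ha).1, hφv,
      dotProduct_eq_zero_of_odd_even hg hsv, MulOpposite.op_one, MulOpposite.op_zero, one_smul,
      zero_smul, zero_add, add_zero] at habv
    simp only [vecMul_add, vecMul_vecMulVec, (hO a ha).2, hfψ,
      dotProduct_eq_zero_of_even_odd hfs hw, one_smul, zero_smul, zero_add] at hfab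
    exact ⟨b, hb, habv, hfab⟩

theorem exists_isTransitivePair_of_le_sup [NeZero (2 : F)] (hs : s * s = 1) (hsp : s * p = p * s)
    (hp : (1 + s) * p ≠ 0) (hE : ∀ a ∈ E, a * p = 0 ∧ p * a = 0)
    (hO : ∀ x ∈ O, x * p = 0 ∧ p * x = 0) (heven : commutantSub s ≤ E ⊔ E')
    (hodd : anticommutantSub s ≤ O ⊔ O') : ∃ v f, IsTransitivePair s E' O' v f := by
  have hcomm : (1 + s) * p = p * (1 + s) := by rw [add_mul, mul_add, hsp, one_mul, mul_one]
  obtain ⟨i, j, hij⟩ : ∃ i j, ((1 + s) * p) i j ≠ 0 := by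
    by_contra! hzero
    exact hp (Matrix.ext hzero)
  have hkills {a : Matrix ι ι F} (ha : a * p = 0 ∧ p * a = 0) :
      a *ᵥ ((1 + s) * p) *ᵥ Pi.single j 1 = 0 ∧ (Pi.single i 1 ᵥ* ((1 + s) * p)) ᵥ* a = 0 := by
    rw [mulVec_mulVec, vecMul_vecMul, mul_assoc (1 + s), ha.2, hcomm, ← mul_assoc a, ha.1, zero_mul,
      mul_zero, zero_mulVec, vecMul_zero]
    exact ⟨rfl, rfl⟩
  refine ⟨((1 + s) * p) *ᵥ Pi.single j 1, Pi.single i 1 ᵥ* ((1 + s) * p),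
    isTransitivePair_of_le_sup hs (fun h0 => hij ?_) (fun h0 => hij ?_) ?_ ?_
      (fun a ha => hkills (hE a ha)) (fun x hx => hkills (hO x hx)) heven hodd⟩
  · rw [mulVec_single_one] at h0
    exact congrFun h0 i
  · rw [single_one_vecMul] at h0
    exact congrFun h0 j
  · rw [mulVec_mulVec, ← mul_assoc, mul_add, hs, mul_one, add_comm]
  · rw [vecMul_vecMul, hcomm, mul_assoc, add_mul, hs, one_mul, add_comm]

variable [CharZero F]

theorem odd_finrank_oddCovectors (hs : s * s = 1) (hm : Odd m) (hcard : Fintype.card ι = n + m)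
    (htrace : s.trace = n - m) : Odd (finrank F (oddCovectors s)) := by
  have htwo := two_mul_finrank_oddCovectors hs
  rw [hcard, htrace, Nat.cast_add, add_sub_sub_cancel, ← two_mul] at htwo
  rwa [Nat.cast_injective (mul_left_cancel₀ two_ne_zero htwo)]

section AlgClosed

variable [IsAlgClosed F]

namespace IsSimpleJordanSuper

theorem anticommutantSub_le_of_isTransitivePair (h : IsSimpleJordanSuper s E O) (hone : 1 ∈ E)
    (hpair : IsTransitivePair s E O v f) (hm : Odd m) (hcard : Fintype.card ι = n + m)
    (htrace : s.trace = n - m) : anticommutantSub s ≤ O := by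
  obtain ⟨v, f, q, hpair, hq, hidem⟩ := h.exists_isTransitivePair_isIdempotentElem hone hpair
  exact IsIdempotentPair.anticommutantSub_le ⟨h, hpair, hone, hq, hidem⟩
    (odd_finrank_oddCovectors h.parity_mul_self hm hcard htrace)

theorem anticommutantSub_le_of_annihilator_ne_zero (h : IsSimpleJordanSuper s E' O')
    (hone : 1 ∈ E') (hn : Odd n) (hm : Odd m) (hcard : Fintype.card ι = n + m)
    (htrace : s.trace = n - m) (hsp : s * p = p * s) (hp : p ≠ 0)
    (hE : ∀ a ∈ E, a * p = 0 ∧ p * a = 0) (hO : ∀ x ∈ O, x * p = 0 ∧ p * x = 0)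
    (heven : commutantSub s ≤ E ⊔ E') (hodd : anticommutantSub s ≤ O ⊔ O') :
    anticommutantSub s ≤ O' := by
  by_cases hplus : (1 + s) * p = 0
  · have hminus : (1 + -s) * p ≠ 0 := fun hminus => hp <| eq_zero_of_add_self_eq_zero F <|
      calc p + p = (1 + s) * p + (1 + -s) * p := by noncomm_ring
        _ = 0 := by rw [hplus, hminus, add_zero]
    have hcommutant : commutantSub (F := F) (-s) = commutantSub s := by
      ext X
      rw [mem_commutantSub, mem_commutantSub, neg_mul, mul_neg, neg_inj]
    have hanticommutant : anticommutantSub (F := F) (-s) = anticommutantSub s := by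
      ext X
      rw [mem_anticommutantSub, mem_anticommutantSub, neg_mul, mul_neg, neg_inj]
    obtain ⟨v, f, hpair⟩ := exists_isTransitivePair_of_le_sup h.neg.parity_mul_self
      (by rw [neg_mul, hsp, mul_neg]) hminus hE hO (hcommutant ▸ heven) (hanticommutant ▸ hodd)
    exact hanticommutant ▸ h.neg.anticommutantSub_le_of_isTransitivePair hone hpair hn
      (hcard.trans (add_comm n m)) (by rw [trace_neg, htrace, neg_sub])
  · obtain ⟨v, f, hpair⟩ :=
      exists_isTransitivePair_of_le_sup h.parity_mul_self hsp hplus hE hO heven hodd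
    exact h.anticommutantSub_le_of_isTransitivePair hone hpair hm hcard htrace

theorem finrank_odd_le (h : IsSimpleJordanSuper s E O) (hone : 1 ∈ E) (hn : Odd n) (hm : Odd m)
    (hcard : Fintype.card ι = n + m) (htrace : s.trace = n - m)
    (hfinrank : finrank F (anticommutantSub (F := F) s) = 2 * (n * m))
    (hproper : ¬ anticommutantSub s ≤ O) :
    finrank F O < n * m ∨ SupertraceIsotropic s E O ∧ finrank F O ≤ n * m := by
  rcases h.supertraceNondegenerate_or_supertraceIsotropic with hnd | hiso
  · refine .inl ((h.finrank_odd_lt_or_eq hone hnd hn hm hcard htrace).resolve_right fun heq => ?_)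
    exact hproper (Submodule.eq_of_le_of_finrank_le (fun x hx => h.odd_anticomm x hx)
      (hfinrank.trans heq.symm).le).ge
  · have hle := hiso.two_mul_finrank_le h.toIsJordanSuper
    exact .inr ⟨hiso, by omega⟩

theorem anticommutantSub_le_or_of_one_mem [Nonempty ι] (h : IsSimpleJordanSuper s E O)
    (h' : IsSimpleJordanSuper s E' O') (hone : 1 ∈ E) (hone' : 1 ∈ E') (hn : Odd n) (hm : Odd m)
    (hcard : Fintype.card ι = n + m) (htrace : s.trace = n - m)
    (hfinrank : finrank F (anticommutantSub (F := F) s) = 2 * (n * m))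
    (heven : commutantSub s ≤ E ⊔ E') (hodd : anticommutantSub s ≤ O ⊔ O') :
    anticommutantSub s ≤ O ∨ anticommutantSub s ≤ O' := by
  by_contra! hproper
  have hsum : 2 * (n * m) ≤ finrank F O + finrank F O' := hfinrank ▸
    (Submodule.finrank_mono hodd).trans (Submodule.finrank_add_le_finrank_add_finrank O O')
  rcases h.finrank_odd_le hone hn hm hcard htrace hfinrank hproper.1 with hlt | ⟨hiso, hle⟩ <;>
  rcases h'.finrank_odd_le hone' hn hm hcard htrace hfinrank hproper.2 with hlt' | ⟨hiso', hle'⟩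
  · omega
  · omega
  · omega
  · exact not_supertraceIsotropic_of_mem_sup h h' (heven (mem_commutantSub.2 rfl)) hiso hiso'

end IsSimpleJordanSuper

end AlgClosed

theorem IsSimpleJordanSuper.exists_annihilator (h : IsSimpleJordanSuper s E O) :
    ∃ p, 1 - p ∈ E ∧ s * p = p * s ∧ (∀ a ∈ E, a * p = 0 ∧ p * a = 0) ∧
      ∀ x ∈ O, x * p = 0 ∧ p * x = 0 := by
  obtain ⟨u, hu, huE, huO⟩ := h.exists_unit
  have hkills {a : Matrix ι ι F} (ha : u * a = a ∧ a * u = a) :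
      a * (1 - u) = 0 ∧ (1 - u) * a = 0 := by
    rw [mul_sub, sub_mul, mul_one, one_mul, ha.1, ha.2, sub_self]
    exact ⟨rfl, rfl⟩
  exact ⟨1 - u, by rwa [sub_sub_cancel],
    by rw [mul_sub, sub_mul, mul_one, one_mul, h.even_comm u hu],
    fun a ha => hkills (huE a ha), fun x hx => hkills (huO x hx)⟩

omit [CharZero F] in
theorem eq_zero_or_eq_zero_of_le_sup [NeZero (2 : F)] {p' : Matrix ι ι F} (hs : s * s = 1)
    (hE : ∀ a ∈ E, p * a = 0) (hO : ∀ x ∈ O, p * x = 0) (hE' : ∀ a ∈ E', a * p' = 0)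
    (hO' : ∀ x ∈ O', x * p' = 0) (heven : commutantSub s ≤ E ⊔ E')
    (hodd : anticommutantSub s ≤ O ⊔ O') : p = 0 ∨ p' = 0 := by
  refine eq_zero_or_eq_zero_of_forall_mul_mul_eq_zero fun X => ?_
  have hker : commutantSub s ⊔ anticommutantSub s ≤
      LinearMap.ker (LinearMap.mulLeftRight F (p, p')) := sup_le
      (heven.trans (sup_le (fun a ha => ?_) fun a ha => ?_))
      (hodd.trans (sup_le (fun x hx => ?_) fun x hx => ?_))
  · rw [(isCompl_commutantSub_anticommutantSub hs).sup_eq_top] at hker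
    exact hker (Submodule.mem_top (x := X))
  · rw [LinearMap.mem_ker, LinearMap.mulLeftRight_apply, hE a ha, zero_mul]
  · rw [LinearMap.mem_ker, LinearMap.mulLeftRight_apply, mul_assoc, hE' a ha, mul_zero]
  · rw [LinearMap.mem_ker, LinearMap.mulLeftRight_apply, hO x hx, zero_mul]
  · rw [LinearMap.mem_ker, LinearMap.mulLeftRight_apply, mul_assoc, hO' x hx, mul_zero]

theorem IsSimpleJordanSuper.anticommutantSub_le_or [IsAlgClosed F] [Nonempty ι]
    (h : IsSimpleJordanSuper s E O) (h' : IsSimpleJordanSuper s E' O') (hn : Odd n) (hm : Odd m)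
    (hcard : Fintype.card ι = n + m) (htrace : s.trace = n - m)
    (hfinrank : finrank F (anticommutantSub (F := F) s) = 2 * (n * m))
    (heven : commutantSub s ≤ E ⊔ E') (hodd : anticommutantSub s ≤ O ⊔ O') :
    anticommutantSub s ≤ O ∨ anticommutantSub s ≤ O' := by
  obtain ⟨p, hpE, hsp, hE, hO⟩ := h.exists_annihilator
  obtain ⟨p', hpE', hsp', hE', hO'⟩ := h'.exists_annihilator
  by_cases hp : p = 0 <;> by_cases hp' : p' = 0
  · rw [hp, sub_zero] at hpE
    rw [hp', sub_zero] at hpE'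
    exact h.anticommutantSub_le_or_of_one_mem h' hpE hpE' hn hm hcard htrace hfinrank heven hodd
  · rw [hp, sub_zero] at hpE
    exact .inl (h.anticommutantSub_le_of_annihilator_ne_zero hpE hn hm hcard htrace hsp' hp' hE' hO'
      (sup_comm E E' ▸ heven) (sup_comm O O' ▸ hodd))
  · rw [hp', sub_zero] at hpE'
    exact .inr (h'.anticommutantSub_le_of_annihilator_ne_zero hpE' hn hm hcard htrace hsp hp hE hO
      heven hodd)
  · exact absurd (eq_zero_or_eq_zero_of_le_sup h.parity_mul_self (fun a ha => (hE a ha).2)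
      (fun x hx => (hO x hx).2) (fun a ha => (hE' a ha).1) (fun x hx => (hO' x hx).1) heven hodd)
      (not_or.2 ⟨hp, hp'⟩)

end SumsOfTwoSubsuperalgebras

section BlockMatrices

theorem sup_inf_eq_left_of_disjoint {α : Type*} [Lattice α] [OrderBot α] [IsModularLattice α]
    {a b c d : α} (hac : a ≤ c) (hbd : b ≤ d) (hcd : Disjoint c d) : (a ⊔ b) ⊓ c = a := by
  rw [sup_inf_assoc_of_le b hac, (hcd.symm.mono_left hbd).eq_bot, sup_bot_eq]

theorem isJordanSuper_commutantSub_anticommutantSub {R : Type*} [Ring R] [Algebra F R] {s : R}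
    (hs : s * s = 1) : IsJordanSuper (F := F) s (commutantSub s) (anticommutantSub s) where
  parity_mul_self := hs
  even_comm _ ha := ha
  odd_anticomm _ hx := hx
  even_even a ha b hb := by
    rw [mem_commutantSub] at *
    rw [mul_add, add_mul, ← mul_assoc, ← mul_assoc, ha, hb, mul_assoc, mul_assoc, hb, ha, mul_assoc,
      mul_assoc]
  even_odd a ha x hx := by
    rw [mem_commutantSub] at ha
    rw [mem_anticommutantSub] at *
    rw [mul_add, add_mul, ← mul_assoc, ← mul_assoc, ha, hx, mul_assoc, neg_mul, mul_assoc, hx, ha,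
      mul_neg, neg_add, mul_assoc, mul_assoc]
  odd_odd x hx y hy := by
    rw [mem_anticommutantSub] at hx hy
    rw [mem_commutantSub, mul_sub, sub_mul, ← mul_assoc, ← mul_assoc, hx, hy, neg_mul, neg_mul,
      mul_assoc, mul_assoc, hx, hy, mul_neg, mul_neg, neg_neg, neg_neg, mul_assoc, mul_assoc]

variable (F) in
/-- The diagonal matrix `diag(1, …, 1, -1, …, -1)` whose commutant and anticommutant are the even
and the odd part of `M_{n,m}`. -/
def parityMatrix (n m : ℕ) : MJ F n m :=
  diagonal fun i => if pty i then -1 else 1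

variable {n m : ℕ} {a b x y z : MJ F n m} {A B I J : Submodule F (MJ F n m)}

theorem parityMatrix_mul_self : parityMatrix F n m * parityMatrix F n m = 1 := by
  rw [parityMatrix, diagonal_mul_diagonal, ← diagonal_one]
  congr 1 with i
  split_ifs <;> simp

theorem trace_parityMatrix : (parityMatrix F n m).trace = n - m := by
  simp [parityMatrix, trace, pty, sub_eq_add_neg]

theorem disjoint_evenSub_oddSub : Disjoint (evenSub F n m) (oddSub F n m) := by
  refine Submodule.disjoint_def.2 fun X heven hodd => Matrix.ext fun i j => ?_
  by_cases hij : pty i = pty j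
  · exact hodd i j hij
  · exact heven i j hij

theorem finrank_oddSub : Module.finrank F (oddSub F n m) = 2 * (n * m) := by
  let offDiagonalBlocks :
      oddSub F n m ≃ₗ[F] Matrix (Fin n) (Fin m) F × Matrix (Fin m) (Fin n) F :=
    { toFun := fun X => (X.1.toBlocks₁₂, X.1.toBlocks₂₁)
      map_add' := fun X Y => rfl
      map_smul' := fun c X => rfl
      invFun := fun Y => ⟨fromBlocks 0 Y.1 Y.2 0, by
        rintro (i | i) (j | j) hij <;> first | rfl | cases hij⟩
      left_inv := by
        rintro ⟨X, hX⟩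
        refine Subtype.ext (Matrix.ext ?_)
        rintro (i | i) (j | j)
        · exact (hX (Sum.inl i) (Sum.inl j) rfl).symm
        · rfl
        · rfl
        · exact (hX (Sum.inr i) (Sum.inr j) rfl).symm
      right_inv := fun Y => rfl }
  rw [offDiagonalBlocks.finrank_eq, Module.finrank_prod, Module.finrank_matrix,
    Module.finrank_matrix, Module.finrank_self, Fintype.card_fin, Fintype.card_fin]
  ring

theorem oddPart_of_even (ha : a ∈ evenSub F n m) : oddPart F a = 0 := by
  ext i j
  exact ite_eq_left_iff.2 (ha i j)

theorem oddPart_of_odd (hx : x ∈ oddSub F n m) : oddPart F x = x := by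
  ext i j
  exact ite_eq_right_iff.2 fun hij => (hx i j hij).symm

theorem oddPart_add (x y : MJ F n m) : oddPart F (x + y) = oddPart F x + oddPart F y := by
  ext i j
  by_cases hij : pty i = pty j <;> simp [oddPart, hij]

theorem jmul_add_left (x y z : MJ F n m) : jmul (x + y) z = jmul x z + jmul y z := by
  simp only [jmul, oddPart_add, mul_add, add_mul, smul_add]
  abel

theorem jmul_add_right (x y z : MJ F n m) : jmul x (y + z) = jmul x y + jmul x z := by
  simp only [jmul, oddPart_add, mul_add, add_mul, smul_add]
  abel

theorem jmul_of_even_left (ha : a ∈ evenSub F n m) (z : MJ F n m) :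
    jmul a z = (2 : F)⁻¹ • (a * z + z * a) := by
  rw [jmul, oddPart_of_even ha, mul_zero, sub_zero]

theorem jmul_of_even_right (ha : a ∈ evenSub F n m) (z : MJ F n m) :
    jmul z a = (2 : F)⁻¹ • (z * a + a * z) := by
  rw [jmul, oddPart_of_even ha, zero_mul, sub_zero]

theorem exists_even_add_odd (hA : IsSubalg F A) (hz : z ∈ A) :
    ∃ a ∈ A ⊓ evenSub F n m, ∃ x ∈ A ⊓ oddSub F n m, a + x = z := by
  rw [hA.1] at hz
  exact Submodule.mem_sup.1 hz

section NeZeroTwo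

variable [NeZero (2 : F)]

theorem jmul_of_odd (hx : x ∈ oddSub F n m) (hy : y ∈ oddSub F n m) :
    jmul x y = (2 : F)⁻¹ • (x * y - y * x) := by
  have htwo : (2 : F) ≠ 0 := two_ne_zero
  rw [jmul, oddPart_of_odd hx, oddPart_of_odd hy]
  match_scalars <;> field_simp
  norm_num

theorem jmul_add_add (ha : a ∈ evenSub F n m) (hx : x ∈ oddSub F n m) (hb : b ∈ evenSub F n m)
    (hy : y ∈ oddSub F n m) :
    jmul (a + x) (b + y) = (2 : F)⁻¹ • ((a * b + b * a) + (x * y - y * x)) +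
      (2 : F)⁻¹ • ((a * y + y * a) + (x * b + b * x)) := by
  rw [jmul_add_left, jmul_add_right, jmul_add_right, jmul_of_even_left ha, jmul_of_even_left ha,
    jmul_of_even_right hb, jmul_of_odd hx hy]
  module

theorem parityMatrix_ne_one (hm : 0 < m) : parityMatrix F n m ≠ 1 := by
  intro h
  have htwo : (2 : F) ≠ 0 := two_ne_zero
  have hentry := congrFun₂ h (Sum.inr ⟨0, hm⟩) (Sum.inr ⟨0, hm⟩)
  rw [parityMatrix, diagonal_apply_eq, one_apply_eq, pty, Sum.elim_inr, if_pos rfl] at hentry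
  exact htwo (by linear_combination -hentry)

theorem parityMatrix_ne_neg_one (hn : 0 < n) : parityMatrix F n m ≠ -1 := by
  intro h
  have htwo : (2 : F) ≠ 0 := two_ne_zero
  have hentry := congrFun₂ h (Sum.inl ⟨0, hn⟩) (Sum.inl ⟨0, hn⟩)
  rw [parityMatrix, diagonal_apply_eq, Matrix.neg_apply, one_apply_eq, pty, Sum.elim_inl,
    if_neg Bool.false_ne_true] at hentry
  exact htwo (by linear_combination hentry)

theorem self_eq_neg_iff_of_two_ne_zero (c : F) : c = -c ↔ c = 0 :=
  ⟨fun h => eq_zero_of_add_self_eq_zero F (eq_neg_iff_add_eq_zero.1 h),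
    fun h => by rw [h, neg_zero]⟩

theorem evenSub_eq_commutantSub : evenSub F n m = commutantSub (parityMatrix F n m) := by
  ext X
  rw [mem_commutantSub, parityMatrix, ← Matrix.ext_iff]
  simp only [diagonal_mul, mul_diagonal]
  refine forall₂_congr fun i j => ?_
  cases hi : pty i <;> cases hj : pty j <;>
    simp [self_eq_neg_iff_of_two_ne_zero, eq_comm (b := X i j)]

theorem oddSub_eq_anticommutantSub : oddSub F n m = anticommutantSub (parityMatrix F n m) := by
  ext X
  rw [mem_anticommutantSub, parityMatrix, ← Matrix.ext_iff]
  simp only [diagonal_mul, mul_diagonal, Matrix.neg_apply]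
  refine forall₂_congr fun i j => ?_
  cases hi : pty i <;> cases hj : pty j <;>
    simp [self_eq_neg_iff_of_two_ne_zero, eq_comm (a := -X i j)]

theorem isJordanSuper_of_isSubalg (hA : IsSubalg F A) :
    IsJordanSuper (parityMatrix F n m) (A ⊓ evenSub F n m) (A ⊓ oddSub F n m) := by
  have hfull := isJordanSuper_commutantSub_anticommutantSub (F := F)
    (parityMatrix_mul_self (F := F) (n := n) (m := m))
  rw [← evenSub_eq_commutantSub, ← oddSub_eq_anticommutantSub] at hfull
  have hhalf : (2 : F)⁻¹ ≠ 0 := inv_ne_zero two_ne_zero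
  refine ⟨hfull.parity_mul_self, fun a ha => hfull.even_comm a ha.2,
    fun x hx => hfull.odd_anticomm x hx.2, fun a ha b hb => ⟨?_, hfull.even_even a ha.2 b hb.2⟩,
    fun a ha x hx => ⟨?_, hfull.even_odd a ha.2 x hx.2⟩,
    fun x hx y hy => ⟨?_, hfull.odd_odd x hx.2 y hy.2⟩⟩
  · exact (A.smul_mem_iff hhalf).1 (jmul_of_even_left ha.2 b ▸ hA.2 a ha.1 b hb.1)
  · exact (A.smul_mem_iff hhalf).1 (jmul_of_even_left ha.2 x ▸ hA.2 a ha.1 x hx.1)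
  · exact (A.smul_mem_iff hhalf).1 (jmul_of_odd hx.2 hy.2 ▸ hA.2 x hx.1 y hy.1)

theorem jmul_mem_sup (hA : IsSubalg F A) (hI : I ≤ evenSub F n m) (hJ : J ≤ oddSub F n m)
    (heven_even : ∀ a ∈ A ⊓ evenSub F n m, ∀ b ∈ I, a * b + b * a ∈ I)
    (hodd_even : ∀ x ∈ A ⊓ oddSub F n m, ∀ b ∈ I, x * b + b * x ∈ J)
    (heven_odd : ∀ a ∈ A ⊓ evenSub F n m, ∀ x ∈ J, a * x + x * a ∈ J)
    (hodd_odd : ∀ x ∈ A ⊓ oddSub F n m, ∀ y ∈ J, x * y - y * x ∈ I) {w : MJ F n m} (hw : w ∈ A)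
    (hz : z ∈ I ⊔ J) : jmul w z ∈ I ⊔ J := by
  obtain ⟨a, ha, x, hx, rfl⟩ := exists_even_add_odd hA hw
  obtain ⟨b, hb, y, hy, rfl⟩ := Submodule.mem_sup.1 hz
  rw [jmul_add_add ha.2 hx.2 (hI hb) (hJ hy)]
  exact Submodule.add_mem_sup
    (I.smul_mem _ (I.add_mem (heven_even a ha b hb) (hodd_odd x hx y hy)))
    (J.smul_mem _ (J.add_mem (heven_odd a ha y hy) (hodd_even x hx b hb)))

theorem isSimpleJordanSuper_of_isSimple (hA : IsSubalg F A) (hnontriv : Nontriv F A)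
    (hsimple : IsSimple F A) :
    IsSimpleJordanSuper (parityMatrix F n m) (A ⊓ evenSub F n m) (A ⊓ oddSub F n m) where
  toIsJordanSuper := isJordanSuper_of_isSubalg hA
  odd_ne_bot := hnontriv
  mul_ne_zero := by
    rintro ⟨heven_even, heven_odd, hodd_odd⟩
    obtain ⟨⟨w, hw, z, hz, hwz⟩, -⟩ := hsimple
    obtain ⟨a, ha, x, hx, rfl⟩ := exists_even_add_odd hA hw
    obtain ⟨b, hb, y, hy, rfl⟩ := exists_even_add_odd hA hz
    refine hwz ?_
    rw [jmul_add_add ha.2 hx.2 hb.2 hy.2, heven_even a ha b hb, hodd_odd x hx y hy,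
      heven_odd a ha y hy, add_comm (x * b), heven_odd b hb x hx, add_zero, smul_zero, add_zero]
  simple I J hI hJ heven_even hodd_even heven_odd hodd_odd := by
    have hIeven := hI.trans inf_le_right
    have hJodd := hJ.trans inf_le_right
    have hIJeven := sup_inf_eq_left_of_disjoint hIeven hJodd disjoint_evenSub_oddSub
    have hIJodd := sup_inf_eq_left_of_disjoint hJodd hIeven disjoint_evenSub_oddSub.symm
    rw [sup_comm] at hIJodd
    have hgraded : IsGradedG (evenSub F n m) (oddSub F n m) (I ⊔ J) := by
      rw [IsGradedG, hIJeven, hIJodd]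
    rcases hsimple.2 (I ⊔ J) (sup_le (hI.trans inf_le_left) (hJ.trans inf_le_left)) hgraded
      fun x hx y => jmul_mem_sup hA hIeven hJodd heven_even hodd_even heven_odd hodd_odd hx
      with hbot | htop
    · exact .inl (sup_eq_bot_iff.1 hbot)
    · exact .inr ⟨by rw [← htop, hIJeven], by rw [← htop, hIJodd]⟩

theorem eq_top_of_oddSub_le (hn : 0 < n) (hm : 0 < m) (hA : IsSubalg F A)
    (hodd : oddSub F n m ≤ A) : A = ⊤ := by
  have hfull := isCompl_commutantSub_anticommutantSub (F := F)
    (parityMatrix_mul_self (F := F) (n := n) (m := m))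
  have heven := (isJordanSuper_of_isSubalg hA).commutantSub_le_of_anticommutantSub_le
    (parityMatrix_ne_one hm) (parityMatrix_ne_neg_one hn)
    (oddSub_eq_anticommutantSub (F := F) ▸ le_inf hodd le_rfl)
  rw [← evenSub_eq_commutantSub, ← oddSub_eq_anticommutantSub] at hfull
  rw [← evenSub_eq_commutantSub] at heven
  exact eq_top_iff.2 (hfull.sup_eq_top ▸ sup_le (heven.trans inf_le_left) hodd)

end NeZeroTwo

theorem evenSub_le_sup_and_oddSub_le_sup (hA : IsSubalg F A) (hB : IsSubalg F B) (hAB : A ⊔ B = ⊤) :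
    evenSub F n m ≤ A ⊓ evenSub F n m ⊔ B ⊓ evenSub F n m ∧
      oddSub F n m ≤ A ⊓ oddSub F n m ⊔ B ⊓ oddSub F n m := by
  have heven : A ⊓ evenSub F n m ⊔ B ⊓ evenSub F n m ≤ evenSub F n m :=
    sup_le inf_le_right inf_le_right
  have hodd : A ⊓ oddSub F n m ⊔ B ⊓ oddSub F n m ≤ oddSub F n m := sup_le inf_le_right inf_le_right
  have htop :
      A ⊓ evenSub F n m ⊔ B ⊓ evenSub F n m ⊔ (A ⊓ oddSub F n m ⊔ B ⊓ oddSub F n m) = ⊤ := by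
    rw [sup_sup_sup_comm, ← hA.1, ← hB.1, hAB]
  have hevenEq := sup_inf_eq_left_of_disjoint heven hodd disjoint_evenSub_oddSub
  have hoddEq := sup_inf_eq_left_of_disjoint hodd heven disjoint_evenSub_oddSub.symm
  rw [htop, top_inf_eq] at hevenEq
  rw [sup_comm, htop, top_inf_eq] at hoddEq
  exact ⟨hevenEq.le, hoddEq.le⟩

end BlockMatrices

/-- For `F` algebraically closed of characteristic zero and `n, m` odd
positive integers, the Jordan superalgebra `M_{n,m}(F)^{(+)}` cannot be written as
`A + B` for two proper nontrivial simple subsuperalgebras `A` and `B`. -/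
theorem no_simple_decomposition_Mnm_odd_odd
    (F : Type*) [Field F] [IsAlgClosed F] [CharZero F]
    (n m : ℕ) (hn0 : 0 < n) (hm0 : 0 < m) (hn : Odd n) (hm : Odd m) :
    ¬ ∃ A B : Submodule F (MJ F n m),
        IsSubalg F A ∧ IsSubalg F B ∧
        A ≠ ⊤ ∧ B ≠ ⊤ ∧
        Nontriv F A ∧ Nontriv F B ∧
        IsSimple F A ∧ IsSimple F B ∧
        A ⊔ B = ⊤ := by
  rintro ⟨A, B, hA, hB, hAproper, hBproper, hAnontriv, hBnontriv, hAsimple, hBsimple, hAB⟩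
  have : Nonempty (Fin n ⊕ Fin m) := ⟨Sum.inl ⟨0, hn0⟩⟩
  obtain ⟨heven, hodd⟩ := evenSub_le_sup_and_oddSub_le_sup hA hB hAB
  have hfull := (isSimpleJordanSuper_of_isSimple hA hAnontriv hAsimple).anticommutantSub_le_or
    (isSimpleJordanSuper_of_isSimple hB hBnontriv hBsimple) hn hm (by simp) trace_parityMatrix
    (oddSub_eq_anticommutantSub (F := F) ▸ finrank_oddSub)
    (evenSub_eq_commutantSub (F := F) ▸ heven) (oddSub_eq_anticommutantSub (F := F) ▸ hodd)
  rw [← oddSub_eq_anticommutantSub] at hfull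
  rcases hfull with hAodd | hBodd
  · exact hAproper (eq_top_of_oddSub_le hn0 hm0 hA (hAodd.trans inf_le_left))
  · exact hBproper (eq_top_of_oddSub_le hn0 hm0 hB (hBodd.trans inf_le_left))

end SJ
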